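/- arXiv:1301.0727 — 4 statements merged into one kernel-verified Lean document; each statement's English description precedes it below -/
import Mathlib

section
/- Fix a ∈ ℝ. There exists a solution (Φ, W, Ψ, θ) of system (D) defined for all τ ∈ ℝ, with Φ(τ) > 0 and θ(τ) ∈ (−π/2, π/2) for all τ ∈ ℝ, such that (Φ(τ), W(τ), Ψ(τ), θ(τ)) → (1, 0, 0, π/2) as τ → +∞, θ(τ) → −π/2 as τ → −∞, and liminf_{τ→−∞} Φ(τ) < ∞. -/
open Filter Set

/-- The right-hand side of the `Ψ` equation in system (D). -/
noncomputable def dPsi (a Φ W Ψ θ : ℝ) : ℝ :=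
  1 / Φ ^ 3 - 1 - (a - 1) * Real.cos θ ^ 2 -
    (((16 / 3) * Real.sin θ - (224 / 27) * Real.sin θ ^ 3) * Real.cos θ ^ ((17 : ℝ) / 3) * Φ
      + ((208 / 81) * Real.sin θ ^ 2 - 10 / 9) * Real.cos θ ^ ((34 : ℝ) / 9) * W
      + (2 / 3) * Real.sin θ * Real.cos θ ^ ((17 : ℝ) / 9) * Ψ)

/-- `(Φ, W, Ψ, θ)` is a solution of system (D) on all of `ℝ`. -/
noncomputable def SolD (a : ℝ) (Φ W Ψ θ : ℝ → ℝ) : Prop :=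
  ∀ τ : ℝ,
    HasDerivAt Φ (W τ) τ ∧
    HasDerivAt W (Ψ τ) τ ∧
    HasDerivAt Ψ (dPsi a (Φ τ) (W τ) (Ψ τ) (θ τ)) τ ∧
    HasDerivAt θ (Real.cos (θ τ) ^ ((26 : ℝ) / 9)) τ


lemma trap {f : ℝ → ℝ} {s t : ℝ} (hc : ContinuousOn f (Icc s t))
    (h : ∀ y ∈ Icc s t, (∀ z ∈ Ico s y, 0 < f z) → 0 < f y) : ∀ y ∈ Icc s t, 0 < f y := by
  by_contra hcon
  push Not at hcon
  obtain ⟨y, hy, hfy⟩ := hcon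
  have hcl : IsClosed (Icc s t ∩ f ⁻¹' (Iic 0)) := hc.preimage_isClosed_of_isClosed isClosed_Icc isClosed_Iic
  have hK : IsCompact (Icc s t ∩ f ⁻¹' (Iic 0)) := isCompact_Icc.of_isClosed_subset hcl inter_subset_left
  obtain ⟨y0, ⟨hy0, hfy0⟩, hmin⟩ := hK.exists_isLeast ⟨y, hy, hfy⟩
  have := h y0 hy0 (fun z hz => by
    by_contra hz'
    have : y0 ≤ z := hmin ⟨⟨hz.1, hz.2.le.trans hy0.2⟩, not_lt.mp hz'⟩
    exact absurd hz.2 (not_lt.mpr this))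
  exact absurd this (not_lt.mpr hfy0)

lemma growMono {f f' : ℝ → ℝ} {s t : ℝ} (hd : ∀ y ∈ Icc s t, HasDerivAt f (f' y) y)
    (h : ∀ y ∈ Ioo s t, 0 ≤ f' y) : ∀ y ∈ Icc s t, f s ≤ f y := by
  have hm : MonotoneOn f (Icc s t) := by
    apply monotoneOn_of_deriv_nonneg (convex_Icc s t)
    · exact fun y hy => (hd y hy).continuousAt.continuousWithinAt
    · rw [interior_Icc]
      exact fun y hy => (hd y (Ioo_subset_Icc_self hy)).differentiableAt.differentiableWithinAt
    · rw [interior_Icc]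
      intro y hy
      rw [(hd y (Ioo_subset_Icc_self hy)).deriv]
      exact h y hy
  intro y hy
  exact hm ⟨le_refl _, hy.1.trans hy.2⟩ hy hy.1

lemma growGe {f f' : ℝ → ℝ} {s t c : ℝ} (hd : ∀ y ∈ Icc s t, HasDerivAt f (f' y) y)
    (h : ∀ y ∈ Ioo s t, c ≤ f' y) : ∀ y ∈ Icc s t, f s + c * (y - s) ≤ f y := by
  intro y hy
  have := growMono (f := fun z => f z - c * (z - s)) (f' := fun z => f' z - c * 1)
    (fun z hz => (hd z hz).sub (((hasDerivAt_id z).sub_const s).const_mul c))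
    (fun z hz => by have := h z hz; linarith) y hy
  simp only [sub_self] at this
  linarith

lemma growLe {f f' : ℝ → ℝ} {s t c : ℝ} (hd : ∀ y ∈ Icc s t, HasDerivAt f (f' y) y)
    (h : ∀ y ∈ Ioo s t, f' y ≤ c) : ∀ y ∈ Icc s t, f y ≤ f s + c * (y - s) := by
  intro y hy
  have := growGe (f := fun z => - f z) (f' := fun z => - f' z) (c := -c)
    (fun z hz => (hd z hz).neg) (fun z hz => by have := h z hz; linarith) y hy
  linarith

/-- interpolation -/
lemma interp {U Q R T : ℝ → ℝ} {t l A B k : ℝ} (hl : 0 < l)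
    (hU : ∀ y ∈ Icc t (t + 3 * l), HasDerivAt U (Q y) y)
    (hQ : ∀ y ∈ Icc t (t + 3 * l), HasDerivAt Q (R y) y)
    (hR : ∀ y ∈ Icc t (t + 3 * l), HasDerivAt R (T y) y)
    (hA : ∀ y ∈ Icc t (t + 3 * l), |U y - k| ≤ A)
    (hB : ∀ y ∈ Icc t (t + 3 * l), |T y| ≤ B) :
    |Q t| ≤ 14 * A / l + 9 * B * l ^ 2 ∧ |R t| ≤ 4 * A / l ^ 2 + 3 * B * l := by
  have mvt : ∀ {f f' : ℝ → ℝ} {x y : ℝ}, x < y → t ≤ x → y ≤ t + 3 * l →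
      (∀ y ∈ Icc t (t + 3 * l), HasDerivAt f (f' y) y) → ∃ c ∈ Ioo x y, f y - f x = f' c * (y - x) := by
    intro f f' x y hxy h1 h2 hd
    obtain ⟨c, hc, h⟩ := exists_hasDerivAt_eq_slope f f' hxy
      (fun z hz => (hd z ⟨h1.trans hz.1, hz.2.trans h2⟩).continuousAt.continuousWithinAt)
      (fun z hz => hd z ⟨h1.trans hz.1.le, hz.2.le.trans h2⟩)
    refine ⟨c, hc, ?_⟩
    rw [h]; field_simp [(sub_pos.mpr hxy).ne']
  have hA0 : 0 ≤ A := (abs_nonneg _).trans (hA t ⟨le_refl _, by linarith⟩)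
  have hB0 : 0 ≤ B := (abs_nonneg _).trans (hB t ⟨le_refl _, by linarith⟩)
  obtain ⟨c1, hc1, h1⟩ := mvt (x := t) (y := t + l) (by linarith) le_rfl (by linarith) hU
  obtain ⟨c2, hc2, h2⟩ := mvt (x := t + 2 * l) (y := t + 3 * l) (by linarith) (by linarith) le_rfl hU
  simp only [mem_Ioo] at hc1 hc2
  obtain ⟨c3, hc3, h3⟩ := mvt (x := c1) (y := c2) (by linarith) (by linarith) (by linarith) hQ
  simp only [mem_Ioo] at hc3
  have q1 : |Q c1| ≤ 2 * A / l := by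
    have e1 := abs_le.mp (hA t ⟨by linarith, by linarith⟩)
    have e2 := abs_le.mp (hA (t + l) ⟨by linarith, by linarith⟩)
    rw [le_div_iff₀ hl, ← abs_of_pos hl, ← abs_mul, abs_le]
    constructor <;> nlinarith
  have q2 : |Q c2| ≤ 2 * A / l := by
    have e1 := abs_le.mp (hA (t + 2 * l) ⟨by linarith, by linarith⟩)
    have e2 := abs_le.mp (hA (t + 3 * l) ⟨by linarith, by linarith⟩)
    rw [le_div_iff₀ hl, ← abs_of_pos hl, ← abs_mul, abs_le]
    constructor <;> nlinarith
  have r3 : |R c3| ≤ 4 * A / l ^ 2 := by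
    have h4 : |R c3| * l ≤ 4 * A / l := by
      calc |R c3| * l ≤ |R c3| * (c2 - c1) := by gcongr; linarith
        _ = |Q c2 - Q c1| := by rw [h3, abs_mul, abs_of_pos (a := c2 - c1) (by linarith)]
        _ ≤ |Q c2| + |Q c1| := abs_sub _ _
        _ ≤ 2 * A / l + 2 * A / l := by gcongr
        _ = 4 * A / l := by ring
    rw [le_div_iff₀ (by positivity)]
    rw [le_div_iff₀ hl] at h4
    nlinarith
  have hRall : ∀ y ∈ Icc t c3, |R y| ≤ 4 * A / l ^ 2 + 3 * B * l := by
    intro y hy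
    rcases eq_or_lt_of_le hy.2 with h | h
    · rw [h]; have : 0 ≤ 3 * B * l := by positivity
      linarith
    obtain ⟨c, hc, h5⟩ := mvt (x := y) (y := c3) h hy.1 (by linarith) hR
    have hb := hB c ⟨by linarith [hc.1, hy.1], by linarith [hc.2]⟩
    have : |R c3 - R y| ≤ B * (3 * l) := by
      rw [h5, abs_mul, abs_of_pos (a := c3 - y) (by linarith)]
      have := hy.1
      gcongr
      linarith
    have h6 := abs_sub_abs_le_abs_sub (R y) (R c3)
    rw [abs_sub_comm] at h6
    linarith
  have hR0 := hRall t ⟨le_rfl, by linarith⟩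
  refine ⟨?_, hR0⟩
  obtain ⟨c, hc, h5⟩ := mvt (x := t) (y := c1) hc1.1 le_rfl (by linarith) hQ
  have hb := hRall c ⟨hc.1.le, by linarith [hc.2]⟩
  have : |Q c1 - Q t| ≤ (4 * A / l ^ 2 + 3 * B * l) * (3 * l) := by
    rw [h5, abs_mul, abs_of_pos (a := c1 - t) (by linarith)]
    have : 0 < c1 - t := by linarith
    gcongr
    linarith
  have h6 := abs_sub_abs_le_abs_sub (Q t) (Q c1)
  rw [abs_sub_comm] at h6
  have e : (4 * A / l ^ 2 + 3 * B * l) * (3 * l) = 12 * A / l + 9 * B * l ^ 2 := by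
    field_simp; ring
  have e2 : 14 * A / l = 12 * A / l + 2 * A / l := by ring
  linarith

/-- lower bound -/
lemma lowerBd (C M S : ℝ) (hC : 0 ≤ C) (hM : 1 ≤ M) (hS : 0 ≤ S) : ∃ m > 0, m ≤ 1 ∧
    ∀ (U Q R T : ℝ → ℝ) (s t ε : ℝ), t - s ≤ S → 0 ≤ ε →
    (∀ y ∈ Icc s t, HasDerivAt U (Q y) y) → (∀ y ∈ Icc s t, HasDerivAt Q (R y) y) →
    (∀ y ∈ Icc s t, HasDerivAt R (T y) y) → (∀ y ∈ Icc s t, 0 ≤ U y) →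
    (∀ y ∈ Icc s t, 0 < max (U y) ε) →
    (∀ y ∈ Icc s t, T y ≤ C - 1 / (max (U y) ε) ^ 3) → Q s ≤ M → R s ≤ M →
    ∀ y ∈ Icc s (t - 2), m ≤ max (U y) ε := by
  set M1 := M + C * S with hM1
  set M2 := M + M1 * S with hM2
  have hM1' : 1 ≤ M1 := by have : 0 ≤ C * S := by positivity
                           linarith
  have hM2' : 1 ≤ M2 := by have : 0 ≤ M1 * S := by positivity
                           linarith
  set G := 2 * M2 * (M1 + 2 * C + 4 * M2 + 4) with hG
  have hG1 : 1 ≤ G := by nlinarith [mul_pos (a := M2) (b := M2) (by linarith) (by linarith), mul_nonneg hC (by linarith : 0 ≤ M2)]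
  refine ⟨1 / G, by positivity, by rw [div_le_one (by positivity)]; exact hG1, ?_⟩
  intro U Q R T s t ε hts hε hU hQ hR hU0 hpos hT hQs hRs y hy
  by_contra hcon
  push Not at hcon
  have hst : s + 2 ≤ t := by linarith [hy.1, hy.2]
  have ty2 : y + 2 ≤ t := by linarith [hy.2]
  have hsy := hy.1
  have hR1 : ∀ z ∈ Icc s t, R z ≤ M1 := by
    intro z hz
    have := growLe hR (c := C) (fun w hw => (hT w (Ioo_subset_Icc_self hw)).trans (by
      have := hpos w (Ioo_subset_Icc_self hw)
      have : 0 ≤ 1 / (max (U w) ε) ^ 3 := by positivity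
      linarith)) z hz
    have : C * (z - s) ≤ C * S := by gcongr; linarith [hz.2]
    linarith
  have hQ1 : ∀ z ∈ Icc s t, Q z ≤ M2 := by
    intro z hz
    have := growLe hQ (c := M1) (fun w hw => hR1 w (Ioo_subset_Icc_self hw)) z hz
    have : M1 * (z - s) ≤ M1 * S := by gcongr; linarith [hz.2]
    linarith
  set u := max (U y) ε with hu
  have hu0 : 0 < u := hpos y ⟨hy.1, by linarith⟩
  have sub : ∀ {z p q}, y ≤ p → q ≤ y + 2 → z ∈ Icc p q → z ∈ Icc s t := by
    intro z p q h1 h2 hz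
    exact ⟨by linarith [hz.1], by linarith [hz.2]⟩
  have hUu : ∀ z ∈ Icc y (y + 2), U z ≤ u + M2 * (z - y) := by
    intro z hz
    have := growLe (f := U) (f' := Q) (s := y) (t := y + 2) (c := M2) (fun w hw => hU w (sub le_rfl le_rfl hw))
      (fun w hw => hQ1 w (sub le_rfl le_rfl (Ioo_subset_Icc_self hw))) z hz
    have : U y ≤ u := le_max_left _ _
    linarith
  have hR2 : R (y + 1) ≤ M1 + C + 1 - 1 / (2 * M2 * u ^ 2) := by
    have key := growMono (s := y) (t := y + 1)
      (f := fun z => C * (z - y) + 1 / (2 * M2) * ((u + M2 * (z - y)) ^ 2)⁻¹ - R z)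
      (f' := fun z => C * 1 + 1 / (2 * M2) * (-(2 * (u + M2 * (z - y)) ^ (2 - 1) * (M2 * 1)) / ((u + M2 * (z - y)) ^ 2) ^ 2) - T z)
      (fun z hz => by
        have hd : HasDerivAt (fun z => u + M2 * (z - y)) (M2 * 1) z :=
          (((hasDerivAt_id z).sub_const y).const_mul M2).const_add u
        have hp : 0 < u + M2 * (z - y) := by
          have : 0 ≤ M2 * (z - y) := mul_nonneg (by linarith) (by linarith [hz.1])
          linarith
        have h2 := ((hd.pow 2).inv (pow_ne_zero 2 hp.ne')).const_mul (1 / (2 * M2))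
        have h1 := ((hasDerivAt_id z).sub_const y).const_mul C
        have h3 := (h1.add h2).sub (hR z (sub le_rfl (by linarith) hz))
        refine h3.congr_deriv ?_
        norm_num)
      (fun z hz => by
        have hz' := Ioo_subset_Icc_self hz
        have hp : 0 < u + M2 * (z - y) := by
          have : 0 ≤ M2 * (z - y) := mul_nonneg (by linarith) (by linarith [hz'.1])
          linarith
        have h1 := hT z (sub le_rfl (by linarith) hz')
        have h2 : max (U z) ε ≤ u + M2 * (z - y) := by
          apply max_le (hUu z ⟨hz'.1, by linarith [hz'.2]⟩)
          have : ε ≤ u := le_max_right _ _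
          have : 0 ≤ M2 * (z - y) := mul_nonneg (by linarith) (by linarith [hz'.1])
          linarith
        have h3 : 1 / (u + M2 * (z - y)) ^ 3 ≤ 1 / (max (U z) ε) ^ 3 := by
          have := hpos z (sub le_rfl (by linarith) hz')
          gcongr
        have h4 : 1 / (2 * M2) * (-(2 * (u + M2 * (z - y)) ^ (2 - 1) * (M2 * 1)) / ((u + M2 * (z - y)) ^ 2) ^ 2) = - (1 / (u + M2 * (z - y)) ^ 3) := by
          have : M2 ≠ 0 := by linarith
          simp only [show 2 - 1 = 1 from rfl, pow_one]
          field_simp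
        rw [h4]
        linarith) (y + 1) ⟨by linarith, le_rfl⟩
    simp only [sub_self, mul_zero, add_zero, zero_add, add_sub_cancel_left, mul_one] at key
    have h5 : 1 / (2 * M2) * ((u + M2) ^ 2)⁻¹ ≤ 1 := by
      have h1 : 1 ≤ (u + M2) ^ 2 := by nlinarith
      have h2 : ((u + M2) ^ 2)⁻¹ ≤ 1 := inv_le_one_of_one_le₀ h1
      have h3 : 1 / (2 * M2) ≤ 1 := by rw [div_le_one (by linarith)]; linarith
      have : 0 ≤ ((u + M2) ^ 2)⁻¹ := by positivity
      nlinarith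
    have h6 : 1 / (2 * M2) * (u ^ 2)⁻¹ = 1 / (2 * M2 * u ^ 2) := by
      rw [one_div_mul_eq_div, inv_eq_one_div, div_div]; ring
    have := hR1 y ⟨hy.1, by linarith⟩
    linarith
  have hu1 : u < 1 := hcon.trans_le (by rw [div_le_one (by positivity)]; exact hG1)
  have hbig : M1 + 2 * C + 4 * M2 + 4 ≤ 1 / (2 * M2 * u ^ 2) := by
    rw [le_div_iff₀ (by positivity)]
    rw [lt_div_iff₀ (by positivity)] at hcon
    have : u ^ 2 * G ≤ u * G := by gcongr; nlinarith
    nlinarith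
  have hR3 : ∀ z ∈ Icc (y + 1) (y + 2), R z ≤ - (4 * M2 + 3) := by
    intro z hz
    have := growLe (f := R) (f' := T) (s := y + 1) (t := y + 2) (c := C) (fun w hw => hR w (sub (by linarith) le_rfl hw))
      (fun w hw => (hT w (sub (by linarith) le_rfl (Ioo_subset_Icc_self hw))).trans (by
      have := hpos w (sub (by linarith) le_rfl (Ioo_subset_Icc_self hw))
      have : 0 ≤ 1 / (max (U w) ε) ^ 3 := by positivity
      linarith)) z hz
    have : C * (z - (y + 1)) ≤ C * 1 := by gcongr; linarith [hz.2]
    linarith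
  have hQ3 : ∀ z ∈ Icc (y + 1) (y + 2), Q z ≤ M2 - (4 * M2 + 3) * (z - (y + 1)) := by
    intro z hz
    have := growLe (f := Q) (f' := R) (s := y + 1) (t := y + 2) (c := - (4 * M2 + 3)) (fun w hw => hQ w (sub (by linarith) le_rfl hw))
      (fun w hw => hR3 w (Ioo_subset_Icc_self hw)) z hz
    have := hQ1 (y + 1) ⟨by linarith, by linarith⟩
    linarith
  have hfin := growMono (s := y + 1) (t := y + 2)
      (f := fun z => M2 * (z - (y + 1)) - (4 * M2 + 3) / 2 * (z - (y + 1)) ^ 2 - U z)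
      (f' := fun z => M2 * 1 - (4 * M2 + 3) / 2 * (2 * (z - (y + 1)) ^ (2 - 1) * 1) - Q z)
      (fun z hz => by
        have hd := (hasDerivAt_id z).sub_const (y + 1)
        exact ((hd.const_mul M2).sub ((hd.pow 2).const_mul ((4 * M2 + 3) / 2))).sub (hU z (sub (by linarith) le_rfl hz)))
      (fun z hz => by
        have := hQ3 z (Ioo_subset_Icc_self hz)
        simp only [show 2 - 1 = 1 from rfl, pow_one]
        linarith) (y + 2) ⟨by linarith, le_rfl⟩
  have e1 := hU0 (y + 2) ⟨by linarith, by linarith⟩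
  have e2 := hUu (y + 1) ⟨by linarith, by linarith⟩
  have e3 : y + 2 - (y + 1) = 1 := by ring
  have e4 : y + 1 - y = 1 := by ring
  simp only [e3, sub_self] at hfin
  rw [e4] at e2
  linarith

lemma lipInv {ε : ℝ} (hε : 0 < ε) : LipschitzWith (Real.toNNReal (3 / ε ^ 4)) (fun u : ℝ => 1 / (max u ε) ^ 3) := by
  have h1 : ∀ A B : ℝ, ε ≤ A → ε ≤ B → |1 / A ^ 3 - 1 / B ^ 3| ≤ 3 / ε ^ 4 * |A - B| := by
    intro A B hA hB
    have hA0 : 0 < A := hε.trans_le hA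
    have hB0 : 0 < B := hε.trans_le hB
    have e : 1 / A ^ 3 - 1 / B ^ 3 = (1 / (A * B ^ 3) + 1 / (A ^ 2 * B ^ 2) + 1 / (A ^ 3 * B)) * (B - A) := by
      field_simp; ring
    rw [e, abs_mul, abs_sub_comm B A, abs_of_pos (by positivity)]
    gcongr
    have e1 : 1 / (A * B ^ 3) ≤ 1 / (ε * ε ^ 3) := by gcongr
    have e2 : 1 / (A ^ 2 * B ^ 2) ≤ 1 / (ε ^ 2 * ε ^ 2) := by gcongr
    have e3 : 1 / (A ^ 3 * B) ≤ 1 / (ε ^ 3 * ε) := by gcongr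
    have e4 : 3 / ε ^ 4 = 1 / (ε * ε ^ 3) + 1 / (ε ^ 2 * ε ^ 2) + 1 / (ε ^ 3 * ε) := by
      field_simp; ring
    linarith
  apply LipschitzWith.of_dist_le_mul
  intro x y
  rw [Real.dist_eq, Real.dist_eq, Real.coe_toNNReal _ (by positivity)]
  refine (h1 _ _ (le_max_right _ _) (le_max_right _ _)).trans ?_
  exact mul_le_mul_of_nonneg_left (abs_max_sub_max_le_abs x y ε) (by positivity)

lemma ivp (a ε n p q ρ : ℝ) (hε : 0 < ε) (hn : 0 < n) (hρ : 0 ≤ ρ) : ∃ U Q R : ℝ → ℝ → ℝ,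
    (∀ r ∈ Icc (-ρ) ρ, U r (-n) = p ∧ Q r (-n) = q ∧ R r (-n) = r ∧
      ∀ y ∈ Icc (-n) n, HasDerivAt (U r) (Q r y) y ∧ HasDerivAt (Q r) (R r y) y ∧
        HasDerivAt (R r) (y ^ 2 + a - 1 / (max (U r y) ε) ^ 3) y) ∧
    ∃ L : ℝ, 0 ≤ L ∧ ∀ y ∈ Icc (-n) n, ∀ r ∈ Icc (-ρ) ρ, ∀ r' ∈ Icc (-ρ) ρ,
      |U r y - U r' y| ≤ L * |r - r'| := by
  set CT : ℝ := (n + 1) ^ 2 + |a| + 1 / ε ^ 3 with hCT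
  have hCT0 : 0 ≤ CT := by positivity
  set B0 : ℝ := ρ + CT * (2 * n + 2) with hB0
  have hB00 : 0 ≤ B0 := by positivity
  set B1 : ℝ := |q| + B0 * (2 * n + 2) with hB1
  set B : ℝ := max B0 B1 with hB
  have hBB : 0 ≤ B := hB00.trans (le_max_left _ _)
  set cl : ℝ → ℝ := fun u => max (-B) (min B u) with hcl
  have cll : LipschitzWith 1 cl := (LipschitzWith.id.const_min B).const_max (-B)
  have clb : ∀ u, |cl u| ≤ B := by
    intro u
    rw [abs_le]
    exact ⟨le_max_left _ _, max_le (by linarith) (min_le_left _ _)⟩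
  have clid : ∀ u, |u| ≤ B → cl u = u := by
    intro u hu
    rw [abs_le] at hu
    simp only [hcl]
    rw [min_eq_right hu.2, max_eq_right hu.1]
  have cla : ∀ u, ∀ D, |u| ≤ D → |cl u| ≤ D := by
    intro u D hu
    rw [abs_le] at hu ⊢
    simp only [hcl]
    constructor
    · apply le_max_of_le_right
      apply le_min (by linarith) hu.1
    · apply max_le (by linarith)
      exact (min_le_right _ _).trans hu.2
  set v : ℝ → ℝ × ℝ × ℝ → ℝ × ℝ × ℝ := fun t z =>
    (cl z.2.1, cl z.2.2, t ^ 2 + a - 1 / (max z.1 ε) ^ 3) with hv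
  have hTb : ∀ t ∈ Icc (-n-1) (n+1), ∀ u : ℝ, |t ^ 2 + a - 1 / (max u ε) ^ 3| ≤ CT := by
    intro t ht u
    have h1 : t ^ 2 ≤ (n + 1) ^ 2 := by nlinarith [ht.1, ht.2]
    have h2 : 1 / (max u ε) ^ 3 ≤ 1 / ε ^ 3 := by gcongr; exact le_max_right _ _
    have h3 : 0 ≤ 1 / (max u ε) ^ 3 := by
      have : 0 < max u ε := lt_max_of_lt_right hε
      positivity
    have h4 := neg_abs_le a
    have h5 := le_abs_self a
    have h6 := sq_nonneg t
    have h7 := sq_nonneg (n + 1)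
    have h8 : 0 ≤ 1 / ε ^ 3 := by positivity
    rw [abs_le]
    constructor <;> linarith
  have hPL : IsPicardLindelof v (tmin := -n-1) (tmax := n+1) ⟨-n, by constructor <;> linarith⟩ ((p, q, 0) : ℝ × ℝ × ℝ)
      (Real.toNNReal ((max B CT) * (2 * n + 1) + ρ)) (Real.toNNReal ρ) (Real.toNNReal (max B CT))
      (max 1 (max 1 (Real.toNNReal (3 / ε ^ 4)))) := by
    have hm : 0 ≤ max B CT := hBB.trans (le_max_left _ _)
    constructor
    · intro t ht
      apply LipschitzWith.lipschitzOnWith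
      apply LipschitzWith.prodMk
      · have h := cll.comp (LipschitzWith.prod_fst.comp (LipschitzWith.prod_snd (α := ℝ) (β := ℝ × ℝ)))
        simp only [mul_one] at h
        exact h
      apply LipschitzWith.prodMk
      · have h := cll.comp (LipschitzWith.prod_snd.comp (LipschitzWith.prod_snd (α := ℝ) (β := ℝ × ℝ)))
        simp only [mul_one] at h
        exact h
      · have h := (lipInv hε).comp (LipschitzWith.prod_fst (α := ℝ) (β := ℝ × ℝ))
        have h2 := (LipschitzWith.const (α := ℝ × ℝ × ℝ) (t ^ 2 + a)).sub h
        simpa using h2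
    · intro x hx
      simp only [hv]
      fun_prop
    · intro t ht x hx
      rw [Real.coe_toNNReal _ hm]
      simp only [hv, Prod.norm_def, Real.norm_eq_abs]
      refine max_le ?_ (max_le ?_ ?_)
      · exact (clb _).trans (le_max_left _ _)
      · exact (clb _).trans (le_max_left _ _)
      · exact (hTb t ht _).trans (le_max_right _ _)
    · rw [Real.coe_toNNReal _ hm, Real.coe_toNNReal _ hρ, Real.coe_toNNReal _ (by positivity)]
      have : max (n + 1 - (-n)) (-n - (-n - 1)) = 2 * n + 1 := by
        rw [max_eq_left (by linarith)]; ring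
      simp only [this]
      linarith
  obtain ⟨α, hα, L, hL⟩ := hPL.exists_forall_mem_closedBall_eq_hasDerivWithinAt_lipschitzOnWith
  have hmem : ∀ r ∈ Icc (-ρ) ρ, ((p, q, r) : ℝ × ℝ × ℝ) ∈ Metric.closedBall ((p, q, 0) : ℝ × ℝ × ℝ) (Real.toNNReal ρ) := by
    intro r hr
    rw [Metric.mem_closedBall, Real.coe_toNNReal _ hρ]
    simp only [Prod.dist_eq, dist_self, Real.dist_eq, sub_zero]
    exact max_le hρ (max_le hρ (abs_le.mpr hr))
  refine ⟨fun r y => (α (p, q, r) y).1, fun r y => (α (p, q, r) y).2.1, fun r y => (α (p, q, r) y).2.2, ?_, L, L.2, ?_⟩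
  · intro r hr
    obtain ⟨h0, hd⟩ := hα _ (hmem r hr)
    simp only at h0
    refine ⟨by simp only [h0], by simp only [h0], by simp only [h0], ?_⟩
    have hd' : ∀ y ∈ Icc (-n) n, HasDerivAt (α (p, q, r)) (v y (α (p, q, r) y)) y := by
      intro y hy
      exact (hd y ⟨by linarith [hy.1], by linarith [hy.2]⟩).hasDerivAt (Icc_mem_nhds (by linarith [hy.1]) (by linarith [hy.2]))
    have d1 : ∀ y ∈ Icc (-n) n, HasDerivAt (fun y => (α (p, q, r) y).1) (cl (α (p, q, r) y).2.1) y :=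
      fun y hy => (hd' y hy).fst
    have d2 : ∀ y ∈ Icc (-n) n, HasDerivAt (fun y => (α (p, q, r) y).2.1) (cl (α (p, q, r) y).2.2) y :=
      fun y hy => (hd' y hy).snd.fst
    have d3 : ∀ y ∈ Icc (-n) n, HasDerivAt (fun y => (α (p, q, r) y).2.2) (y ^ 2 + a - 1 / (max (α (p, q, r) y).1 ε) ^ 3) y :=
      fun y hy => (hd' y hy).snd.snd
    have b3 : ∀ y ∈ Icc (-n) n, |(α (p, q, r) y).2.2| ≤ B0 := by
      intro y hy
      have hsub : ∀ z ∈ Ioo (-n) n, z ∈ Icc (-n-1) (n+1) := fun z hz => ⟨by linarith [hz.1], by linarith [hz.2]⟩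
      have h1 := growLe d3 (c := CT) (fun z hz => (abs_le.mp (hTb z (hsub z hz) _)).2) y hy
      have h2 := growGe d3 (c := -CT) (fun z hz => (abs_le.mp (hTb z (hsub z hz) _)).1) y hy
      rw [h0] at h1 h2
      simp only at h1 h2
      have : CT * (y - -n) ≤ CT * (2 * n + 2) := by gcongr; linarith [hy.2]
      rw [abs_le]
      constructor <;> linarith [hr.1, hr.2]
    have b2 : ∀ y ∈ Icc (-n) n, |(α (p, q, r) y).2.1| ≤ B1 := by
      intro y hy
      have h1 := growLe d2 (c := B0) (fun z hz => (abs_le.mp (cla _ _ (b3 z (Ioo_subset_Icc_self hz)))).2) y hy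
      have h2 := growGe d2 (c := -B0) (fun z hz => (abs_le.mp (cla _ _ (b3 z (Ioo_subset_Icc_self hz)))).1) y hy
      rw [h0] at h1 h2
      simp only at h1 h2
      have : B0 * (y - -n) ≤ B0 * (2 * n + 2) := by gcongr; linarith [hy.2]
      rw [abs_le]
      have := neg_abs_le q
      have := le_abs_self q
      constructor <;> linarith
    intro y hy
    have e1 := d1 y hy
    have e2 := d2 y hy
    rw [clid _ ((b2 y hy).trans (le_max_right _ _))] at e1
    rw [clid _ ((b3 y hy).trans (le_max_left _ _))] at e2
    exact ⟨e1, e2, d3 y hy⟩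
  · intro y hy r hr r' hr'
    have h := (hL y ⟨by linarith [hy.1], by linarith [hy.2]⟩).dist_le_mul _ (hmem r hr) _ (hmem r' hr')
    refine le_trans ?_ (h.trans_eq ?_)
    · rw [Prod.dist_eq]
      exact (Real.dist_eq _ _).symm.le.trans (le_max_left _ _)
    · congr 1
      simp [Prod.dist_eq, Real.dist_eq]

lemma upTrap {U Q R T : ℝ → ℝ} {s t c : ℝ}
    (hU : ∀ y ∈ Icc s t, HasDerivAt U (Q y) y) (hQ : ∀ y ∈ Icc s t, HasDerivAt Q (R y) y)
    (hR : ∀ y ∈ Icc s t, HasDerivAt R (T y) y) (hQs : 0 ≤ Q s) (hc : 0 ≤ c) (hRs : c * (t - s) < R s)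
    (hT : ∀ y ∈ Icc s t, U s ≤ U y → - c ≤ T y) :
    ∀ y ∈ Icc s t, 0 < R y ∧ Q s ≤ Q y ∧ U s ≤ U y := by
  have aux : ∀ y ∈ Icc s t, (∀ z ∈ Ico s y, 0 < R z) → (∀ z ∈ Icc s y, Q s ≤ Q z ∧ U s ≤ U z) := by
    intro y hy h z hz
    have hq : ∀ w ∈ Icc s y, Q s ≤ Q w := fun w hw => growMono (fun x hx => hQ x ⟨hx.1, hx.2.trans hy.2⟩)
      (fun x hx => (h x (Ioo_subset_Ico_self hx)).le) w hw
    refine ⟨hq z hz, ?_⟩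
    exact growMono (s := s) (t := y) (fun x hx => hU x ⟨hx.1, hx.2.trans hy.2⟩)
      (fun x hx => hQs.trans (hq x (Ioo_subset_Icc_self hx))) z hz
  have hpos : ∀ y ∈ Icc s t, 0 < R y := by
    apply trap (fun y hy => (hR y hy).continuousAt.continuousWithinAt)
    intro y hy h
    have h1 := growGe (f := R) (f' := T) (s := s) (t := y) (c := -c) (fun x hx => hR x ⟨hx.1, hx.2.trans hy.2⟩)
      (fun x hx => hT x ⟨hx.1.le, hx.2.le.trans hy.2⟩ (aux y hy h x (Ioo_subset_Icc_self hx)).2) y ⟨hy.1, le_rfl⟩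
    have : c * (y - s) ≤ c * (t - s) := by gcongr; exact hy.2
    linarith
  intro y hy
  have := aux y hy (fun z hz => hpos z ⟨hz.1, hz.2.le.trans hy.2⟩) y ⟨hy.1, le_rfl⟩
  exact ⟨hpos y hy, this⟩

lemma shoot (a n p q : ℝ) (hn : 1 ≤ n) (hp : 0 < p) (hq : 0 < q) : ∃ U Q R : ℝ → ℝ,
    (∀ y ∈ Icc (-n) (n - 2), HasDerivAt U (Q y) y ∧ HasDerivAt Q (R y) y ∧
      HasDerivAt R (y ^ 2 + a - 1 / (U y) ^ 3) y ∧ 0 < U y) ∧ U (-n) = p ∧ Q (-n) = q ∧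
    ∀ y ∈ Icc (2 + |a|) (n - 2), ¬ (0 < Q y ∧ 0 < R y ∧ 1 / (U y) ^ 3 < y ^ 2 + a) := by
  set C := n ^ 2 + |a| with hC
  have hC0 : 0 ≤ C := by positivity
  set ρ := 2 * n * C + 2 * n * (|a| + 1 / p ^ 3) + 1 + p + 2 * n * q + 1 with hρ
  have hρ0 : 1 ≤ ρ := by
    have h1 : 0 ≤ 2 * n * C := by positivity
    have h2 : 0 ≤ 2 * n * (|a| + 1 / p ^ 3) := by positivity
    have h3 : 0 ≤ 2 * n * q := by positivity
    linarith
  obtain ⟨m, hm, hm1, hlow⟩ := lowerBd C (ρ + q + 1) (2 * n) hC0 (by linarith) (by linarith)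
  obtain ⟨U, Q, R, hsol, L, hL, hlip⟩ := ivp a (m / 2) n p q ρ (by positivity) (by linarith) (by linarith)
  have hTle : ∀ r, ∀ y ∈ Icc (-n) n, y ^ 2 + a - 1 / (max (U r y) (m / 2)) ^ 3 ≤ C - 1 / (max (U r y) (m / 2)) ^ 3 := by
    intro r y hy
    have h1 : y ^ 2 ≤ n ^ 2 := by nlinarith [hy.1, hy.2]
    have h5 := le_abs_self a
    linarith
  have hmpos : ∀ r y, 0 < max (U r y) (m / 2) := fun r y => lt_max_of_lt_right (by positivity)
  have hTle' : ∀ r, ∀ y ∈ Icc (-n) n, y ^ 2 + a - 1 / (max (U r y) (m / 2)) ^ 3 ≤ C := by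
    intro r y hy
    have := hmpos r y
    have : 0 ≤ 1 / (max (U r y) (m / 2)) ^ 3 := by positivity
    linarith [hTle r y hy]
  have nmem : n ∈ Icc (-n) n := ⟨by linarith, le_rfl⟩
  -- down
  have hdown : U (-ρ) n < 0 := by
    obtain ⟨h1, h2, h3, hd⟩ := hsol (-ρ) ⟨le_rfl, by linarith⟩
    set D := ρ - C * (2 * n) with hD
    have hR : ∀ y ∈ Icc (-n) n, R (-ρ) y ≤ - D := by
      intro y hy
      have := growLe (fun z hz => (hd z hz).2.2) (c := C) (fun z hz => hTle' _ z (Ioo_subset_Icc_self hz)) y hy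
      have : C * (y - -n) ≤ C * (2 * n) := by gcongr; linarith [hy.2]
      linarith
    have hQ : ∀ y ∈ Icc (-n) n, Q (-ρ) y ≤ q - D * (y + n) := by
      intro y hy
      have := growLe (fun z hz => (hd z hz).2.1) (c := -D) (fun z hz => hR z (Ioo_subset_Icc_self hz)) y hy
      linarith
    have hfin := growMono (s := -n) (t := n)
      (f := fun z => q * (z + n) - D / 2 * (z + n) ^ 2 - U (-ρ) z)
      (f' := fun z => q * 1 - D / 2 * (2 * (z + n) ^ (2 - 1) * 1) - Q (-ρ) z)
      (fun z hz => by
        have hd' := (hasDerivAt_id z).add_const n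
        exact ((hd'.const_mul q).sub ((hd'.pow 2).const_mul (D / 2))).sub (hd z hz).1)
      (fun z hz => by
        have := hQ z (Ioo_subset_Icc_self hz)
        simp only [show 2 - 1 = 1 from rfl, pow_one]
        linarith) n nmem
    simp only [h1, neg_add_cancel] at hfin
    have hDbig : p + 2 * n * q + 1 ≤ D := by
      have h2 : 0 ≤ 2 * n * (|a| + 1 / p ^ 3) := by positivity
      rw [hD]; linarith
    have h3 : 0 ≤ 2 * n * q := by positivity
    have hn2 : 1 ≤ n ^ 2 := by nlinarith
    have hD0 : 0 < D := by linarith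
    have : D ≤ D / 2 * (n + n) ^ 2 := by
      have := mul_le_mul_of_nonneg_left hn2 hD0.le
      nlinarith
    have h5 : q * (n + n) = 2 * n * q := by ring
    have h6 : q * 0 - D / 2 * 0 ^ 2 - p = -p := by ring
    linarith
  have hup : ∀ y ∈ Icc (-n) n, p ≤ U ρ y := by
    obtain ⟨h1, h2, h3, hd⟩ := hsol ρ ⟨by linarith, le_rfl⟩
    intro y hy
    have := upTrap (c := |a| + 1 / p ^ 3) (fun z hz => (hd z hz).1) (fun z hz => (hd z hz).2.1) (fun z hz => (hd z hz).2.2)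
      (by rw [h2]; exact hq.le) (by positivity) (by
        rw [h3]
        have h1 : 0 ≤ 2 * n * C := by positivity
        have h3 : 0 ≤ 2 * n * q := by positivity
        linarith) (by
        intro z hz hz'
        rw [h1] at hz'
        have e : 1 / (max (U ρ z) (m / 2)) ^ 3 ≤ 1 / p ^ 3 := by
          gcongr
          exact le_max_of_le_left hz'
        have := neg_abs_le a
        nlinarith [sq_nonneg z]) y hy
    rw [h1] at this
    exact this.2.2
  set A : Set ℝ := {r | r ∈ Icc (-ρ) ρ ∧ ∃ y ∈ Icc (-n) n, U r y ≤ 0} with hA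
  have hAne : A.Nonempty := ⟨-ρ, ⟨le_rfl, by linarith⟩, n, nmem, hdown.le⟩
  have hAb : BddAbove A := ⟨ρ, fun r hr => hr.1.2⟩
  set r0 := sSup A with hr0
  have hr0mem : r0 ∈ Icc (-ρ) ρ := ⟨le_csSup hAb ⟨⟨le_rfl, by linarith⟩, n, nmem, hdown.le⟩, csSup_le hAne (fun r hr => hr.1.2)⟩
  obtain ⟨h1, h2, h3, hd⟩ := hsol r0 hr0mem
  have hnn : ∀ y ∈ Icc (-n) n, 0 ≤ U r0 y := by
    intro y hy
    by_contra hcon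
    push Not at hcon
    have hlt : r0 < ρ := by
      rcases eq_or_lt_of_le hr0mem.2 with h | h
      · rw [h] at hcon; linarith [hup y hy]
      · exact h
    set η := min (ρ - r0) (-(U r0 y) / (L + 1)) with hη
    have hη0 : 0 < η := lt_min (by linarith) (by apply div_pos <;> linarith)
    have hη1 : η ≤ ρ - r0 := min_le_left _ _
    have hη2 : (L + 1) * η ≤ -(U r0 y) := by
      have : η ≤ -(U r0 y) / (L + 1) := min_le_right _ _
      rw [le_div_iff₀ (by linarith)] at this
      linarith
    have hmem : r0 + η ∈ Icc (-ρ) ρ := ⟨by linarith [hr0mem.1], by linarith⟩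
    have hl := hlip y hy (r0 + η) hmem r0 hr0mem
    rw [add_sub_cancel_left, abs_of_pos hη0] at hl
    have := (abs_le.mp hl).2
    have : r0 + η ≤ r0 := le_csSup hAb ⟨hmem, y, hy, by linarith⟩
    linarith
  have hz : ∃ y ∈ Icc (-n) n, U r0 y ≤ 0 := by
    by_contra hcon
    push Not at hcon
    obtain ⟨y0, hy0, hmin⟩ := isCompact_Icc.exists_isMinOn (⟨n, nmem⟩ : (Icc (-n) n).Nonempty)
      (f := U r0) (fun y hy => (hd y hy).1.continuousAt.continuousWithinAt)
    have hpos := hcon y0 hy0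
    have hη0 : 0 < U r0 y0 / (L + 1) := div_pos hpos (by linarith)
    obtain ⟨r, hr, hrr⟩ := exists_lt_of_lt_csSup hAne (show r0 - U r0 y0 / (L + 1) < sSup A by linarith)
    have hle : r ≤ r0 := le_csSup hAb hr
    obtain ⟨hrm, y, hy, hUy⟩ := hr
    have hl := hlip y hy r hrm r0 hr0mem
    rw [abs_of_nonpos (by linarith : r - r0 ≤ 0)] at hl
    have h4 := (abs_le.mp hl).1
    have h5 : U r0 y0 ≤ U r0 y := hmin hy
    have h6 : (r0 - r) * (L + 1) < U r0 y0 := by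
      rw [← lt_div_iff₀ (by linarith)]; linarith
    nlinarith
  obtain ⟨s, hs, hUs⟩ := hz
  have hge : ∀ y ∈ Icc (-n) (n - 2), m ≤ U r0 y := by
    intro y hy
    have := hlow (U r0) (Q r0) (R r0) _ (-n) n (m / 2) (by linarith) (by positivity) (fun z hz => (hd z hz).1) (fun z hz => (hd z hz).2.1) (fun z hz => (hd z hz).2.2)
      hnn (fun z hz => hmpos _ _) (fun z hz => hTle _ z hz) (by rw [h2]; linarith) (by rw [h3]; linarith [hr0mem.2]) y hy
    rcases le_max_iff.mp this with h | h
    · exact h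
    · linarith
  have hsub : ∀ y ∈ Icc (-n) (n - 2), y ∈ Icc (-n) n := fun y hy => ⟨hy.1, by linarith [hy.2]⟩
  have hmx : ∀ y ∈ Icc (-n) (n - 2), max (U r0 y) (m / 2) = U r0 y := fun y hy =>
    max_eq_left (by linarith [hge y hy])
  refine ⟨U r0, Q r0, R r0, ?_, h1, h2, ?_⟩
  · intro y hy
    obtain ⟨e1, e2, e3⟩ := hd y (hsub y hy)
    rw [hmx y hy] at e3
    exact ⟨e1, e2, e3, by linarith [hge y hy]⟩
  · rintro y hy ⟨hQ, hR, hT⟩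
    have ha := abs_nonneg a
    have hy' : y ∈ Icc (-n) (n - 2) := ⟨by linarith [hy.1], hy.2⟩
    have hsy : y ≤ s := by
      by_contra hcon
      push Not at hcon
      have := hge s ⟨hs.1, by linarith [hy.2]⟩
      linarith
    have hsub2 : ∀ z ∈ Icc y n, z ∈ Icc (-n) n := fun z hz => ⟨by linarith [hy'.1, hz.1], hz.2⟩
    have := upTrap (s := y) (t := n) (c := 0) (fun z hz => (hd z (hsub2 z hz)).1) (fun z hz => (hd z (hsub2 z hz)).2.1)
      (fun z hz => (hd z (hsub2 z hz)).2.2) hQ.le le_rfl (by linarith) (by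
        intro z hz hz'
        have hUy := hge y hy'
        have e : 1 / (max (U r0 z) (m / 2)) ^ 3 ≤ 1 / (U r0 y) ^ 3 := by
          have : 0 < U r0 y := by linarith
          gcongr
          exact le_max_of_le_left hz'
        have : y ^ 2 ≤ z ^ 2 := by nlinarith [hy.1, hz.1]
        linarith) s ⟨hsy, hs.2⟩
    linarith [hge y hy']

noncomputable def u0 (y : ℝ) : ℝ := (-y) ^ (-(2 / 3) : ℝ)

lemma u0_pos {y : ℝ} (hy : y < 0) : 0 < u0 y := Real.rpow_pos_of_pos (by linarith) _

lemma u0_cube {y : ℝ} (hy : y < 0) : u0 y ^ 3 * y ^ 2 = 1 := by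
  have h : 0 < -y := by linarith
  unfold u0
  rw [← Real.rpow_natCast, ← Real.rpow_mul h.le, show y ^ 2 = (-y) ^ (2 : ℝ) by rw [Real.rpow_two]; ring,
    ← Real.rpow_add h]
  norm_num

lemma u0_le {y : ℝ} (hy : y ≤ -1) : u0 y ≤ 1 :=
  Real.rpow_le_one_of_one_le_of_nonpos (by linarith) (by norm_num)

lemma u0_d {y : ℝ} (hy : y < 0) : HasDerivAt u0 ((2 / 3) * (u0 y / (-y))) y := by
  have h : 0 < -y := by linarith
  have := (hasDerivAt_neg y).rpow_const (p := (-(2 / 3) : ℝ)) (Or.inl h.ne')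
  refine HasDerivAt.congr_deriv this ?_
  rw [Real.rpow_sub_one h.ne']
  unfold u0
  ring

lemma u0_d1 {y : ℝ} (hy : y < 0) : HasDerivAt (fun z => u0 z / (-z)) ((5 / 3) * (u0 y / (-y) ^ 2)) y := by
  have h : -y ≠ 0 := by linarith
  have h' : y ≠ 0 := by linarith
  refine HasDerivAt.congr_deriv ((u0_d hy).div (hasDerivAt_neg y) h) ?_
  field_simp
  ring

lemma u0_d2 {y : ℝ} (hy : y < 0) : HasDerivAt (fun z => u0 z / (-z) ^ 2) ((8 / 3) * (u0 y / (-y) ^ 3)) y := by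
  have h : -y ≠ 0 := by linarith
  have h' : y ≠ 0 := by linarith
  refine HasDerivAt.congr_deriv ((u0_d hy).div ((hasDerivAt_neg y).pow 2) (pow_ne_zero 2 h)) ?_
  simp
  field_simp
  ring

lemma u0_d3 {y : ℝ} (hy : y < 0) : HasDerivAt (fun z => u0 z / (-z) ^ 3) ((11 / 3) * (u0 y / (-y) ^ 4)) y := by
  have h : -y ≠ 0 := by linarith
  have h' : y ≠ 0 := by linarith
  refine HasDerivAt.congr_deriv ((u0_d hy).div ((hasDerivAt_neg y).pow 3) (pow_ne_zero 3 h)) ?_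
  simp
  field_simp
  ring

lemma derivCross {f : ℝ → ℝ} {d s y : ℝ} (hf : HasDerivAt f d y) (hs : s < y) (h : ∀ z ∈ Ico s y, 0 ≤ f z)
    (h0 : f y = 0) : d ≤ 0 := by
  have h1 : Tendsto (slope f y) (nhdsWithin y (Iio y)) (nhds d) :=
    (hasDerivAt_iff_tendsto_slope.mp hf).mono_left (nhdsWithin_mono _ (fun z hz => (ne_of_lt hz)))
  refine le_of_tendsto h1 ?_
  filter_upwards [Ico_mem_nhdsLT hs] with z hz
  rw [slope_def_field, h0, sub_zero]
  exact div_nonpos_of_nonneg_of_nonpos (h z hz) (by linarith [hz.2])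

lemma taylorGe {U Q R T : ℝ → ℝ} {s t B : ℝ}
    (hU : ∀ y ∈ Icc s t, HasDerivAt U (Q y) y) (hQ : ∀ y ∈ Icc s t, HasDerivAt Q (R y) y)
    (hR : ∀ y ∈ Icc s t, HasDerivAt R (T y) y) (hT : ∀ y ∈ Ioo s t, B ≤ T y) :
    ∀ y ∈ Icc s t, R s + B * (y - s) ≤ R y ∧ Q s + R s * (y - s) + B / 2 * (y - s) ^ 2 ≤ Q y ∧
      U s + Q s * (y - s) + R s / 2 * (y - s) ^ 2 + B / 6 * (y - s) ^ 3 ≤ U y := by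
  have h1 := growGe hR hT
  have h2 : ∀ y ∈ Icc s t, Q s + R s * (y - s) + B / 2 * (y - s) ^ 2 ≤ Q y := by
    intro y hy
    have := growMono (f := fun z => Q z - (R s * (z - s) + B / 2 * (z - s) ^ 2))
      (f' := fun z => R z - (R s * 1 + B / 2 * (2 * (z - s) ^ (2 - 1) * 1)))
      (fun z hz => by
        have hd := (hasDerivAt_id z).sub_const s
        exact (hQ z hz).sub ((hd.const_mul _).add ((hd.pow 2).const_mul _)))
      (fun z hz => by
        have := h1 z (Ioo_subset_Icc_self hz)
        simp only [show 2 - 1 = 1 from rfl, pow_one]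
        linarith) y hy
    simp only [sub_self] at this
    linarith
  intro y hy
  refine ⟨h1 y hy, h2 y hy, ?_⟩
  have := growMono (f := fun z => U z - (Q s * (z - s) + R s / 2 * (z - s) ^ 2 + B / 6 * (z - s) ^ 3))
      (f' := fun z => Q z - (Q s * 1 + R s / 2 * (2 * (z - s) ^ (2 - 1) * 1) + B / 6 * (3 * (z - s) ^ (3 - 1) * 1)))
      (fun z hz => by
        have hd := (hasDerivAt_id z).sub_const s
        exact (hU z hz).sub (((hd.const_mul _).add ((hd.pow 2).const_mul _)).add ((hd.pow 3).const_mul _)))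
      (fun z hz => by
        have := h2 z (Ioo_subset_Icc_self hz)
        simp only [show 2 - 1 = 1 from rfl, show 3 - 1 = 2 from rfl, pow_one]
        linarith) y hy
  simp only [sub_self] at this
  linarith

lemma taylorLe {U Q R T : ℝ → ℝ} {s t B : ℝ}
    (hU : ∀ y ∈ Icc s t, HasDerivAt U (Q y) y) (hQ : ∀ y ∈ Icc s t, HasDerivAt Q (R y) y)
    (hR : ∀ y ∈ Icc s t, HasDerivAt R (T y) y) (hT : ∀ y ∈ Ioo s t, T y ≤ B) :
    ∀ y ∈ Icc s t, R y ≤ R s + B * (y - s) ∧ Q y ≤ Q s + R s * (y - s) + B / 2 * (y - s) ^ 2 ∧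
      U y ≤ U s + Q s * (y - s) + R s / 2 * (y - s) ^ 2 + B / 6 * (y - s) ^ 3 := by
  intro y hy
  have := taylorGe (U := -U) (Q := -Q) (R := -R) (T := -T) (B := -B) (fun y hy => (hU y hy).neg)
    (fun y hy => (hQ y hy).neg) (fun y hy => (hR y hy).neg) (fun y hy => neg_le_neg (hT y hy)) y hy
  simp only [Pi.neg_apply] at this
  obtain ⟨h1, h2, h3⟩ := this
  refine ⟨by linarith, by linarith, by linarith⟩

lemma energyPt {x u U : ℝ} (hx : 1 ≤ x) (hu : 0 < u) (hu1 : u ≤ 1) (hU : 0 < U) (hc : u ^ 3 * x ^ 2 = 1)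
    (hV : |U - u| ≤ 1 / 2 * u) :
    0 ≤ 2 * x * (U - u) - (2 / 3) * (u / x) * (x ^ 2 - 1 / U ^ 3) + (880 / 81) * (u / x ^ 4) * (U - u) + 6 / x ^ 2 := by
  have hx0 : 0 < x := by linarith
  have hA : 2 * x * (U - u) - (2 / 3) * (u / x) * (x ^ 2 - 1 / U ^ 3) =
      (2 * x / (3 * U ^ 3)) * ((U - u) ^ 2 * (3 * U ^ 2 + 2 * U * u + u ^ 2)) := by
    field_simp
    linear_combination (-u) * hc
  have hA' : 0 ≤ (2 * x / (3 * U ^ 3)) * ((U - u) ^ 2 * (3 * U ^ 2 + 2 * U * u + u ^ 2)) := by positivity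
  have hB : 0 ≤ (880 / 81) * (u / x ^ 4) * (U - u) + 6 / x ^ 2 := by
    have h1 : (880 / 81) * (u / x ^ 4) * (U - u) + 6 / x ^ 2 = (880 / 81 * (u * (U - u)) + 6 * x ^ 2) / x ^ 4 := by
      field_simp
    rw [h1]
    apply div_nonneg _ (by positivity)
    have h2 := (abs_le.mp hV).1
    have h3 : 1 ≤ x ^ 2 := by nlinarith
    have h4 : -(1 / 2) ≤ u * (U - u) := by nlinarith
    linarith
  linarith

lemma energy {a n y1 : ℝ} {U Q R : ℝ → ℝ} (hn : -n ≤ y1) (hy1 : y1 ≤ -1)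
    (hd : ∀ y ∈ Icc (-n) y1, HasDerivAt U (Q y) y ∧ HasDerivAt Q (R y) y ∧
      HasDerivAt R (y ^ 2 + a - 1 / (U y) ^ 3) y ∧ 0 < U y)
    (hU0 : U (-n) = u0 (-n)) (hQ0 : Q (-n) = (2 / 3) * (u0 (-n) / (-(-n))))
    (hV : ∀ y ∈ Icc (-n) y1, |U y - u0 y| ≤ 1 / 2 * u0 y) :
    y1 ^ 2 * U y1 + 1 / (2 * (U y1) ^ 2) - 3 / 2 * (y1 ^ 2 * u0 y1) - 10 - |a| ≤
      (Q y1 - (2 / 3) * (u0 y1 / (-y1))) * (R y1 - (10 / 9) * (u0 y1 / (-y1) ^ 2)) := by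
  have hneg : ∀ y ∈ Icc (-n) y1, y < 0 := fun y hy => by linarith [hy.2]
  have hmono := growMono (s := -n) (t := y1)
    (f := fun y => (Q y - (2 / 3) * (u0 y / (-y))) * (R y - (10 / 9) * (u0 y / (-y) ^ 2))
      - (y ^ 2 * U y + 1 / 2 * ((U y) ^ 2)⁻¹ - 3 / 2 * (y ^ 2 * u0 y))
      + ((80 / 27) * (u0 y / (-y) ^ 3) - a) * (U y - u0 y) - 6 * y⁻¹)
    (f' := fun y => (R y - (10 / 9) * (u0 y / (-y) ^ 2)) ^ 2 + (2 * (-y) * (U y - u0 y) - (2 / 3) * (u0 y / (-y)) * ((-y) ^ 2 - 1 / U y ^ 3) + (880 / 81) * (u0 y / (-y) ^ 4) * (U y - u0 y) + 6 / (-y) ^ 2))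
    (fun y hy => by
      obtain ⟨e1, e2, e3, e4⟩ := hd y hy
      have hy0 := hneg y hy
      have hyn : y ≠ 0 := hy0.ne
      have k0 := u0_d hy0
      have k1 := (u0_d1 hy0).const_mul (2 / 3)
      have k2 := (u0_d2 hy0).const_mul (10 / 9)
      have k3 := ((u0_d3 hy0).const_mul (80 / 27)).sub_const a
      have k1' : HasDerivAt (fun z => (2 / 3) * (u0 z / (-z))) ((10 / 9) * (u0 y / (-y) ^ 2)) y := k1.congr_deriv (by ring)
      have id2 := (hasDerivAt_id y).pow 2
      have m1 := (e2.sub k1').mul (e3.sub k2)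
      have m2 := ((id2.mul e1).add (((e1.pow 2).inv (by simp; positivity)).const_mul (1 / 2))).sub ((id2.mul k0).const_mul (3 / 2))
      have m3 := k3.mul (e1.sub k0)
      have m4 := (hasDerivAt_inv hyn).const_mul 6
      refine (((m1.sub m2).add m3).sub m4).congr_deriv ?_
      have hc := u0_cube hy0
      simp only [Pi.sub_apply, Pi.pow_apply, id]
      field_simp
      ring)
    (fun y hy => by
      have hy' := Ioo_subset_Icc_self hy
      have := energyPt (x := -y) (u := u0 y) (U := U y) (by linarith [hy.2]) (u0_pos (hneg y hy')) (u0_le (by linarith [hy.2]))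
        (hd y hy').2.2.2 (by rw [neg_sq]; exact u0_cube (hneg y hy')) (hV y hy')
      have h2 := sq_nonneg (R y - (10 / 9) * (u0 y / (-y) ^ 2))
      linarith) y1 ⟨hn, le_rfl⟩
  simp only [hU0, hQ0] at hmono
  have hn0 : -n < 0 := by linarith
  have hc0 := u0_cube hn0
  have hp0 := u0_pos hn0
  have hP0 : (-n) ^ 2 * u0 (-n) + 1 / 2 * (u0 (-n) ^ 2)⁻¹ - 3 / 2 * ((-n) ^ 2 * u0 (-n)) = 0 := by
    field_simp
    linear_combination (-1) * hc0
  rw [hP0] at hmono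
  have hi0 : (-n)⁻¹ ≤ 0 := inv_nonpos.mpr (by linarith)
  have hi1 : -1 ≤ y1⁻¹ := by
    rw [← inv_neg_one, inv_le_inv_of_neg (by norm_num) (by linarith)]; exact hy1
  have hy1' : y1 ∈ Icc (-n) y1 := ⟨hn, le_rfl⟩
  have hVy := hV y1 hy1'
  have hu1 := u0_le hy1
  have hu := u0_pos (hneg y1 hy1')
  have hU1 := (hd y1 hy1').2.2.2
  have hq : 1 / (2 * (U y1) ^ 2) = 1 / 2 * ((U y1) ^ 2)⁻¹ := by field_simp
  rw [hq]
  have hk : |((80 / 27) * (u0 y1 / (-y1) ^ 3) - a) * (U y1 - u0 y1)| ≤ (3 + |a|) * 1 := by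
    rw [abs_mul]
    gcongr
    · refine (abs_sub _ _).trans ?_
      gcongr
      have h3 : 1 ≤ (-y1) ^ 3 := one_le_pow₀ (by linarith)
      rw [abs_of_nonneg (by positivity)]
      have : u0 y1 / (-y1) ^ 3 ≤ 1 := by
        rw [div_le_one (by linarith)]; linarith
      linarith
    · linarith
  have := (abs_le.mp hk).2
  linarith

set_option maxHeartbeats 2000000 in
lemma topExit {a δ y1 : ℝ} {U Q R : ℝ → ℝ} (hδ : 0 < δ) (hδ2 : δ ≤ 1 / 2) (hx : 1 ≤ -y1)
    (hbig : 24576 * (|a| + 10) ≤ δ ^ 4 * (-y1))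
    (hd : ∀ y ∈ Icc y1 (2 + |a|), HasDerivAt U (Q y) y ∧ HasDerivAt Q (R y) y ∧
      HasDerivAt R (y ^ 2 + a - 1 / (U y) ^ 3) y ∧ 0 < U y)
    (hU : U y1 = (1 + δ) * u0 y1) (hQ : 0 < Q y1) (hR : 0 < R y1) :
    0 < Q (2 + |a|) ∧ 0 < R (2 + |a|) ∧ 1 / (U (2 + |a|)) ^ 3 < (2 + |a|) ^ 2 + a := by
  have hy0 : y1 < 0 := by linarith
  have ha := abs_nonneg a
  have hna := neg_abs_le a
  set x := -y1 with hxd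
  set y2 := y1 + δ * x / 8 with hy2
  have hδx : 0 < δ * x / 8 := by positivity
  have h12 : y1 ≤ y2 := by linarith
  have h2n : y2 < 0 := by rw [hy2]; nlinarith
  have hδ4 : δ ^ 4 ≤ δ := by nlinarith [pow_le_one₀ (n := 3) hδ.le (by linarith), pow_pos hδ 3]
  have hδ42 : δ ^ 4 ≤ δ ^ 2 := by nlinarith [pow_le_one₀ (n := 2) hδ.le (by linarith), pow_pos hδ 2]
  have hx2 : x ≤ x ^ 2 := by nlinarith
  have hA : 24576 * (|a| + 10) ≤ δ * x ^ 2 := hbig.trans (by gcongr)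
  have hB : 24576 * (|a| + 10) ≤ δ ^ 2 * x ^ 2 := hbig.trans (by gcongr)
  have hC : 24576 * (|a| + 10) ≤ δ ^ 4 * x ^ 5 := hbig.trans (by gcongr; exact le_self_pow₀ hx (by norm_num))
  have hu := u0_pos hy0
  have hcube := u0_cube hy0
  have hsub1 : ∀ y ∈ Icc y1 y2, y ∈ Icc y1 (2 + |a|) := fun y hy => ⟨hy.1, by linarith [hy.2]⟩
  have hT1 : ∀ y ∈ Icc y1 y2, U y1 ≤ U y → δ / 8 * x ^ 2 ≤ y ^ 2 + a - 1 / (U y) ^ 3 := by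
    intro y hy hUy
    have e1 : 1 / (U y) ^ 3 ≤ 1 / (U y1) ^ 3 := by
      have : 0 < U y1 := by rw [hU]; positivity
      gcongr
    have e2 : 1 / (U y1) ^ 3 = x ^ 2 / (1 + δ) ^ 3 := by
      rw [hU, hxd, neg_sq, div_eq_div_iff (by positivity) (by positivity)]
      linear_combination (-(1 + δ) ^ 3) * hcube
    have e3 : x ^ 2 / (1 + δ) ^ 3 ≤ x ^ 2 * (1 - δ / 2) := by
      rw [div_le_iff₀ (by positivity), mul_assoc]
      have : 1 ≤ (1 - δ / 2) * (1 + δ) ^ 3 := by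
        have h1 : 1 ≤ (1 - δ / 2) * (1 + δ) := by nlinarith
        have h2 : 1 ≤ (1 + δ) ^ 2 := by nlinarith
        nlinarith
      nlinarith [sq_nonneg x]
    have e4 : x ^ 2 * (1 - δ / 4) ≤ y ^ 2 := by
      have h1 : x * (1 - δ / 8) ≤ -y := by
        have := hy.2
        rw [hy2] at this
        linarith
      have h2 : 0 ≤ x * (1 - δ / 8) := mul_nonneg (by linarith) (by linarith)
      have h3 : (x * (1 - δ / 8)) ^ 2 ≤ (-y) ^ 2 := by gcongr
      nlinarith [sq_nonneg (x * δ)]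
    linarith
  have hup := upTrap (s := y1) (t := y2) (c := 0) (fun y hy => (hd y (hsub1 y hy)).1) (fun y hy => (hd y (hsub1 y hy)).2.1)
    (fun y hy => (hd y (hsub1 y hy)).2.2.1) hQ.le le_rfl (by linarith) (fun y hy h => by
      have h1 := hT1 y hy h
      have : 0 ≤ δ / 8 * x ^ 2 := by positivity
      linarith)
  obtain ⟨t1, t2, t3⟩ := taylorGe (s := y1) (t := y2) (B := δ / 8 * x ^ 2) (fun y hy => (hd y (hsub1 y hy)).1) (fun y hy => (hd y (hsub1 y hy)).2.1)
    (fun y hy => (hd y (hsub1 y hy)).2.2.1) (fun y hy => hT1 y (Ioo_subset_Icc_self hy) (hup y (Ioo_subset_Icc_self hy)).2.2) y2 ⟨h12, le_rfl⟩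
  have e12 : y2 - y1 = δ * x / 8 := by rw [hy2]; ring
  rw [e12] at t1 t2 t3
  have hU1 : 0 < U y1 := by rw [hU]; positivity
  have hU2 : 1 ≤ U y2 := by
    have h1 : 0 ≤ Q y1 * (δ * x / 8) := by positivity
    have h2 : 0 ≤ R y1 / 2 * (δ * x / 8) ^ 2 := by positivity
    have h3 : δ / 8 * x ^ 2 / 6 * (δ * x / 8) ^ 3 = δ ^ 4 * x ^ 5 / 24576 := by ring
    linarith
  have hR2 : δ ^ 2 * x ^ 3 / 64 ≤ R y2 := by
    have : δ / 8 * x ^ 2 * (δ * x / 8) = δ ^ 2 * x ^ 3 / 64 := by ring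
    linarith
  have hQ2 := (hup y2 ⟨h12, le_rfl⟩).2.1
  have hsub2 : ∀ y ∈ Icc y2 (2 + |a|), y ∈ Icc y1 (2 + |a|) := fun y hy => ⟨by linarith [hy.1], hy.2⟩
  have hxa : 2 + |a| ≤ x := by
    have : δ ^ 4 ≤ 1 := by linarith
    have : δ ^ 4 * x ≤ 1 * x := mul_le_mul_of_nonneg_right this (by linarith)
    linarith
  have hfin := upTrap (s := y2) (t := 2 + |a|) (c := |a| + 1) (fun y hy => (hd y (hsub2 y hy)).1) (fun y hy => (hd y (hsub2 y hy)).2.1)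
    (fun y hy => (hd y (hsub2 y hy)).2.2.1) (by linarith) (by linarith) (by
      have h1 : (|a| + 1) * (2 + |a| - y2) ≤ (|a| + 1) * (2 * x) := by gcongr; linarith
      have h2 : (|a| + 1) * 128 * x < δ ^ 2 * x ^ 2 * x := by
        have h3 : (|a| + 1) * 128 < δ ^ 2 * x ^ 2 := by linarith
        exact mul_lt_mul_of_pos_right h3 (by linarith)
      have h4 : δ ^ 2 * x ^ 2 * x = δ ^ 2 * x ^ 3 := by ring
      linarith) (fun y hy h => by
        have : 1 / (U y) ^ 3 ≤ 1 := by
          rw [div_le_one (by have := (hd y (hsub2 y hy)).2.2.2; positivity)]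
          exact one_le_pow₀ (by linarith)
        linarith [sq_nonneg y]) (2 + |a|) ⟨by linarith, le_rfl⟩
  obtain ⟨f1, f2, f3⟩ := hfin
  refine ⟨by linarith, f1, ?_⟩
  have : 1 / (U (2 + |a|)) ^ 3 ≤ 1 := by
    have : 1 ≤ U (2 + |a|) := by linarith
    rw [div_le_one (by positivity)]
    exact one_le_pow₀ (by linarith)
  nlinarith

set_option maxHeartbeats 2000000 in
lemma botExit {a δ y1 t : ℝ} {U Q R : ℝ → ℝ} (hδ : 0 < δ) (hδ2 : δ ≤ 1 / 2) (hx : 1 ≤ -y1)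
    (hbig : 24576 * (|a| + 10) ≤ δ ^ 4 * (-y1)) (ht : 0 ≤ t)
    (hd : ∀ y ∈ Icc y1 t, HasDerivAt U (Q y) y ∧ HasDerivAt Q (R y) y ∧
      HasDerivAt R (y ^ 2 + a - 1 / (U y) ^ 3) y ∧ 0 < U y)
    (hU : U y1 = (1 - δ) * u0 y1) (hQ : Q y1 ≤ (2 / 3) * (u0 y1 / (-y1))) (hR : R y1 ≤ (10 / 9) * (u0 y1 / (-y1) ^ 2)) :
    False := by
  have hy0 : y1 < 0 := by linarith
  have ha := le_abs_self a
  have ha0 := abs_nonneg a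
  set x := -y1 with hxd
  have hx0 : 0 < x := by linarith
  set y2 := y1 + δ * x / 4 with hy2
  have hδx : 0 < δ * x / 4 := by positivity
  have h12 : y1 ≤ y2 := by linarith
  have h2n : y2 < 0 := by rw [hy2]; nlinarith
  have hδ4 : δ ^ 4 ≤ δ := by nlinarith [pow_le_one₀ (n := 3) hδ.le (by linarith), pow_pos hδ 3]
  have hx2 : x ≤ x ^ 2 := by nlinarith
  have hA : 24576 * (|a| + 10) ≤ δ * x ^ 2 := hbig.trans (by gcongr)
  have hC : 24576 * (|a| + 10) ≤ δ ^ 4 * x ^ 5 := hbig.trans (by gcongr; exact le_self_pow₀ hx (by norm_num))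
  have hu := u0_pos hy0
  have hu1 : u0 y1 ≤ 1 := u0_le (by linarith)
  have hcube := u0_cube hy0
  set u := u0 y1 with hud
  have hsub1 : ∀ y ∈ Icc y1 y2, y ∈ Icc y1 t := fun y hy => ⟨hy.1, by linarith [hy.2]⟩
  have hT : ∀ y ∈ Icc y1 y2, 0 < (1 - δ / 2) * u - U y → y ^ 2 + a - 1 / (U y) ^ 3 ≤ - (δ / 4 * x ^ 2) := by
    intro y hy hUy
    have hUp := (hd y (hsub1 y hy)).2.2.2
    have e1 : 1 / ((1 - δ / 2) * u) ^ 3 ≤ 1 / (U y) ^ 3 := by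
      gcongr
      linarith
    have e2 : 1 / ((1 - δ / 2) * u) ^ 3 = x ^ 2 / (1 - δ / 2) ^ 3 := by
      have : 0 < 1 - δ / 2 := by linarith
      rw [hxd, neg_sq, div_eq_div_iff (by positivity) (by positivity)]
      linear_combination (-(1 - δ / 2) ^ 3) * hcube
    have e3 : x ^ 2 * (1 + δ / 2) ≤ x ^ 2 / (1 - δ / 2) ^ 3 := by
      have : 0 < 1 - δ / 2 := by linarith
      rw [le_div_iff₀ (by positivity), mul_assoc]
      have : (1 + δ / 2) * (1 - δ / 2) ^ 3 ≤ 1 := by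
        have h1 : (1 + δ / 2) * (1 - δ / 2) ≤ 1 := by nlinarith
        have h2 : (1 - δ / 2) ^ 2 ≤ 1 := by nlinarith
        have h3 : 0 ≤ (1 - δ / 2) ^ 2 := by positivity
        nlinarith
      nlinarith [sq_nonneg x]
    have e4 : y ^ 2 ≤ x ^ 2 := by
      have h1 : -y ≤ x := by linarith [hy.1]
      have h2 : 0 ≤ -y := by linarith [hy.2]
      nlinarith
    linarith
  have key : ∀ y ∈ Icc y1 y2, (∀ z ∈ Ico y1 y, 0 < (1 - δ / 2) * u - U z) →
      U y ≤ (1 - 3 / 4 * δ) * u - δ / 24 * x ^ 2 * (y - y1) ^ 3 := by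
    intro y hy h
    obtain ⟨_, _, t3⟩ := taylorLe (s := y1) (t := y) (B := -(δ / 4 * x ^ 2)) (fun z hz => (hd z (hsub1 z ⟨hz.1, hz.2.trans hy.2⟩)).1)
      (fun z hz => (hd z (hsub1 z ⟨hz.1, hz.2.trans hy.2⟩)).2.1)
      (fun z hz => (hd z (hsub1 z ⟨hz.1, hz.2.trans hy.2⟩)).2.2.1)
      (fun z hz => hT z ⟨hz.1.le, hz.2.le.trans hy.2⟩ (h z ⟨hz.1.le, hz.2⟩)) y ⟨hy.1, le_rfl⟩
    set g := y - y1 with hg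
    have hg0 : 0 ≤ g := by linarith [hy.1]
    have hg1 : g ≤ δ * x / 4 := by linarith [hy.2]
    have h1 : Q y1 * g ≤ (2 / 3) * (u / x) * (δ * x / 4) := by
      have : 0 ≤ (2 / 3) * (u / x) := by positivity
      gcongr
    have h2 : R y1 / 2 * g ^ 2 ≤ (10 / 9) * (u / x ^ 2) / 2 * (δ * x / 4) ^ 2 := by
      have : 0 ≤ (10 / 9) * (u / x ^ 2) / 2 := by positivity
      gcongr
    have h3 : (2 / 3) * (u / x) * (δ * x / 4) = u * δ / 6 := by field_simp; ring
    have h4 : (10 / 9) * (u / x ^ 2) / 2 * (δ * x / 4) ^ 2 = u * δ * (δ * 5 / 144) := by field_simp; ring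
    have h5 : 0 < u * δ := by positivity
    have h6 : u * δ * (δ * 5 / 144) ≤ u * δ * (1 / 20) := mul_le_mul_of_nonneg_left (by linarith) h5.le
    rw [hU] at t3
    linarith
  have htrap := trap (f := fun y => (1 - δ / 2) * u - U y) (s := y1) (t := y2)
    (fun y hy => (continuousAt_const.sub (hd y (hsub1 y hy)).1.continuousAt).continuousWithinAt)
    (fun y hy h => by
      have := key y hy h
      have h2 : 0 ≤ δ / 24 * x ^ 2 * (y - y1) ^ 3 := by
        have : 0 ≤ y - y1 := by linarith [hy.1]
        positivity
      have h5 : 0 < u * δ := by positivity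
      linarith)
  have hmem : y2 ∈ Icc y1 y2 := ⟨h12, le_rfl⟩
  have hf := key y2 hmem (fun z hz => htrap z ⟨hz.1, hz.2.le⟩)
  have e12 : y2 - y1 = δ * x / 4 := by rw [hy2]; ring
  rw [e12] at hf
  have h3 : δ / 24 * x ^ 2 * (δ * x / 4) ^ 3 = δ ^ 4 * x ^ 5 / 1536 := by ring
  have := (hd y2 (hsub1 y2 hmem)).2.2.2
  have h5 : 0 < u * δ := by positivity
  linarith

set_option maxHeartbeats 2000000 in
lemma leftBlock {a δ n Y : ℝ} {U Q R : ℝ → ℝ} (hδ : 0 < δ) (hδ2 : δ ≤ 1 / 2) (hY : 1 ≤ Y)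
    (hbig : 24576 * (|a| + 10) ≤ δ ^ 4 * Y) (hn : 4 + |a| ≤ n)
    (hd : ∀ y ∈ Icc (-n) (n - 2), HasDerivAt U (Q y) y ∧ HasDerivAt Q (R y) y ∧
      HasDerivAt R (y ^ 2 + a - 1 / (U y) ^ 3) y ∧ 0 < U y)
    (hU0 : U (-n) = u0 (-n)) (hQ0 : Q (-n) = (2 / 3) * (u0 (-n) / (-(-n))))
    (hno : ¬ (0 < Q (2 + |a|) ∧ 0 < R (2 + |a|) ∧ 1 / (U (2 + |a|)) ^ 3 < (2 + |a|) ^ 2 + a)) :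
    ∀ y ∈ Icc (-n) (-Y), |U y - u0 y| ≤ δ * u0 y := by
  have ha0 := abs_nonneg a
  suffices h : ∀ y ∈ Icc (-n) (-Y), 0 < δ * u0 y - |U y - u0 y| by
    intro y hy
    linarith [h y hy]
  have hsub : ∀ y ∈ Icc (-n) (-Y), y ∈ Icc (-n) (n - 2) := fun y hy => ⟨hy.1, by linarith [hy.2]⟩
  have hcont : ∀ y ∈ Icc (-n) (-Y), ContinuousAt (fun y => δ * u0 y - |U y - u0 y|) y := by
    intro y hy
    have h1 := (u0_d (y := y) (by linarith [hy.2])).continuousAt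
    exact (continuousAt_const.mul h1).sub (((hd y (hsub y hy)).1.continuousAt.sub h1).abs)
  apply trap (fun y hy => (hcont y hy).continuousWithinAt)
  intro y hy hprev
  by_contra hcon
  push Not at hcon
  have hyY : y ≤ -1 := by linarith [hy.2]
  have hyneg : y < 0 := by linarith
  have hyne : y ≠ 0 := hyneg.ne
  have hu := u0_pos hyneg
  have hny : -n < y := by
    rcases eq_or_lt_of_le hy.1 with h | h
    · rw [← h, hU0, sub_self, abs_zero, sub_zero] at hcon
      rw [← h] at hu
      linarith [mul_pos hδ hu]
    · exact h
  have hge : 0 ≤ δ * u0 y - |U y - u0 y| := by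
    have h1 : Tendsto (fun y => δ * u0 y - |U y - u0 y|) (nhdsWithin y (Iio y)) (nhds (δ * u0 y - |U y - u0 y|)) :=
      (hcont y hy).tendsto.mono_left nhdsWithin_le_nhds
    refine ge_of_tendsto h1 ?_
    filter_upwards [Ico_mem_nhdsLT hny] with z hz
    exact (hprev z hz).le
  have heq : |U y - u0 y| = δ * u0 y := by linarith
  have hall : ∀ z ∈ Icc (-n) y, |U z - u0 z| ≤ 1 / 2 * u0 z := by
    intro z hz
    have hz0 := u0_pos (show z < 0 by linarith [hz.2])
    have : |U z - u0 z| ≤ δ * u0 z := by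
      rcases eq_or_lt_of_le hz.2 with h | h
      · rw [h]; exact heq.le
      · linarith [hprev z ⟨hz.1, h⟩]
    exact this.trans (by gcongr)
  have hen := energy (a := a) hny.le hyY (fun z hz => hd z ⟨hz.1, by linarith [hz.2]⟩) hU0 hQ0 hall
  have hbigy : 24576 * (|a| + 10) ≤ δ ^ 4 * (-y) := hbig.trans (by gcongr; linarith [hy.2])
  obtain ⟨e1, e2, e3, e4⟩ := hd y (hsub y hy)
  have hcube := u0_cube hyneg
  have hu1 := u0_le hyY
  have hP : 1 / 2 * δ ^ 2 * (-y) ≤ y ^ 2 * U y + 1 / (2 * (U y) ^ 2) - 3 / 2 * (y ^ 2 * u0 y) := by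
    have h1 : y ^ 2 * U y + 1 / (2 * (U y) ^ 2) - 3 / 2 * (y ^ 2 * u0 y) =
        y ^ 2 * (U y - u0 y) ^ 2 * ((2 * U y + u0 y) / (2 * U y ^ 2)) := by
      field_simp
      linear_combination (-1) * hcube
    have h2 : (U y - u0 y) ^ 2 = δ ^ 2 * u0 y ^ 2 := by rw [← sq_abs, heq]; ring
    have hUle : U y ≤ 3 / 2 * u0 y := by
      have := (abs_le.mp (hall y ⟨hny.le, le_rfl⟩)).2; linarith
    have h3 : 1 / 2 / u0 y ≤ (2 * U y + u0 y) / (2 * U y ^ 2) := by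
      rw [div_le_div_iff₀ hu (by positivity)]
      nlinarith [mul_pos e4 hu]
    have h4 : -y ≤ y ^ 2 * u0 y := by
      by_contra hc
      push Not at hc
      have h5 : y ^ 2 * u0 y ^ 3 < 1 := by
        have hx : 1 ≤ -y := by linarith
        have hw : 0 < y ^ 2 * u0 y := by positivity
        have h6 : (-y) * u0 y < 1 := by
          have : (-y) * ((-y) * u0 y) < (-y) * 1 := by linarith [show (-y) * ((-y) * u0 y) = y ^ 2 * u0 y by ring]
          exact lt_of_mul_lt_mul_left this (by linarith)
        have h7 : 0 < (-y) * u0 y := by nlinarith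
        have h8 : y ^ 2 * u0 y ^ 3 = ((-y) * u0 y) ^ 2 * u0 y := by ring
        have h9 : ((-y) * u0 y) ^ 2 < 1 := by nlinarith
        have h10 : ((-y) * u0 y) ^ 2 * u0 y ≤ ((-y) * u0 y) ^ 2 * 1 := by gcongr
        rw [h8]
        linarith
      have h11 : u0 y ^ 3 * y ^ 2 = y ^ 2 * u0 y ^ 3 := mul_comm _ _
      linarith
    rw [h1, h2]
    calc 1 / 2 * δ ^ 2 * (-y) ≤ 1 / 2 * δ ^ 2 * (y ^ 2 * u0 y) := by gcongr
      _ = y ^ 2 * (δ ^ 2 * u0 y ^ 2) * (1 / 2 / u0 y) := by field_simp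
      _ ≤ _ := by gcongr
  have hVV : 0 < (Q y - (2 / 3) * (u0 y / (-y))) * (R y - (10 / 9) * (u0 y / (-y) ^ 2)) := by
    have hδ42 : δ ^ 4 ≤ δ ^ 2 := by nlinarith [pow_le_one₀ (n := 2) hδ.le (by linarith), pow_pos hδ 2]
    have : δ ^ 4 * (-y) ≤ δ ^ 2 * (-y) := by
      have : 0 ≤ -y := by linarith
      gcongr
    linarith
  have hq0 : 0 < (2 / 3) * (u0 y / (-y)) := by
    have : 0 < -y := by linarith
    positivity
  have hr0 : 0 < (10 / 9) * (u0 y / (-y) ^ 2) := by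
    have : 0 < -y := by linarith
    positivity
  have k0 := u0_d hyneg
  rcases abs_cases (U y - u0 y) with ⟨h, h'⟩ | ⟨h, h'⟩
  · have hc := derivCross (f := fun z => δ * u0 z - (U z - u0 z)) ((k0.const_mul δ).sub (e1.sub k0)) hny
      (fun z hz => by linarith [hprev z hz, le_abs_self (U z - u0 z)]) (by linarith)
    have hpos : 0 < Q y - (2 / 3) * (u0 y / (-y)) := by linarith [mul_pos hδ hq0]
    have hpos2 := (pos_iff_pos_of_mul_pos hVV).mp hpos
    exact hno (topExit hδ hδ2 (by linarith) hbigy (fun z hz => hd z ⟨by linarith [hz.1], by linarith [hz.2]⟩) (by linarith)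
      (by linarith) (by linarith))
  · have hc := derivCross (f := fun z => δ * u0 z + (U z - u0 z)) ((k0.const_mul δ).add (e1.sub k0)) hny
      (fun z hz => by linarith [hprev z hz, neg_abs_le (U z - u0 z)]) (by linarith)
    have hneg : Q y - (2 / 3) * (u0 y / (-y)) < 0 := by linarith [mul_pos hδ hq0]
    have hneg2 := (neg_iff_neg_of_mul_pos hVV).mp hneg
    exact botExit (t := n - 2) hδ hδ2 (by linarith) hbigy (by linarith) (fun z hz => hd z ⟨by linarith [hz.1], by linarith [hz.2]⟩) (by linarith)
      (by linarith) (by linarith)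

/-- family of approximate solutions -/
def Good (a n : ℝ) (U Q R : ℝ → ℝ) : Prop :=
  (∀ y ∈ Icc (-n) (n - 2), HasDerivAt U (Q y) y ∧ HasDerivAt Q (R y) y ∧
      HasDerivAt R (y ^ 2 + a - 1 / (U y) ^ 3) y ∧ 0 < U y) ∧
  (∀ y ∈ Icc (2 + |a|) (n - 2), ¬ (0 < Q y ∧ 0 < R y ∧ 1 / (U y) ^ 3 < y ^ 2 + a)) ∧
  (∀ δ Y : ℝ, 0 < δ → δ ≤ 1 / 2 → 1 ≤ Y → 24576 * (|a| + 10) ≤ δ ^ 4 * Y →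
    ∀ y ∈ Icc (-n) (-Y), |U y - u0 y| ≤ δ * u0 y)

lemma exists_good (a n : ℝ) (hn : 4 + |a| ≤ n) : ∃ U Q R, Good a n U Q R := by
  have ha := abs_nonneg a
  have hn0 : -n < 0 := by linarith
  have hu := u0_pos hn0
  obtain ⟨U, Q, R, h1, h2, h3, h4⟩ := shoot a n (u0 (-n)) ((2 / 3) * (u0 (-n) / (-(-n)))) (by linarith) hu
    (by have : 0 < -(-n) := by linarith
        positivity)
  refine ⟨U, Q, R, h1, h4, ?_⟩
  intro δ Y hδ hδ2 hY hb
  exact leftBlock hδ hδ2 hY hb hn h1 h2 h3 (h4 _ ⟨le_rfl, by linarith⟩)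

lemma unif (a N : ℝ) (hN : 400000 * (|a| + 10) ≤ N) : ∃ m > 0, ∃ M, 0 ≤ M ∧ ∀ n U Q R, N + 4 ≤ n → Good a n U Q R →
    ∀ y ∈ Icc (-N) N, m ≤ U y ∧ |U y| ≤ M ∧ |Q y| ≤ M ∧ |R y| ≤ M ∧ |y ^ 2 + a - 1 / (U y) ^ 3| ≤ M := by
  have ha := abs_nonneg a
  have hN0 : 0 < N := by linarith
  set B := N ^ 2 + |a| + 8 * N ^ 2 with hB
  have hB0 : 0 ≤ B := by positivity
  set M0 := 28 + 9 * B with hM0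
  set C := (N + 2) ^ 2 + |a| with hC
  have hC0 : 0 ≤ C := by positivity
  obtain ⟨m, hm, hm1, hlow⟩ := lowerBd C M0 (2 * N + 2) hC0 (by linarith) (by linarith)
  set B2 := C + 1 / m ^ 3 with hB2
  have hB20 : 0 ≤ B2 := by positivity
  refine ⟨m, hm, B2 + (M0 + B2 * (2 * N)) + (M0 + M0 * (2 * N) + B2 / 2 * (2 * N) ^ 2) +
    (2 + M0 * (2 * N) + M0 / 2 * (2 * N) ^ 2 + B2 / 6 * (2 * N) ^ 3), by positivity, ?_⟩
  intro n U Q R hn ⟨hd, _, hl⟩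
  have hl' := hl (1 / 2) (393216 * (|a| + 10)) (by norm_num) le_rfl (by linarith) (by norm_num; linarith)
  have hsub : ∀ y ∈ Icc (-N) (-N + 3 * 1), y ∈ Icc (-n) (n - 2) ∧ y ∈ Icc (-n) (-(393216 * (|a| + 10))) := by
    intro y hy
    obtain ⟨h1, h2⟩ := hy
    exact ⟨⟨by linarith, by linarith⟩, ⟨by linarith, by linarith⟩⟩
  have hTle : ∀ y ∈ Icc (-N) (N + 2), y ^ 2 + a ≤ C ∧ -C ≤ y ^ 2 + a := by
    intro y hy
    have h1 : y ^ 2 ≤ (N + 2) ^ 2 := by nlinarith [hy.1, hy.2]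
    have h5 := le_abs_self a
    have h6 := neg_abs_le a
    have h7 := sq_nonneg y
    have h8 := sq_nonneg (N + 2)
    exact ⟨by linarith, by linarith⟩
  have hA : ∀ y ∈ Icc (-N) (-N + 3 * 1), |U y - 0| ≤ 2 ∧ |y ^ 2 + a - 1 / (U y) ^ 3| ≤ B := by
    intro y hy
    obtain ⟨g1, g2⟩ := hsub y hy
    have hy1 : y ≤ -1 := by linarith [g2.2]
    have hy0 : y < 0 := by linarith
    have hu1 := u0_le hy1
    have hu := u0_pos hy0
    have hc := u0_cube hy0
    have hv := abs_le.mp (hl' y g2)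
    have hUp := (hd y g1).2.2.2
    have hyN : y ^ 2 ≤ N ^ 2 := by nlinarith [hy.1]
    refine ⟨by rw [sub_zero, abs_of_pos hUp]; linarith, ?_⟩
    have e1 : 1 / (U y) ^ 3 ≤ 1 / (u0 y / 2) ^ 3 := by
      gcongr
      linarith
    have e2 : 1 / (u0 y / 2) ^ 3 = 8 * y ^ 2 := by
      field_simp
      linear_combination (-8) * hc
    have e3 : 0 < 1 / (U y) ^ 3 := by positivity
    have h5 := le_abs_self a
    have h6 := neg_abs_le a
    have h7 := sq_nonneg y
    rw [abs_le]
    exact ⟨by linarith, by linarith⟩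
  obtain ⟨i1, i2⟩ := interp (t := -N) (l := 1) (A := 2) (B := B) (k := 0) one_pos (fun y hy => (hd y (hsub y hy).1).1)
    (fun y hy => (hd y (hsub y hy).1).2.1) (fun y hy => (hd y (hsub y hy).1).2.2.1)
    (fun y hy => (hA y hy).1) (fun y hy => (hA y hy).2)
  have i1' : |Q (-N)| ≤ M0 := by linarith
  have i2' : |R (-N)| ≤ M0 := by linarith
  have i0' : |U (-N)| ≤ 2 := by
    have := (hA (-N) ⟨le_rfl, by linarith⟩).1
    rwa [sub_zero] at this
  have hsub2 : ∀ y ∈ Icc (-N) (N + 2), y ∈ Icc (-n) (n - 2) := fun y hy => ⟨by linarith [hy.1], by linarith [hy.2]⟩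
  have hge : ∀ y ∈ Icc (-N) N, m ≤ U y := by
    intro y hy
    have := hlow U Q R _ (-N) (N + 2) 0 (by linarith) le_rfl (fun y hy => (hd y (hsub2 y hy)).1)
      (fun y hy => (hd y (hsub2 y hy)).2.1) (fun y hy => (hd y (hsub2 y hy)).2.2.1) (fun y hy => (hd y (hsub2 y hy)).2.2.2.le)
      (fun y hy => lt_max_of_lt_left (hd y (hsub2 y hy)).2.2.2)
      (fun y hy => by
        rw [max_eq_left (hd y (hsub2 y hy)).2.2.2.le]
        linarith [(hTle y hy).1]) ((le_abs_self _).trans i1') ((le_abs_self _).trans i2') y ⟨hy.1, by linarith [hy.2]⟩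
    rcases le_max_iff.mp this with h | h
    · exact h
    · linarith
  have hsub3 : ∀ y ∈ Icc (-N) N, y ∈ Icc (-N) (N + 2) := fun y hy => ⟨hy.1, by linarith [hy.2]⟩
  have hT : ∀ y ∈ Icc (-N) N, |y ^ 2 + a - 1 / (U y) ^ 3| ≤ B2 := by
    intro y hy
    have h1 := hge y hy
    have e0 : 0 < U y := by linarith
    have e1 : 1 / (U y) ^ 3 ≤ 1 / m ^ 3 := by gcongr
    have e3 : 0 < 1 / (U y) ^ 3 := by positivity
    have h2 := hTle y (hsub3 y hy)
    rw [abs_le]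
    exact ⟨by linarith, by linarith [show 0 < 1 / m ^ 3 by positivity]⟩
  intro y hy
  obtain ⟨p1, p2, p3⟩ := taylorGe (s := -N) (t := N) (B := -B2) (fun y hy => (hd y (hsub2 y (hsub3 y hy))).1)
    (fun y hy => (hd y (hsub2 y (hsub3 y hy))).2.1) (fun y hy => (hd y (hsub2 y (hsub3 y hy))).2.2.1)
    (fun y hy => (abs_le.mp (hT y (Ioo_subset_Icc_self hy))).1) y hy
  obtain ⟨q1, q2, q3⟩ := taylorLe (s := -N) (t := N) (B := B2) (fun y hy => (hd y (hsub2 y (hsub3 y hy))).1)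
    (fun y hy => (hd y (hsub2 y (hsub3 y hy))).2.1) (fun y hy => (hd y (hsub2 y (hsub3 y hy))).2.2.1)
    (fun y hy => (abs_le.mp (hT y (Ioo_subset_Icc_self hy))).2) y hy
  set g := y - -N with hg
  have hg0 : 0 ≤ g := by linarith [hy.1]
  have hg1 : g ≤ 2 * N := by linarith [hy.2]
  have hM00 : 0 ≤ M0 := by positivity
  have b1 : |Q (-N) * g| ≤ M0 * (2 * N) := by rw [abs_mul, abs_of_nonneg hg0]; gcongr
  have b2 : |R (-N) * g| ≤ M0 * (2 * N) := by rw [abs_mul, abs_of_nonneg hg0]; gcongr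
  have b3 : |R (-N) / 2 * g ^ 2| ≤ M0 / 2 * (2 * N) ^ 2 := by
    rw [abs_mul, abs_div, abs_of_nonneg (pow_nonneg hg0 2), abs_two]; gcongr
  have c1 : B2 * g ≤ B2 * (2 * N) := by gcongr
  have c2 : B2 / 2 * g ^ 2 ≤ B2 / 2 * (2 * N) ^ 2 := by gcongr
  have c3 : B2 / 6 * g ^ 3 ≤ B2 / 6 * (2 * N) ^ 3 := by gcongr
  have d1 : 0 ≤ B2 * (2 * N) := by positivity
  have d2 : 0 ≤ B2 / 2 * (2 * N) ^ 2 := by positivity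
  have d3 : 0 ≤ B2 / 6 * (2 * N) ^ 3 := by positivity
  have d4 : 0 ≤ M0 * (2 * N) := by positivity
  have d5 : 0 ≤ M0 / 2 * (2 * N) ^ 2 := by positivity
  rw [abs_le] at b1 b2 b3 i1' i2' i0'
  refine ⟨hge y hy, ?_, ?_, ?_, ?_⟩
  · rw [abs_le]; constructor <;> linarith
  · rw [abs_le]; constructor <;> linarith
  · rw [abs_le]; constructor <;> linarith
  · linarith [hT y hy]

lemma ulim (F : Ultrafilter ℕ) (f : ℕ → ℝ) (M : ℝ) (h : ∀ᶠ n in (F : Filter ℕ), |f n| ≤ M) :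
    ∃ l, Tendsto f F (nhds l) := by
  obtain ⟨l, _, hl⟩ := (isCompact_Icc (a := -M) (b := M)).ultrafilter_le_nhds (F.map f) (by
    rw [le_principal_iff]
    change ∀ᶠ n in (F : Filter ℕ), f n ∈ Icc (-M) M
    filter_upwards [h] with n hn
    exact abs_le.mp hn)
  exact ⟨l, hl⟩

lemma limDeriv (F : Filter ℕ) [F.NeBot] {f f' : ℕ → ℝ → ℝ} {g : ℝ → ℝ} {y d B : ℝ}
    (hg : ∀ z ∈ Icc (y - 1) (y + 1), Tendsto (fun n => f n z) F (nhds (g z)))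
    (hd : Tendsto (fun n => f' n y) F (nhds d))
    (h : ∀ᶠ n in F, ∀ z ∈ Icc (y - 1) (y + 1), HasDerivAt (f n) (f' n z) z ∧ |f' n z - f' n y| ≤ B * |z - y|) :
    HasDerivAt g d y := by
  have hy : y ∈ Icc (y - 1) (y + 1) := ⟨by linarith, by linarith⟩
  have key : ∀ z ∈ Icc (y - 1) (y + 1), |g z - g y - (z - y) * d| ≤ B * |z - y| ^ 2 := by
    intro z hz
    have ht : Tendsto (fun n => |f n z - f n y - (z - y) * f' n y|) F (nhds |g z - g y - (z - y) * d|) :=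
      (((hg z hz).sub (hg y hy)).sub (hd.const_mul (z - y))).abs
    refine le_of_tendsto ht ?_
    filter_upwards [h] with n hn
    have hz1 : |z - y| ≤ 1 := abs_le.mpr ⟨by linarith [hz.1], by linarith [hz.2]⟩
    have hs : ∀ w ∈ Icc (y - |z - y|) (y + |z - y|), w ∈ Icc (y - 1) (y + 1) ∧ |w - y| ≤ |z - y| := fun w hw =>
      ⟨⟨by linarith [hw.1], by linarith [hw.2]⟩, abs_le.mpr ⟨by linarith [hw.1], by linarith [hw.2]⟩⟩
    have hB : 0 ≤ B := by
      have := (hn (y + 1) ⟨by linarith, le_rfl⟩).2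
      rw [add_sub_cancel_left, abs_one, mul_one] at this
      exact (abs_nonneg _).trans this
    have := (convex_Icc (y - |z - y|) (y + |z - y|)).norm_image_sub_le_of_norm_hasDerivWithin_le
      (f := fun w => f n w - w * f' n y) (f' := fun w => f' n w - 1 * f' n y) (C := B * |z - y|) (x := y) (y := z)
      (fun w hw => ((hn w (hs w hw).1).1.sub ((hasDerivAt_id w).mul_const _)).hasDerivWithinAt)
      (fun w hw => by
        rw [one_mul, Real.norm_eq_abs]
        exact ((hn w (hs w hw).1).2).trans (mul_le_mul_of_nonneg_left (hs w hw).2 hB))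
      ⟨by linarith [abs_nonneg (z - y)], by linarith [abs_nonneg (z - y)]⟩
      ⟨by linarith [neg_abs_le (z - y)], by linarith [le_abs_self (z - y)]⟩
    rw [Real.norm_eq_abs, Real.norm_eq_abs] at this
    calc _ = |f n z - z * f' n y - (f n y - y * f' n y)| := by congr 1; ring
      _ ≤ _ := this
      _ = _ := by ring
  rw [hasDerivAt_iff_isLittleO]
  have hO : (fun z => g z - g y - (z - y) • d) =O[nhds y] fun z => (z - y) ^ 2 := by
    refine Asymptotics.IsBigO.of_bound B ?_
    filter_upwards [Icc_mem_nhds (show y - 1 < y by linarith) (show y < y + 1 by linarith)] with z hz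
    rw [Real.norm_eq_abs, Real.norm_eq_abs, abs_pow, smul_eq_mul]
    exact key z hz
  refine hO.trans_isLittleO ?_
  have h1 : (fun z : ℝ => z - y) =o[nhds y] (fun _ => (1 : ℝ)) := by
    rw [Asymptotics.isLittleO_one_iff]
    have : Tendsto (fun z : ℝ => z - y) (nhds y) (nhds (y - y)) := tendsto_id.sub_const y
    rwa [sub_self] at this
  have := (Asymptotics.isBigO_refl (fun z : ℝ => z - y) (nhds y)).mul_isLittleO h1
  simpa [sq] using this

lemma lipOf {f f' : ℝ → ℝ} {y M : ℝ} (h : ∀ z ∈ Icc (y - 1) (y + 1), HasDerivAt f (f' z) z ∧ |f' z| ≤ M) :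
    ∀ z ∈ Icc (y - 1) (y + 1), |f z - f y| ≤ M * |z - y| := by
  intro z hz
  exact (convex_Icc (y - 1) (y + 1)).norm_image_sub_le_of_norm_hasDerivWithin_le
      (f := f) (f' := f') (C := M) (x := y) (y := z)
      (fun w hw => (h w hw).1.hasDerivWithinAt) (fun w hw => (h w hw).2) ⟨by linarith, by linarith⟩ hz

lemma limitSol (a : ℝ) : ∃ U Q R : ℝ → ℝ, (∀ y, HasDerivAt U (Q y) y ∧ HasDerivAt Q (R y) y ∧
      HasDerivAt R (y ^ 2 + a - 1 / (U y) ^ 3) y ∧ 0 < U y) ∧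
    (∀ y, 2 + |a| ≤ y → ¬ (0 < Q y ∧ 0 < R y ∧ 1 / (U y) ^ 3 < y ^ 2 + a)) ∧
    (∀ δ > 0, ∃ Y : ℝ, 1 ≤ Y ∧ ∀ y ≤ -Y, |U y - u0 y| ≤ δ * u0 y) := by
  have ha := abs_nonneg a
  have hex : ∀ n : ℕ, ∃ U Q R, 4 + |a| ≤ (n : ℝ) → Good a n U Q R := by
    intro n
    by_cases h : 4 + |a| ≤ (n : ℝ)
    · obtain ⟨U, Q, R, hg⟩ := exists_good a n h
      exact ⟨U, Q, R, fun _ => hg⟩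
    · exact ⟨0, 0, 0, fun h' => absurd h' h⟩
  choose U Q R hg using hex
  let F : Ultrafilter ℕ := hyperfilter ℕ
  have hF : (F : Filter ℕ) ≤ atTop := by
    rw [← Nat.cofinite_eq_atTop]; exact hyperfilter_le_cofinite
  have hlarge : ∀ K : ℝ, ∀ᶠ n : ℕ in (F : Filter ℕ), K ≤ (n : ℝ) := fun K =>
    hF (tendsto_natCast_atTop_atTop.eventually_ge_atTop K)
  have hbd : ∀ y : ℝ, ∃ m > 0, ∃ M, 0 ≤ M ∧ ∀ᶠ n : ℕ in (F : Filter ℕ), Good a n (U n) (Q n) (R n) ∧ ∀ z ∈ Icc (y - 1) (y + 1),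
      z ∈ Icc (-(n : ℝ)) (n - 2) ∧
      m ≤ U n z ∧ |U n z| ≤ M ∧ |Q n z| ≤ M ∧ |R n z| ≤ M ∧ |z ^ 2 + a - 1 / (U n z) ^ 3| ≤ M := by
    intro y
    obtain ⟨m, hm, M, hM, h⟩ := unif a (400000 * (|a| + 10) + |y| + 1) (by linarith [abs_nonneg y])
    refine ⟨m, hm, M, hM, ?_⟩
    filter_upwards [hlarge (400000 * (|a| + 10) + |y| + 1 + 4)] with n hn
    have hgn := hg n (by linarith [abs_nonneg y])
    refine ⟨hgn, fun z hz => ⟨⟨?_, ?_⟩, ?_⟩⟩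
    · linarith [neg_abs_le y, hz.1]
    · linarith [le_abs_self y, hz.2]
    · exact h n _ _ _ hn hgn z ⟨by linarith [neg_abs_le y, hz.1], by linarith [le_abs_self y, hz.2]⟩
  have hself : ∀ y : ℝ, y ∈ Icc (y - 1) (y + 1) := fun y => ⟨by linarith, by linarith⟩
  have hu : ∀ y, ∃ l, Tendsto (fun n => U n y) F (nhds l) := by
    intro y
    obtain ⟨m, hm, M, hM, h⟩ := hbd y
    exact ulim F _ M (h.mono fun n hn => (hn.2 y (hself y)).2.2.1)
  have hq : ∀ y, ∃ l, Tendsto (fun n => Q n y) F (nhds l) := by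
    intro y
    obtain ⟨m, hm, M, hM, h⟩ := hbd y
    exact ulim F _ M (h.mono fun n hn => (hn.2 y (hself y)).2.2.2.1)
  have hr : ∀ y, ∃ l, Tendsto (fun n => R n y) F (nhds l) := by
    intro y
    obtain ⟨m, hm, M, hM, h⟩ := hbd y
    exact ulim F _ M (h.mono fun n hn => (hn.2 y (hself y)).2.2.2.2.1)
  choose u hu using hu
  choose q hq using hq
  choose r hr using hr
  have hupos : ∀ y, 0 < u y := by
    intro y
    obtain ⟨m, hm, M, hM, h⟩ := hbd y
    have : m ≤ u y := ge_of_tendsto (hu y) (h.mono fun n hn => (hn.2 y (hself y)).2.1)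
    linarith
  have hT : ∀ y, Tendsto (fun n => 1 / (U n y) ^ 3) F (nhds (1 / (u y) ^ 3)) := fun y =>
    tendsto_const_nhds.div ((hu y).pow 3) (by have := hupos y; positivity)
  refine ⟨u, q, r, ?_, ?_, ?_⟩
  · intro y
    obtain ⟨m, hm, M, hM, h⟩ := hbd y
    refine ⟨?_, ?_, ?_, hupos y⟩
    · refine limDeriv F (f := U) (f' := Q) (B := M) (fun z _ => hu z) (hq y) ?_
      filter_upwards [h] with n hn z hz
      exact ⟨(hn.1.1 z (hn.2 z hz).1).1, lipOf (fun w hw => ⟨(hn.1.1 w (hn.2 w hw).1).2.1, (hn.2 w hw).2.2.2.2.1⟩) z hz⟩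
    · refine limDeriv F (f := Q) (f' := R) (B := M) (fun z _ => hq z) (hr y) ?_
      filter_upwards [h] with n hn z hz
      exact ⟨(hn.1.1 z (hn.2 z hz).1).2.1, lipOf (fun w hw => ⟨(hn.1.1 w (hn.2 w hw).1).2.2.1, (hn.2 w hw).2.2.2.2.2⟩) z hz⟩
    · refine limDeriv F (f := R) (f' := fun n z => z ^ 2 + a - 1 / (U n z) ^ 3) (B := 2 * (|y| + 1) + 3 * (M / m ^ 4)) (fun z _ => hr z)
        (tendsto_const_nhds.sub (hT y)) ?_
      filter_upwards [h] with n hn z hz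
      refine ⟨(hn.1.1 z (hn.2 z hz).1).2.2.1, lipOf (f := fun z => z ^ 2 + a - 1 / (U n z) ^ 3) (f' := fun w => 2 * w + 3 * (Q n w / (U n w) ^ 4)) (fun w hw => ⟨?_, ?_⟩) z hz⟩
      · obtain ⟨d1, _, _, d4⟩ := hn.1.1 w (hn.2 w hw).1
        have := (((hasDerivAt_id w).pow 2).add_const a).sub ((hasDerivAt_const w (1 : ℝ)).div (d1.pow 3) (by simp; positivity))
        refine this.congr_deriv ?_
        simp only [Pi.pow_apply, id]
        field_simp
        ring
      · obtain ⟨_, c1, _, c2, _⟩ := hn.2 w hw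
        have hw1 : |w| ≤ |y| + 1 := by
          rw [abs_le]
          exact ⟨by linarith [hw.1, neg_abs_le y], by linarith [hw.2, le_abs_self y]⟩
        have c0 : 0 < U n w := by linarith
        calc |2 * w + 3 * (Q n w / (U n w) ^ 4)| ≤ |2 * w| + |3 * (Q n w / (U n w) ^ 4)| := abs_add_le _ _
          _ = 2 * |w| + 3 * (|Q n w| / (U n w) ^ 4) := by
            rw [abs_mul, abs_mul, abs_div, abs_of_pos (pow_pos c0 4), abs_two, abs_of_pos (by norm_num : (0 : ℝ) < 3)]
          _ ≤ _ := by gcongr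
  · rintro y hy ⟨h1, h2, h3⟩
    have e1 := (hq y).eventually (lt_mem_nhds h1)
    have e2 := (hr y).eventually (lt_mem_nhds h2)
    have e3 := (hT y).eventually (gt_mem_nhds h3)
    obtain ⟨m, hm, M, hM, h⟩ := hbd y
    obtain ⟨n, ⟨⟨k1, k2⟩, k3⟩, k4⟩ := (((e1.and e2).and e3).and h).exists
    exact k4.1.2.1 y ⟨hy, (k4.2 y (hself y)).1.2⟩ ⟨k1, k2, k3⟩
  · intro δ hδ
    set d := min δ (1 / 2) with hd
    have hd0 : 0 < d := lt_min hδ (by norm_num)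
    refine ⟨24576 * (|a| + 10) / d ^ 4 + 1, ?_, ?_⟩
    · have : 0 ≤ 24576 * (|a| + 10) / d ^ 4 := by positivity
      linarith
    · intro y hy
      have hY1 : 0 ≤ 24576 * (|a| + 10) / d ^ 4 := by positivity
      have : |u y - u0 y| ≤ d * u0 y := by
        refine le_of_tendsto ((hu y).sub_const (u0 y)).abs ?_
        filter_upwards [hlarge (4 + |a|), hlarge (-y)] with n hn hn2
        refine (hg n hn).2.2 d (24576 * (|a| + 10) / d ^ 4 + 1) hd0 (min_le_right _ _) (by linarith) ?_ y ⟨by linarith, hy⟩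
        have h4 : 0 < d ^ 4 := by positivity
        have h5 : d ^ 4 * (24576 * (|a| + 10) / d ^ 4 + 1) = 24576 * (|a| + 10) + d ^ 4 := by field_simp
        rw [h5]
        linarith
      refine this.trans ?_
      have := u0_pos (y := y) (by linarith)
      gcongr
      exact min_le_left _ _

lemma timeChange : ∃ G X : ℝ → ℝ, (∀ x, X (G x) = x) ∧ Tendsto G atBot atBot ∧ Tendsto X atTop atTop ∧
    Tendsto X atBot atBot ∧ ∀ t, HasDerivAt X (((1 + X t ^ 2) ^ (4 / 9 : ℝ))⁻¹) t := by
  set f : ℝ → ℝ := fun s => (1 + s ^ 2) ^ (4 / 9 : ℝ) with hf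
  have hfc : Continuous f := by
    apply Continuous.rpow_const (by fun_prop)
    intro x; right; norm_num
  have hf1 : ∀ x, 1 ≤ f x := fun x => Real.one_le_rpow (by nlinarith [sq_nonneg x]) (by norm_num)
  set G : ℝ → ℝ := fun x => ∫ s in (0 : ℝ)..x, f s with hG
  have hGd : ∀ x, HasDerivAt G (f x) x := fun x => intervalIntegral.integral_hasDerivAt_right
    (hfc.intervalIntegrable _ _) (hfc.stronglyMeasurableAtFilter _ _) hfc.continuousAt
  have hG0 : G 0 = 0 := by simp [hG]
  have hGm : StrictMono G := strictMono_of_deriv_pos (fun x => by rw [(hGd x).deriv]; linarith [hf1 x])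
  have hge : ∀ x, 0 ≤ x → x ≤ G x := by
    intro x hx
    have := growGe (s := 0) (t := x) (c := 1) (fun y _ => hGd y) (fun y _ => hf1 y) x ⟨hx, le_rfl⟩
    rw [hG0] at this; linarith
  have hle : ∀ x, x ≤ 0 → G x ≤ x := by
    intro x hx
    have := growGe (s := x) (t := 0) (c := 1) (fun y _ => hGd y) (fun y _ => hf1 y) 0 ⟨hx, le_rfl⟩
    rw [hG0] at this; linarith
  have hGt : Tendsto G atTop atTop := tendsto_atTop_mono' _ ((eventually_ge_atTop 0).mono hge) tendsto_id
  have hGb : Tendsto G atBot atBot := tendsto_atBot_mono' _ ((eventually_le_atBot 0).mono hle) tendsto_id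
  have hGc : Continuous G := continuous_iff_continuousAt.mpr (fun x => (hGd x).continuousAt)
  let E := hGm.orderIsoOfSurjective G (hGc.surjective hGt hGb)
  have hE : ∀ x, E x = G x := fun x => rfl
  refine ⟨G, E.symm, fun x => by rw [← hE]; exact E.symm_apply_apply x, hGb, E.symm.tendsto_atTop, E.symm.tendsto_atBot, ?_⟩
  intro t
  refine HasDerivAt.of_local_left_inverse (f := G) E.symm.continuous.continuousAt (hGd _) (by linarith [hf1 (E.symm t)]) ?_
  exact Eventually.of_forall (fun y => E.apply_symm_apply y)

lemma ratioBd {δ v u : ℝ} (hδ : 0 < δ) (hδ2 : δ ≤ 1 / 2) (hu : 0 < u) (h : |v - u| ≤ δ * u) :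
    |1 / u ^ 3 - 1 / v ^ 3| ≤ 14 * δ * (1 / u ^ 3) := by
  obtain ⟨h1, h2⟩ := abs_le.mp h
  have hv1 : (1 - δ) * u ≤ v := by linarith
  have hv2 : v ≤ (1 + δ) * u := by linarith
  have hd1 : 0 < 1 - δ := by linarith
  have hv : 0 < v := lt_of_lt_of_le (by positivity) hv1
  have e1 : 1 / v ^ 3 ≤ 1 / ((1 - δ) * u) ^ 3 := by gcongr
  have e2 : 1 / ((1 + δ) * u) ^ 3 ≤ 1 / v ^ 3 := by gcongr
  have e3 : 1 / ((1 - δ) * u) ^ 3 ≤ (1 + 14 * δ) * (1 / u ^ 3) := by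
    rw [mul_pow, ← one_div_mul_one_div]
    gcongr
    rw [div_le_iff₀ (by positivity)]
    have : (1 + 14 * δ) * (1 - δ) ^ 3 - 1 = δ * (1 - 2 * δ) * (11 - 17 * δ + 7 * δ ^ 2) := by ring
    have h3 : 0 ≤ δ * (1 - 2 * δ) * (11 - 17 * δ + 7 * δ ^ 2) := by
      have : 0 ≤ 1 - 2 * δ := by linarith
      have : 0 ≤ 11 - 17 * δ + 7 * δ ^ 2 := by nlinarith
      positivity
    linarith
  have e4 : (1 - 14 * δ) * (1 / u ^ 3) ≤ 1 / ((1 + δ) * u) ^ 3 := by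
    rw [mul_pow, ← one_div_mul_one_div]
    gcongr
    rw [le_div_iff₀ (by positivity)]
    have : 1 - (1 - 14 * δ) * (1 + δ) ^ 3 = δ * (11 + 39 * δ + 41 * δ ^ 2 + 14 * δ ^ 3) := by ring
    have h3 : 0 ≤ δ * (11 + 39 * δ + 41 * δ ^ 2 + 14 * δ ^ 3) := by positivity
    linarith
  rw [abs_le]
  exact ⟨by linarith, by linarith⟩

lemma asym {a : ℝ} {U Q R : ℝ → ℝ} (hd : ∀ y, HasDerivAt U (Q y) y ∧ HasDerivAt Q (R y) y ∧
      HasDerivAt R (y ^ 2 + a - 1 / (U y) ^ 3) y ∧ 0 < U y)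
    (hl : ∀ δ > 0, ∃ Y : ℝ, 1 ≤ Y ∧ ∀ y ≤ -Y, |U y - u0 y| ≤ δ * u0 y) {δ : ℝ} (hδ : 0 < δ) (hδ2 : δ ≤ 1 / 2) :
    ∃ p0 ≥ 1, ∀ p ≥ p0, |Q (-p ^ 9)| ≤ 177 * δ * p ^ 2 ∧ |R (-p ^ 9)| ≤ 57 * δ * p ^ 10 := by
  obtain ⟨Y, hY, hYb⟩ := hl δ hδ
  refine ⟨Y + 3 + 6 / δ + |a| / δ, ?_, ?_⟩
  · have : 0 ≤ 6 / δ := by positivity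
    have : 0 ≤ |a| / δ := by positivity
    linarith
  intro p hp
  have q1 : 0 ≤ 6 / δ := by positivity
  have q2 : 0 ≤ |a| / δ := by positivity
  have hp1 : 1 ≤ p := by linarith
  have hp0 : 0 < p := by linarith
  set x := p ^ 9 with hx
  have hpx : p ≤ x := le_self_pow₀ hp1 (by norm_num)
  have hx1 : 1 ≤ x := by linarith
  have hx0 : 0 < x := by linarith
  have r1 : 6 ≤ δ * x := by
    have : 6 / δ ≤ x := by linarith
    rw [div_le_iff₀ hδ] at this; linarith
  have r2 : |a| ≤ δ * x ^ 2 := by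
    have : |a| / δ ≤ x := by linarith
    rw [div_le_iff₀ hδ] at this
    have : δ * x ≤ δ * x ^ 2 := by gcongr; nlinarith
    linarith
  set l := (p ^ 8)⁻¹ with hl
  have hl0 : 0 < l := by positivity
  have hl1 : l ≤ 1 := inv_le_one_of_one_le₀ (one_le_pow₀ hp1)
  have hyneg : -x < 0 := by linarith
  have hu : 0 < u0 (-x) := u0_pos hyneg
  have hcx := u0_cube hyneg
  have hup : u0 (-x) * p ^ 6 = 1 := by
    have : (u0 (-x) * p ^ 6) ^ 3 = 1 := by
      rw [← hcx, hx]; ring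
    exact (pow_eq_one_iff_of_nonneg (by positivity) (by norm_num)).mp this
  have hz : ∀ z ∈ Icc (-x) (-x + 3 * l), |U z - u0 (-x)| ≤ 3 * δ * u0 (-x) ∧ |z ^ 2 + a - 1 / (U z) ^ 3| ≤ 15 * δ * x ^ 2 := by
    intro z hz
    have hzY : z ≤ -Y := by linarith [hz.2]
    have hz0 : z < 0 := by linarith
    have huz := u0_pos hz0
    have hcz := u0_cube hz0
    have hUz := hYb z hzY
    have hw : 0 < -z := by linarith
    have hzx : -z ≤ x := by linarith [hz.1]
    have g1 : u0 z * (-z) ≤ x * u0 (-x) := by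
      rw [← pow_le_pow_iff_left₀ (n := 3) (by positivity) (by positivity) (by norm_num)]
      have a1 : (u0 z * (-z)) ^ 3 = -z := by linear_combination (-z) * hcz
      have a2 : (x * u0 (-x)) ^ 3 = x := by linear_combination x * hcx
      rw [a1, a2]; exact hzx
    have g2 : x ≤ (1 + δ) * (-z) := by nlinarith [hz.2]
    have g3 : u0 z ≤ (1 + δ) * u0 (-x) := by
      have : u0 z * (-z) ≤ ((1 + δ) * u0 (-x)) * (-z) := by nlinarith
      exact le_of_mul_le_mul_right this hw
    have g4 : u0 (-x) ≤ u0 z := Real.rpow_le_rpow_of_nonpos hw (by simpa using hzx) (by norm_num)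
    constructor
    · have : |U z - u0 (-x)| ≤ |U z - u0 z| + |u0 z - u0 (-x)| := abs_sub_le _ _ _
      rw [abs_of_nonneg (by linarith : 0 ≤ u0 z - u0 (-x))] at this
      have : δ * u0 z ≤ δ * (2 * u0 (-x)) := by gcongr; nlinarith
      linarith
    · have h1 := ratioBd hδ hδ2 huz hUz
      have h2 : 1 / u0 z ^ 3 = z ^ 2 := by
        field_simp; linarith
      rw [h2] at h1
      have h3 : z ^ 2 ≤ x ^ 2 := by nlinarith
      have h4 : 14 * δ * z ^ 2 ≤ 14 * δ * x ^ 2 := by gcongr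
      have h5 : |z ^ 2 + a - 1 / (U z) ^ 3| ≤ |z ^ 2 - 1 / (U z) ^ 3| + |a| := by
        rw [show z ^ 2 + a - 1 / (U z) ^ 3 = (z ^ 2 - 1 / (U z) ^ 3) + a by ring]
        exact abs_add_le _ _
      linarith
  obtain ⟨i1, i2⟩ := interp (t := -x) (l := l) hl0 (fun y _ => (hd y).1) (fun y _ => (hd y).2.1) (fun y _ => (hd y).2.2.1)
    (fun z h => (hz z h).1) (fun z h => (hz z h).2)
  have hu2 : u0 (-x) = (p ^ 6)⁻¹ := eq_inv_of_mul_eq_one_left hup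
  have f1 : 14 * (3 * δ * u0 (-x)) / l + 9 * (15 * δ * x ^ 2) * l ^ 2 = 177 * δ * p ^ 2 := by
    rw [hu2, hl, hx]; field_simp; ring
  have f2 : 4 * (3 * δ * u0 (-x)) / l ^ 2 + 3 * (15 * δ * x ^ 2) * l = 57 * δ * p ^ 10 := by
    rw [hu2, hl, hx]; field_simp; ring
  rw [f1] at i1
  rw [f2] at i2
  exact ⟨i1, i2⟩

noncomputable def ee (x : ℝ) : ℝ := (1 + x ^ 2) ^ (-(1 / 18) : ℝ)

lemma ee_pos (x : ℝ) : 0 < ee x := Real.rpow_pos_of_pos (by positivity) _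

lemma ee_rel (x : ℝ) : ee x ^ 18 * (1 + x ^ 2) = 1 := by
  have h : 0 < 1 + x ^ 2 := by positivity
  unfold ee
  rw [← Real.rpow_natCast, ← Real.rpow_mul h.le]
  norm_num
  rw [Real.rpow_neg_one, inv_mul_cancel₀ h.ne']

lemma ee_8 (x : ℝ) : ((1 + x ^ 2) ^ (4 / 9 : ℝ))⁻¹ = ee x ^ 8 := by
  have h : 0 < 1 + x ^ 2 := by positivity
  unfold ee
  generalize 1 + x ^ 2 = b at *
  rw [← Real.rpow_natCast, ← Real.rpow_mul h.le, ← Real.rpow_neg h.le]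
  norm_num

lemma ee_d (x : ℝ) : HasDerivAt ee (-(1 / 9) * x * ee x ^ 19) x := by
  have h : 0 < 1 + x ^ 2 := by positivity
  have h1 : HasDerivAt (fun z : ℝ => 1 + z ^ 2) (2 * x) x := by
    refine (((hasDerivAt_id x).pow 2).const_add 1).congr_deriv ?_
    simp
  refine (h1.rpow_const (p := (-(1 / 18) : ℝ)) (Or.inl h.ne')).congr_deriv ?_
  rw [Real.rpow_sub_one h.ne']
  have h2 := ee_rel x
  change 2 * x * -(1 / 18) * (ee x / (1 + x ^ 2)) = _
  rw [div_eq_iff_mul_eq h.ne' |>.mpr (show ee x ^ 19 * (1 + x ^ 2) = ee x by linear_combination ee x * h2)]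
  ring

lemma ee_sqrt (x : ℝ) : √(1 + x ^ 2) = (ee x ^ 9)⁻¹ := by
  have h := ee_rel x
  have hp := ee_pos x
  rw [Real.sqrt_eq_iff_mul_self_eq (by positivity) (by positivity)]
  field_simp
  linear_combination h

lemma ee_cos (x : ℝ) : Real.cos (Real.arctan x) = ee x ^ 9 := by
  rw [Real.cos_arctan, ee_sqrt, one_div, inv_inv]

lemma ee_sin (x : ℝ) : Real.sin (Real.arctan x) = x * ee x ^ 9 := by
  rw [Real.sin_arctan, ee_sqrt, div_inv_eq_mul]

lemma ee_rpow (x : ℝ) (k : ℕ) (r : ℝ) (h : 9 * r = k) : (ee x ^ 9) ^ r = ee x ^ k := by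
  rw [← Real.rpow_natCast, ← Real.rpow_mul (ee_pos x).le, ← Real.rpow_natCast, ← h]
  norm_num

lemma solTrans {a : ℝ} {U Q R X : ℝ → ℝ} (hd : ∀ y, HasDerivAt U (Q y) y ∧ HasDerivAt Q (R y) y ∧
      HasDerivAt R (y ^ 2 + a - 1 / (U y) ^ 3) y ∧ 0 < U y)
    (hX : ∀ t, HasDerivAt X (((1 + X t ^ 2) ^ (4 / 9 : ℝ))⁻¹) t) :
    SolD a (fun t => ee (X t) ^ 12 * (1 + X t ^ 2) * U (-X t))
      (fun t => 2 / 3 * X t * ee (X t) ^ 20 * U (-X t) - ee (X t) ^ 2 * Q (-X t))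
      (fun t => (2 / 3 - 22 / 27 * X t ^ 2) * ee (X t) ^ 46 * U (-X t) - 4 / 9 * X t * ee (X t) ^ 28 * Q (-X t)
        + ee (X t) ^ 10 * R (-X t))
      (fun t => Real.arctan (X t)) := by
  intro t
  have kX : HasDerivAt X (ee (X t) ^ 8) t := ee_8 (X t) ▸ hX t
  have kE : HasDerivAt (fun t => ee (X t)) (-(1 / 9) * X t * ee (X t) ^ 19 * ee (X t) ^ 8) t := (ee_d (X t)).comp t kX
  have kU : HasDerivAt (fun t => U (-X t)) (Q (-X t) * -(ee (X t) ^ 8)) t := (hd (-X t)).1.comp t kX.neg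
  have kQ : HasDerivAt (fun t => Q (-X t)) (R (-X t) * -(ee (X t) ^ 8)) t := (hd (-X t)).2.1.comp t kX.neg
  have kR : HasDerivAt (fun t => R (-X t)) (((-X t) ^ 2 + a - 1 / (U (-X t)) ^ 3) * -(ee (X t) ^ 8)) t := (hd (-X t)).2.2.1.comp t kX.neg
  have hU := (hd (-X t)).2.2.2
  have hrel := ee_rel (X t)
  have he := ee_pos (X t)
  refine ⟨?_, ?_, ?_, ?_⟩
  · refine (((kE.pow 12).mul ((kX.pow 2).const_add 1)).mul kU).congr_deriv ?_
    simp only [Pi.pow_apply, Pi.mul_apply]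
    generalize ee (X t) = e at *
    generalize X t = x at *
    generalize U (-x) = u at *
    generalize Q (-x) = q at *
    push_cast
    linear_combination (-(4 / 3) * x * e ^ 20 * u - e ^ 2 * q) * hrel
  · refine ((((kX.const_mul (2 / 3)).mul (kE.pow 20)).mul kU).sub ((kE.pow 2).mul kQ)).congr_deriv ?_
    simp only [Pi.pow_apply, Pi.mul_apply]
    generalize ee (X t) = e at *
    generalize X t = x at *
    generalize U (-x) = u at *
    generalize Q (-x) = q at *
    generalize R (-x) = r at *
    push_cast
    linear_combination (-(2 / 3) * e ^ 28 * u) * hrel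
  · refine ((((((kX.pow 2).const_mul (22 / 27)).const_sub (2 / 3)).mul (kE.pow 46)).mul kU).sub (((kX.const_mul (4 / 9)).mul (kE.pow 28)).mul kQ) |>.add ((kE.pow 10).mul kR)).congr_deriv ?_
    simp only [Pi.pow_apply, Pi.mul_apply, dPsi, ee_cos, ee_sin]
    rw [ee_rpow _ 51 _ (by norm_num), ee_rpow _ 34 _ (by norm_num), ee_rpow _ 17 _ (by norm_num)]
    have hinv : 1 / (ee (X t) ^ 12 * (1 + X t ^ 2) * U (-X t)) ^ 3 = ee (X t) ^ 18 * (1 / (U (-X t)) ^ 3) := by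
      have h3 : (ee (X t) ^ 18 * (1 + X t ^ 2)) ^ 3 = 1 := by rw [hrel, one_pow]
      field_simp
      linear_combination (-1) * h3
    rw [hinv]
    generalize ee (X t) = e at *
    generalize X t = x at *
    generalize U (-x) = u at *
    generalize Q (-x) = q at *
    generalize R (-x) = r at *
    generalize 1 / u ^ 3 = w at *
    push_cast
    linear_combination (-720 / 243 * u * x * e ^ 54 - 2 / 3 * e ^ 36 * q - 1 + (16 / 3 * x - 224 / 27 * x ^ 3 * e ^ 18) * e ^ 54 * u) * hrel
  · refine (kX.arctan).congr_deriv ?_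
    rw [ee_cos, ee_rpow _ 26 _ (by norm_num)]
    have h : (0 : ℝ) < 1 + X t ^ 2 := by positivity
    field_simp
    linear_combination (-1) * hrel

lemma phi_cube {x u : ℝ} : (ee x ^ 12 * (1 + x ^ 2) * u) ^ 3 = (1 + x ^ 2) * u ^ 3 := by
  have h := ee_rel x
  have h2 : (ee x ^ 18 * (1 + x ^ 2)) ^ 2 = 1 := by rw [h, one_pow]
  linear_combination ((1 + x ^ 2) * u ^ 3) * h2

lemma ee_zero : Tendsto ee atTop (nhds 0) := by
  have h1 : Tendsto (fun x : ℝ => 1 + x ^ 2) atTop atTop :=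
    tendsto_atTop_add_const_left _ _ (tendsto_pow_atTop (by norm_num))
  exact (tendsto_rpow_neg_atTop (y := (1 / 18 : ℝ)) (by norm_num)).comp h1

lemma phi_lim {U : ℝ → ℝ} (hU : ∀ y, 0 < U y)
    (hl : ∀ δ > 0, ∃ Y : ℝ, 1 ≤ Y ∧ ∀ y ≤ -Y, |U y - u0 y| ≤ δ * u0 y) :
    Tendsto (fun x => ee x ^ 12 * (1 + x ^ 2) * U (-x)) atTop (nhds 1) := by
  have h1 : Tendsto (fun x => U (-x) / u0 (-x)) atTop (nhds 1) := by
    rw [Metric.tendsto_atTop]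
    intro ε hε
    obtain ⟨Y, hY, hY2⟩ := hl (ε / 2) (by positivity)
    refine ⟨Y, fun x hx => ?_⟩
    have hp : 0 < u0 (-x) := u0_pos (by linarith)
    have := hY2 (-x) (by linarith)
    rw [Real.dist_eq, div_sub_one hp.ne', abs_div, abs_of_pos hp, div_lt_iff₀ hp]
    nlinarith
  have h2 : Tendsto (fun x : ℝ => 1 + (x⁻¹) ^ 2) atTop (nhds 1) := by
    simpa using (tendsto_inv_atTop_zero (𝕜 := ℝ)).pow 2 |>.const_add 1
  have h3 : Tendsto (fun x => ((U (-x) / u0 (-x)) ^ 3 * (1 + (x⁻¹) ^ 2)) ^ (1 / 3 : ℝ)) atTop (nhds 1) := by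
    have := ((h1.pow 3).mul h2).rpow_const (p := (1 / 3 : ℝ)) (Or.inl (by norm_num))
    simpa using this
  refine h3.congr' ?_
  filter_upwards [eventually_gt_atTop 0] with x hx
  have hp : 0 < u0 (-x) := u0_pos (by linarith)
  have hc := u0_cube (y := -x) (by linarith)
  have hu := hU (-x)
  have he := ee_pos x
  have : (U (-x) / u0 (-x)) ^ 3 * (1 + (x⁻¹) ^ 2) = (ee x ^ 12 * (1 + x ^ 2) * U (-x)) ^ 3 := by
    rw [phi_cube]
    field_simp
    linear_combination (-(1 + x ^ 2)) * hc
  rw [this, ← Real.rpow_natCast, ← Real.rpow_mul (by positivity)]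
  norm_num

lemma xe_le (x : ℝ) : |x * ee x ^ 9| ≤ 1 := by
  rw [← ee_sin]; exact Real.abs_sin_le_one _

lemma qr_lim {a : ℝ} {U Q R : ℝ → ℝ} (hd : ∀ y, HasDerivAt U (Q y) y ∧ HasDerivAt Q (R y) y ∧
      HasDerivAt R (y ^ 2 + a - 1 / (U y) ^ 3) y ∧ 0 < U y)
    (hl : ∀ δ > 0, ∃ Y : ℝ, 1 ≤ Y ∧ ∀ y ≤ -Y, |U y - u0 y| ≤ δ * u0 y) :
    Tendsto (fun x => ee x ^ 2 * Q (-x)) atTop (nhds 0) ∧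
    Tendsto (fun x => ee x ^ 10 * R (-x)) atTop (nhds 0) := by
  have key : ∀ ε > 0, ∃ N : ℝ, ∀ x ≥ N, |ee x ^ 2 * Q (-x)| < ε ∧ |ee x ^ 10 * R (-x)| < ε := by
    intro ε hε
    obtain ⟨p0, hp0, h⟩ := asym hd hl (δ := min (1 / 2) (ε / 200)) (by positivity) (min_le_left _ _)
    have hδ : min (1 / 2) (ε / 200) ≤ ε / 200 := min_le_right _ _
    have hδ0 : 0 < min (1 / 2) (ε / 200) := by positivity
    generalize min (1 / 2) (ε / 200) = δ at *
    refine ⟨p0 ^ 9, fun x hx => ?_⟩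
    have hx0 : 0 < x := lt_of_lt_of_le (by positivity) hx
    obtain ⟨p, hp, rfl⟩ : ∃ p : ℝ, 0 < p ∧ p ^ 9 = x := by
      refine ⟨x ^ (1 / 9 : ℝ), by positivity, ?_⟩
      rw [← Real.rpow_natCast, ← Real.rpow_mul hx0.le]; norm_num
    have hpp : p0 ≤ p := le_of_pow_le_pow_left₀ (by norm_num) hp.le hx
    obtain ⟨h1, h2⟩ := h p hpp
    have he := ee_pos (p ^ 9)
    have hep : ee (p ^ 9) * p ≤ 1 := by
      have := ee_rel (p ^ 9)
      have h18 : (ee (p ^ 9) * p) ^ 18 ≤ 1 := by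
        have : 0 < ee (p ^ 9) ^ 18 := by positivity
        nlinarith [mul_pow (ee (p ^ 9)) p 18]
      exact (pow_le_one_iff_of_nonneg (by positivity) (by norm_num)).1 h18
    generalize ee (p ^ 9) = e at *
    have h2' : (e * p) ^ 2 ≤ 1 := pow_le_one₀ (by positivity) hep
    have h10' : (e * p) ^ 10 ≤ 1 := pow_le_one₀ (by positivity) hep
    constructor
    · rw [abs_mul, abs_of_pos (by positivity : 0 < e ^ 2)]
      calc e ^ 2 * |Q (-p ^ 9)| ≤ e ^ 2 * (177 * δ * p ^ 2) := by gcongr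
        _ = 177 * δ * (e * p) ^ 2 := by ring
        _ ≤ 177 * δ * 1 := by gcongr
        _ < ε := by linarith
    · rw [abs_mul, abs_of_pos (by positivity : 0 < e ^ 10)]
      calc e ^ 10 * |R (-p ^ 9)| ≤ e ^ 10 * (57 * δ * p ^ 10) := by gcongr
        _ = 57 * δ * (e * p) ^ 10 := by ring
        _ ≤ 57 * δ * 1 := by gcongr
        _ < ε := by linarith
  constructor <;>
  · rw [Metric.tendsto_atTop]
    intro ε hε
    obtain ⟨N, hN⟩ := key ε hε
    refine ⟨N, fun x hx => ?_⟩
    rw [Real.dist_eq, sub_zero]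
    first
      | exact (hN x hx).1
      | exact (hN x hx).2

lemma bdd_lim {f g : ℝ → ℝ} (hf : ∀ x, |f x| ≤ 1) (hg : Tendsto g atTop (nhds 0)) :
    Tendsto (fun x => f x * g x) atTop (nhds 0) := by
  refine squeeze_zero_norm (fun x => ?_) (by simpa using hg.norm)
  rw [norm_mul]
  calc ‖f x‖ * ‖g x‖ ≤ 1 * ‖g x‖ := by gcongr; exact hf x
    _ = ‖g x‖ := one_mul _

lemma w_lim {U Q : ℝ → ℝ}
    (hP : Tendsto (fun x => ee x ^ 12 * (1 + x ^ 2) * U (-x)) atTop (nhds 1))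
    (hQ : Tendsto (fun x => ee x ^ 2 * Q (-x)) atTop (nhds 0)) :
    Tendsto (fun x => 2 / 3 * x * ee x ^ 20 * U (-x) - ee x ^ 2 * Q (-x)) atTop (nhds 0) := by
  have h1 : Tendsto (fun x => 2 / 3 * (ee x ^ 17 * (ee x ^ 12 * (1 + x ^ 2) * U (-x)))) atTop (nhds 0) := by
    simpa using ((ee_zero.pow 17).mul hP).const_mul (2 / 3)
  have h2 := (bdd_lim xe_le h1).sub hQ
  rw [sub_zero] at h2
  refine h2.congr fun x => ?_
  linear_combination (2 / 3 * x * ee x ^ 20 * U (-x)) * ee_rel x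

lemma psi_lim {U Q R : ℝ → ℝ}
    (hP : Tendsto (fun x => ee x ^ 12 * (1 + x ^ 2) * U (-x)) atTop (nhds 1))
    (hQ : Tendsto (fun x => ee x ^ 2 * Q (-x)) atTop (nhds 0))
    (hR : Tendsto (fun x => ee x ^ 10 * R (-x)) atTop (nhds 0)) :
    Tendsto (fun x => (2 / 3 - 22 / 27 * x ^ 2) * ee x ^ 46 * U (-x) - 4 / 9 * x * ee x ^ 28 * Q (-x)
        + ee x ^ 10 * R (-x)) atTop (nhds 0) := by
  have h0 : Tendsto (fun x => 2 / 3 * (ee x ^ 52 * (ee x ^ 12 * (1 + x ^ 2) * U (-x)))) atTop (nhds 0) := by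
    simpa using ((ee_zero.pow 52).mul hP).const_mul (2 / 3)
  have h1 : Tendsto (fun x => 22 / 27 * (ee x ^ 34 * (ee x ^ 12 * (1 + x ^ 2) * U (-x)))) atTop (nhds 0) := by
    simpa using ((ee_zero.pow 34).mul hP).const_mul (22 / 27)
  have h2 : Tendsto (fun x => 4 / 9 * (ee x ^ 17 * (ee x ^ 2 * Q (-x)))) atTop (nhds 0) := by
    simpa using ((ee_zero.pow 17).mul hQ).const_mul (4 / 9)
  have h3 := ((h0.sub (bdd_lim xe_le (bdd_lim xe_le h1))).sub (bdd_lim xe_le h2)).add hR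
  simp only [sub_zero, add_zero] at h3
  refine h3.congr fun x => ?_
  linear_combination ((2 / 3 - 22 / 27 * x ^ 2) * ee x ^ 46 * U (-x)) * ee_rel x

lemma liminf_fin {a : ℝ} {U Q R G X : ℝ → ℝ} (hd : ∀ y, HasDerivAt U (Q y) y ∧ HasDerivAt Q (R y) y ∧
      HasDerivAt R (y ^ 2 + a - 1 / (U y) ^ 3) y ∧ 0 < U y)
    (hn : ∀ y, 2 + |a| ≤ y → ¬(0 < Q y ∧ 0 < R y ∧ 1 / (U y) ^ 3 < y ^ 2 + a))
    (hG : ∀ x, X (G x) = x) (hGb : Tendsto G atBot atBot) :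
    Filter.liminf (fun t : ℝ => ((ee (X t) ^ 12 * (1 + X t ^ 2) * U (-X t) : ℝ) : EReal)) atBot < ⊤ := by
  by_contra hc
  have hlt : ((2 : ℝ) : EReal) < Filter.liminf (fun t : ℝ => ((ee (X t) ^ 12 * (1 + X t ^ 2) * U (-X t) : ℝ) : EReal)) atBot := by
    rw [not_lt_top_iff.1 hc]; exact EReal.coe_lt_top _
  have hev := Filter.eventually_lt_of_lt_liminf hlt
  have hev2 := hGb.eventually hev
  obtain ⟨N, hN⟩ := Filter.eventually_atBot.1 hev2
  have hb : ∀ y, |N| ≤ y → 8 < (1 + y ^ 2) * U y ^ 3 := by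
    intro y hy
    have h1 := hN (-y) (by linarith [neg_abs_le N])
    rw [hG, EReal.coe_lt_coe_iff] at h1
    have h2 := phi_cube (x := -y) (u := U (- -y))
    have h3 : (2 : ℝ) ^ 3 < (ee (-y) ^ 12 * (1 + (-y) ^ 2) * U (- -y)) ^ 3 := pow_lt_pow_left₀ h1 (by norm_num) (by norm_num)
    rw [h2, neg_neg, neg_sq] at h3
    linarith
  have hT : ∀ y, |N| + 3 + |a| ≤ y → 1 ≤ y ^ 2 + a - 1 / (U y) ^ 3 := by
    intro y hy
    have hu := (hd y).2.2.2
    have h1 := hb y (by linarith [abs_nonneg a])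
    have h2 : 1 / (U y) ^ 3 ≤ (1 + y ^ 2) / 8 := by
      rw [div_le_div_iff₀ (by positivity) (by norm_num)]; linarith
    have := neg_abs_le a
    nlinarith [abs_nonneg N, abs_nonneg a]
  set s := |N| + 3 + |a| with hs
  have hRa := neg_abs_le (R s)
  have hQa := neg_abs_le (Q s)
  have hR0 := abs_nonneg (R s)
  have hQ0 := abs_nonneg (Q s)
  set h := 2 * |R s| + 2 * |Q s| + 2 with hh
  have := taylorGe (s := s) (t := s + h) (B := 1) (fun y _ => (hd y).1) (fun y _ => (hd y).2.1)
    (fun y _ => (hd y).2.2.1) (fun y hy => hT y hy.1.le) (s + h) ⟨by linarith, le_rfl⟩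
  obtain ⟨t1, t2, -⟩ := this
  rw [add_sub_cancel_left] at t1 t2
  refine hn (s + h) (by linarith [abs_nonneg N]) ⟨?_, by linarith, by linarith [hT (s + h) (by linarith)]⟩
  nlinarith


/-- there is a global solution of system (D) converging to `p₊` as `τ → +∞`,
with `θ → -π/2` as `τ → -∞` and `liminf_{τ→-∞} Φ(τ) < ∞`. -/
theorem exists_shooting_solution (a : ℝ) :
    ∃ Φ W Ψ θ : ℝ → ℝ, SolD a Φ W Ψ θ ∧
      (∀ τ : ℝ, 0 < Φ τ) ∧
      (∀ τ : ℝ, θ τ ∈ Set.Ioo (-(Real.pi / 2)) (Real.pi / 2)) ∧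
      Tendsto (fun τ => (Φ τ, W τ, Ψ τ, θ τ)) atTop
        (nhds ((1 : ℝ), (0 : ℝ), (0 : ℝ), Real.pi / 2)) ∧
      Tendsto θ atBot (nhds (-(Real.pi / 2))) ∧
      Filter.liminf (fun τ : ℝ => ((Φ τ : ℝ) : EReal)) atBot < ⊤ := by
  obtain ⟨U, Q, R, hd, hn, hl⟩ := limitSol a
  obtain ⟨G, X, hG, hGb, hXt, hXb, hX⟩ := timeChange
  obtain ⟨hQ, hR⟩ := qr_lim hd hl
  have hP := phi_lim (fun y => (hd y).2.2.2) hl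
  refine ⟨_, _, _, _, solTrans hd hX, fun t => ?_, fun t => ?_, ?_, ?_, liminf_fin hd hn hG hGb⟩
  · have := ee_pos (X t)
    have := (hd (-X t)).2.2.2
    positivity
  · exact Real.arctan_mem_Ioo _
  · exact (hP.comp hXt).prodMk_nhds (((w_lim hP hQ).comp hXt).prodMk_nhds
      (((psi_lim hP hQ hR).comp hXt).prodMk_nhds
        ((Real.tendsto_arctan_atTop.mono_right nhdsWithin_le_nhds).comp hXt)))
  · exact (Real.tendsto_arctan_atBot.mono_right nhdsWithin_le_nhds).comp hXb
end

section
/- Fix a ∈ ℝ and let (Φ, W, Ψ, θ) be a solution of system (D) defined for all τ ∈ ℝ with Φ(τ) > 0 and θ(τ) ∈ (−π/2, π/2) for all τ. Suppose liminf_{τ→−∞} Φ(τ) < ∞ and limsup_{τ→−∞} ( Φ(τ) + |W(τ)| + |Ψ(τ)| ) = ∞. Then there exist a strictly decreasing sequence (τₙ*) with τₙ* → −∞ and positive numbers εₙ such that, for every n, Φ(τₙ*) = max_{τ ∈ [τₙ* − εₙ, τₙ* + εₙ]} Φ(τ), and moreover limsup_{n→∞} Φ(τₙ*) = ∞. -/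
open Filter Set

lemma mvt_ge (f f' : ℝ → ℝ) (hf : ∀ t, HasDerivAt f (f' t) t) (x y c : ℝ) (hxy : x ≤ y)
    (hc : ∀ t, x ≤ t → t ≤ y → c ≤ f' t) : c * (y - x) ≤ f y - f x := by
  rcases hxy.eq_or_lt with h | h
  · subst h; simp
  · obtain ⟨z, hz, he⟩ := exists_hasDerivAt_eq_slope f f' h
      (fun t _ => (hf t).continuousAt.continuousWithinAt) (fun t _ => hf t)
    have h1 := hc z hz.1.le hz.2.le
    rw [he, le_div_iff₀ (by linarith)] at h1
    exact h1

lemma mvt_le (f f' : ℝ → ℝ) (hf : ∀ t, HasDerivAt f (f' t) t) (x y c : ℝ) (hxy : x ≤ y)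
    (hc : ∀ t, x ≤ t → t ≤ y → f' t ≤ c) : f y - f x ≤ c * (y - x) := by
  have := mvt_ge (fun t => - f t) (fun t => - f' t) (fun t => (hf t).neg) x y (-c) hxy
    (fun t h1 h2 => by have := hc t h1 h2; linarith)
  linarith

lemma abs_lem (Φ H G p q g : ℝ → ℝ) (K T : ℝ)
    (hΦ : ∀ t, HasDerivAt Φ (H t + p t) t) (hH : ∀ t, HasDerivAt H (G t + q t) t)
    (hG : ∀ t, HasDerivAt G (g t) t)
    (h0 : ∀ t, 0 < Φ t) (hK : ∀ t ≤ T, Φ t ≤ K) (hp : ∀ t ≤ T, |p t| ≤ K)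
    (hq : ∀ t ≤ T, |q t| ≤ K) (hg : ∀ t ≤ T, -K ≤ g t) :
    ∀ t ≤ T - 2, |G t| ≤ 7 * K ∧ |H t| ≤ 10 * K := by
  have hf : ∀ t, HasDerivAt (fun t => Φ (t + 1) - Φ t)
      ((H (t + 1) + p (t + 1)) - (H t + p t)) t := fun t =>
    ((hΦ (t + 1)).comp_add_const t 1).sub (hΦ t)
  have hK0 : 0 < K := (h0 T).trans_le (hK T le_rfl)
  have hGb : ∀ t ≤ T - 2, |G t| ≤ 7 * K := by
    intro t ht
    rw [abs_le]
    constructor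
    · have hGl : ∀ s, t - 2 ≤ s → s ≤ t → G s ≤ G t + 2 * K := by
        intro s h1 h2
        have := mvt_ge G g hG s t (-K) h2 (fun u _ hu => hg u (by linarith))
        nlinarith
      have h2 := mvt_le _ _ hf (t - 2) (t - 1) (G t + 5 * K) (by linarith) (by
        intro s h1 h2
        have := mvt_le H _ hH s (s + 1) (G t + 3 * K) (by linarith) (by
          intro u hu1 hu2
          have a1 := hGl u (by linarith) (by linarith)
          have a2 := abs_le.1 (hq u (by linarith))
          linarith)
        have a1 := abs_le.1 (hp s (by linarith))
        have a2 := abs_le.1 (hp (s + 1) (by linarith))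
        linarith)
      rw [show t - 2 + 1 = t - 1 by ring] at h2
      have b1 := h0 (t - 1 + 1)
      have b2 := h0 (t - 2)
      have b3 := hK (t - 1) (by linarith)
      linarith
    · have hGl : ∀ s, t ≤ s → s ≤ t + 2 → G t - 2 * K ≤ G s := by
        intro s h1 h2
        have := mvt_ge G g hG t s (-K) h1 (fun u _ hu => hg u (by linarith))
        nlinarith
      have h2 := mvt_ge _ _ hf t (t + 1) (G t - 5 * K) (by linarith) (by
        intro s h1 h2
        have := mvt_ge H _ hH s (s + 1) (G t - 3 * K) (by linarith) (by
          intro u hu1 hu2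
          have a1 := hGl u (by linarith) (by linarith)
          have a2 := abs_le.1 (hq u (by linarith))
          linarith)
        have a1 := abs_le.1 (hp s (by linarith))
        have a2 := abs_le.1 (hp (s + 1) (by linarith))
        linarith)
      have b1 := hK (t + 1 + 1) (by linarith)
      have b2 := hK t (by linarith)
      have b3 := h0 (t + 1)
      linarith
  intro t ht
  refine ⟨hGb t ht, ?_⟩
  have hHu : ∀ s, t - 1 ≤ s → s ≤ t → |H t - H s| ≤ 8 * K := by
    intro s h1 h2
    have e1 := mvt_ge H _ hH s t (-(8 * K)) h2 (by
      intro u _ hu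
      have a1 := abs_le.1 (hGb u (by linarith))
      have a2 := abs_le.1 (hq u (by linarith))
      linarith)
    have e2 := mvt_le H _ hH s t (8 * K) h2 (by
      intro u _ hu
      have a1 := abs_le.1 (hGb u (by linarith))
      have a2 := abs_le.1 (hq u (by linarith))
      linarith)
    rw [abs_le]
    constructor <;> nlinarith
  have b1 := hK t (by linarith)
  have b2 := hK (t - 1) (by linarith)
  have b3 := h0 t
  have b4 := h0 (t - 1)
  rw [abs_le]
  constructor
  · have := mvt_le Φ _ hΦ (t - 1) t (H t + 9 * K) (by linarith) (by
      intro u hu1 hu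
      have a1 := abs_le.1 (hHu u hu1 hu)
      have a2 := abs_le.1 (hp u (by linarith))
      linarith)
    linarith
  · have := mvt_ge Φ _ hΦ (t - 1) t (H t - 9 * K) (by linarith) (by
      intro u hu1 hu
      have a1 := abs_le.1 (hHu u hu1 hu)
      have a2 := abs_le.1 (hp u (by linarith))
      linarith)
    linarith

lemma seq_lem (Φ : ℝ → ℝ) (hc : Continuous Φ) (m : ℝ) (hm : ∀ T, ∃ t ≤ T, Φ t < m)
    (hM : ∀ M T, ∃ t ≤ T, M < Φ t) :
    ∃ τs : ℕ → ℝ, StrictAnti τs ∧ Tendsto τs atTop atBot ∧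
      (∃ ε : ℕ → ℝ, (∀ n, 0 < ε n) ∧
        ∀ n, IsMaxOn Φ (Set.Icc (τs n - ε n) (τs n + ε n)) (τs n)) ∧
      Filter.limsup (fun n : ℕ => ((Φ (τs n) : ℝ) : EReal)) atTop = ⊤ := by
  have key : ∀ N T : ℝ, ∃ t, t ≤ T ∧ N < Φ t ∧ ∃ ε, 0 < ε ∧
      IsMaxOn Φ (Set.Icc (t - ε) (t + ε)) t := by
    intro N T
    obtain ⟨b, hb, hbm⟩ := hm T
    obtain ⟨t1, ht1, hN⟩ := hM (max N m) b
    obtain ⟨a, ha, ham⟩ := hm t1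
    have hNN := (le_max_left N m).trans_lt hN
    have hNm := (le_max_right N m).trans_lt hN
    obtain ⟨t, htm, hmax⟩ := isCompact_Icc.exists_isMaxOn
      (⟨t1, ha, ht1⟩ : (Set.Icc a b).Nonempty) hc.continuousOn
    have h1 : Φ t1 ≤ Φ t := hmax ⟨ha, ht1⟩
    have hat : a < t := lt_of_le_of_ne htm.1 (by rintro rfl; linarith)
    have htb : t < b := lt_of_le_of_ne htm.2 (by rintro rfl; linarith)
    refine ⟨t, by linarith, by linarith, min (t - a) (b - t),
      lt_min (by linarith) (by linarith), ?_⟩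
    refine hmax.on_subset (Set.Icc_subset_Icc ?_ ?_)
    · linarith [min_le_left (t - a) (b - t)]
    · linarith [min_le_right (t - a) (b - t)]
  choose f hf1 hf2 e he hmx using key
  let pr : ℕ → ℝ × ℝ := fun n => Nat.rec ((0 : ℝ), (0 : ℝ))
    (fun k x => ((k : ℝ) + 1, min (f x.1 x.2) (-((k : ℝ) + 1)) - 1)) n
  have hp1 : ∀ n : ℕ, (pr n).1 = n := by
    intro n; cases n <;> simp [pr]
  have hp2 : ∀ n, (pr (n + 1)).2 = min (f (pr n).1 (pr n).2) (-((n : ℝ) + 1)) - 1 := fun n => rfl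
  have hp3 : ∀ n : ℕ, (pr n).2 ≤ -(n : ℝ) := by
    intro n; cases n with
    | zero => simp [pr]
    | succ k =>
      rw [hp2]; push_cast
      linarith [min_le_right (f (pr k).1 (pr k).2) (-((k : ℝ) + 1))]
  refine ⟨fun n => f (pr n).1 (pr n).2, ?_, ?_, ⟨fun n => e (pr n).1 (pr n).2,
    fun n => he _ _, fun n => hmx _ _⟩, ?_⟩
  · refine strictAnti_nat_of_succ_lt fun n => ?_
    have h1 := hf1 (pr (n + 1)).1 (pr (n + 1)).2
    have h2 := hp2 n
    have h3 := min_le_left (f (pr n).1 (pr n).2) (-((n : ℝ) + 1))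
    linarith
  · refine tendsto_atBot_mono (fun n => (hf1 _ _).trans (hp3 n)) ?_
    exact tendsto_neg_atTop_atBot.comp tendsto_natCast_atTop_atTop
  · refine Tendsto.limsup_eq ?_
    refine EReal.tendsto_coe_nhds_top_iff.2 ?_
    refine tendsto_atTop_mono (fun n => ?_) tendsto_natCast_atTop_atTop
    have := hf2 (pr n).1 (pr n).2
    have h3 := hp1 n
    show (n : ℝ) ≤ Φ (f (pr n).1 (pr n).2)
    linarith

lemma cpow_bd (x p : ℝ) (h0 : 0 < x) (h1 : x ≤ 1) (hp : 0 ≤ p) : |x ^ p| ≤ 1 := by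
  rw [abs_of_nonneg (Real.rpow_nonneg h0.le p)]
  exact Real.rpow_le_one h0.le h1 hp

lemma hD_gen (θ : ℝ → ℝ) (τ u v p : ℝ) (hc : 0 < Real.cos (θ τ))
    (hθ : HasDerivAt θ (Real.cos (θ τ) ^ ((26 : ℝ) / 9)) τ) :
    HasDerivAt (fun t => (u * Real.sin (θ t) ^ 2 + v) * Real.cos (θ t) ^ p)
      (2 * u * Real.sin (θ τ) * Real.cos (θ τ) * Real.cos (θ τ) ^ (p + 26 / 9)
        - p * (u * Real.sin (θ τ) ^ 2 + v) * Real.sin (θ τ) * Real.cos (θ τ) ^ (p + 17 / 9)) τ := by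
  have h := (((hθ.sin.pow 2).const_mul u).add_const v).mul (hθ.cos.rpow_const (p := p) (Or.inl hc.ne'))
  refine h.congr_deriv ?_
  have e1 : Real.cos (θ τ) ^ (p + 26 / 9) = Real.cos (θ τ) ^ p * Real.cos (θ τ) ^ ((26:ℝ)/9) :=
    Real.rpow_add hc _ _
  have e2 : Real.cos (θ τ) ^ (p + 17 / 9)
      = Real.cos (θ τ) ^ (p - 1) * Real.cos (θ τ) ^ ((26:ℝ)/9) := by
    rw [← Real.rpow_add hc]; congr 1; ring
  rw [e1, e2]
  simp only [Pi.pow_apply]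
  ring

lemma hC_der (θ : ℝ → ℝ) (τ : ℝ) (hc : 0 < Real.cos (θ τ))
    (hθ : HasDerivAt θ (Real.cos (θ τ) ^ ((26 : ℝ) / 9)) τ) :
    HasDerivAt (fun t => (2 / 3) * Real.sin (θ t) * Real.cos (θ t) ^ ((17 : ℝ) / 9))
      ((2 / 3 - 52 / 27 * Real.sin (θ τ) ^ 2) * Real.cos (θ τ) ^ ((34 : ℝ) / 9)) τ := by
  have h := (hθ.sin.const_mul (2/3)).mul (hθ.cos.rpow_const (p := (17:ℝ)/9) (Or.inl hc.ne'))
  refine h.congr_deriv ?_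
  have e1 : Real.cos (θ τ) ^ ((34 : ℝ) / 9)
      = Real.cos (θ τ) ^ ((17 : ℝ) / 9 - 1) * Real.cos (θ τ) ^ ((26:ℝ)/9) := by
    rw [← Real.rpow_add hc]; congr 1; norm_num
  have e2 : Real.cos (θ τ) ^ ((17 : ℝ) / 9)
      = Real.cos (θ τ) ^ ((17 : ℝ) / 9 - 1) * Real.cos (θ τ) := by
    rw [← Real.rpow_add_one hc.ne']; congr 1; norm_num
  have e3 := Real.sin_sq_add_cos_sq (θ τ)
  rw [e1, e2]
  have e4 : Real.cos (θ τ) ^ 2 = 1 - Real.sin (θ τ) ^ 2 := by linarith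
  linear_combination (2 / 3 * Real.cos (θ τ) ^ ((17 : ℝ) / 9 - 1) * Real.cos (θ τ) ^ ((26:ℝ)/9)) * e4

lemma abs_mul_bd {x y X Y : ℝ} (hx : |x| ≤ X) (hy : |y| ≤ Y) : |x * y| ≤ X * Y := by
  rw [abs_mul]; exact mul_le_mul hx hy (abs_nonneg _) ((abs_nonneg _).trans hx)

lemma not_bdd (a : ℝ) (Φ W Ψ θ : ℝ → ℝ)
    (hsol : SolD a Φ W Ψ θ)
    (hΦpos : ∀ τ : ℝ, 0 < Φ τ)
    (hθ : ∀ τ : ℝ, θ τ ∈ Set.Ioo (-(Real.pi / 2)) (Real.pi / 2))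
    (M T : ℝ) (hM : ∀ t ≤ T, Φ t ≤ M) :
    ∃ L, ∀ t ≤ T - 2, Φ t + |W t| + |Ψ t| ≤ L := by
  have hc : ∀ t, 0 < Real.cos (θ t) := fun t => Real.cos_pos_of_mem_Ioo (hθ t)
  have hcp : ∀ t p, 0 ≤ p → |Real.cos (θ t) ^ (p : ℝ)| ≤ 1 := fun t p hp =>
    cpow_bd _ _ (hc t) (Real.cos_le_one _) hp
  have hs : ∀ t, |Real.sin (θ t)| ≤ 1 := fun t => Real.abs_sin_le_one _
  have hs2 : ∀ t, |Real.sin (θ t) ^ 2| ≤ 1 := fun t => by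
    rw [abs_pow]; exact pow_le_one₀ (abs_nonneg _) (hs t)
  have hs3 : ∀ t, |Real.sin (θ t) ^ 3| ≤ 1 := fun t => by
    rw [abs_pow]; exact pow_le_one₀ (abs_nonneg _) (hs t)
  have hcc : ∀ t, |Real.cos (θ t)| ≤ 1 := fun t => Real.abs_cos_le_one _
  have hc2 : ∀ t, |Real.cos (θ t) ^ 2| ≤ 1 := fun t => by
    rw [abs_pow]; exact pow_le_one₀ (abs_nonneg _) (hcc t)
  let C : ℝ → ℝ := fun t => (2 / 3) * Real.sin (θ t) * Real.cos (θ t) ^ ((17 : ℝ) / 9)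
  let C1 : ℝ → ℝ := fun t =>
    (2 / 3 - 52 / 27 * Real.sin (θ t) ^ 2) * Real.cos (θ t) ^ ((34 : ℝ) / 9)
  let D : ℝ → ℝ := fun t =>
    (364 / 81 * Real.sin (θ t) ^ 2 + (-16 / 9)) * Real.cos (θ t) ^ ((34 : ℝ) / 9)
  let D1 : ℝ → ℝ := fun t =>
    2 * (364 / 81) * Real.sin (θ t) * Real.cos (θ t) * Real.cos (θ t) ^ ((34 : ℝ) / 9 + 26 / 9)
        - (34 : ℝ) / 9 * (364 / 81 * Real.sin (θ t) ^ 2 + (-16 / 9)) * Real.sin (θ t)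
          * Real.cos (θ t) ^ ((34 : ℝ) / 9 + 17 / 9)
  let A : ℝ → ℝ := fun t =>
    ((16 / 3) * Real.sin (θ t) - (224 / 27) * Real.sin (θ t) ^ 3) * Real.cos (θ t) ^ ((17 : ℝ) / 3)
  have hC : ∀ t, HasDerivAt C (C1 t) t := fun t => hC_der θ t (hc t) (hsol t).2.2.2
  have hD : ∀ t, HasDerivAt D (D1 t) t := fun t =>
    hD_gen θ t (364/81) (-16/9) (34/9) (hc t) (hsol t).2.2.2
  have bC : ∀ t, |C t| ≤ 1 := fun t => by
    have := abs_mul_bd (abs_mul_bd (le_refl |(2/3 : ℝ)|) (hs t)) (hcp t (17/9) (by norm_num))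
    refine this.trans ?_
    norm_num [abs_of_pos]
  have bC1 : ∀ t, |C1 t| ≤ 10 := fun t => by
    have h1 : |2 / 3 - 52 / 27 * Real.sin (θ t) ^ 2| ≤ 10 := by
      have := abs_le.1 (hs2 t); rw [abs_le]; constructor <;> linarith
    have := abs_mul_bd h1 (hcp t (34/9) (by norm_num))
    exact this.trans (by norm_num)
  have bq : ∀ t, |364 / 81 * Real.sin (θ t) ^ 2 + (-16 / 9)| ≤ 10 := fun t => by
    have := abs_le.1 (hs2 t); rw [abs_le]; constructor <;> linarith
  have bD : ∀ t, |D t| ≤ 10 := fun t => by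
    have := abs_mul_bd (bq t) (hcp t (34/9) (by norm_num))
    exact this.trans (by norm_num)
  have bA : ∀ t, |A t| ≤ 20 := fun t => by
    have h1 : |(16 / 3) * Real.sin (θ t) - (224 / 27) * Real.sin (θ t) ^ 3| ≤ 20 := by
      have := abs_le.1 (hs t)
      have := abs_le.1 (hs3 t); rw [abs_le]; constructor <;> linarith
    have := abs_mul_bd h1 (hcp t (17/3) (by norm_num))
    exact this.trans (by norm_num)
  have bD1 : ∀ t, |D1 t| ≤ 100 := fun t => by
    have h1 := abs_mul_bd (abs_mul_bd (abs_mul_bd (le_refl |(2 * (364 / 81) : ℝ)|) (hs t)) (hcc t))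
      (hcp t (34/9 + 26/9) (by norm_num))
    have h2 := abs_mul_bd (abs_mul_bd (abs_mul_bd (le_refl |(34/9 : ℝ)|) (bq t)) (hs t))
      (hcp t (34/9 + 17/9) (by norm_num))
    rw [abs_of_pos (by norm_num : (0:ℝ) < 2 * (364 / 81))] at h1
    rw [abs_of_pos (by norm_num : (0:ℝ) < 34/9)] at h2
    refine (abs_sub _ _).trans ?_
    linarith
  have hM0 : 0 < M := (hΦpos T).trans_le (hM T le_rfl)
  have bM : ∀ t ≤ T, |Φ t| ≤ M := fun t ht => by
    rw [abs_of_pos (hΦpos t)]; exact hM t ht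
  let K : ℝ := 1 + |a - 1| + 120 * M
  have hKa := abs_nonneg (a - 1)
  have main := abs_lem Φ (fun t => W t + C t * Φ t) (fun t => Ψ t + C t * W t + D t * Φ t)
    (fun t => - (C t * Φ t)) (fun t => (C1 t - D t) * Φ t)
    (fun t => 1 / Φ t ^ 3 - 1 - (a - 1) * Real.cos (θ t) ^ 2 - (A t - D1 t) * Φ t) K T
    (fun t => (hsol t).1.congr_deriv (by ring))
    (fun t => ((hsol t).2.1.add ((hC t).mul (hsol t).1)).congr_deriv (by ring))
    (fun t => (((hsol t).2.2.1.add ((hC t).mul (hsol t).2.1)).add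
      ((hD t).mul (hsol t).1)).congr_deriv (by
        simp only [dPsi, A, C, C1, D]; ring))
    hΦpos
    (fun t ht => by have := hM t ht; simp only [K]; linarith)
    (fun t ht => by
      rw [abs_neg]
      have := abs_mul_bd (bC t) (bM t ht); simp only [K]; linarith)
    (fun t ht => by
      have := abs_mul_bd ((abs_sub _ _).trans (add_le_add (bC1 t) (bD t))) (bM t ht)
      simp only [K]; linarith)
    (fun t ht => by
      have h1 := abs_mul_bd ((abs_sub _ _).trans (add_le_add (bA t) (bD1 t))) (bM t ht)
      have h2 := abs_mul_bd (le_refl |a - 1|) (hc2 t)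
      have h3 : 0 < 1 / Φ t ^ 3 := by have := hΦpos t; positivity
      have h1 := abs_le.1 h1
      have h2 := abs_le.1 h2
      simp only [K]; linarith)
  refine ⟨M + 11 * K + (7 * K + 11 * K + 10 * M), fun t ht => ?_⟩
  obtain ⟨h1, h2⟩ := main t ht
  have hMt := bM t (by linarith)
  have c1 := abs_mul_bd (bC t) hMt
  have hKM : M ≤ K := by simp only [K]; linarith
  have hW : |W t| ≤ 11 * K := by
    have h2 := abs_le.1 h2
    have c1 := abs_le.1 c1
    rw [abs_le]; constructor <;> linarith
  have hP : |Ψ t| ≤ 7 * K + 11 * K + 10 * M := by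
    have h1 := abs_le.1 h1
    have c2 := abs_le.1 (abs_mul_bd (bC t) hW)
    have c3 := abs_le.1 (abs_mul_bd (bD t) hMt)
    rw [abs_le]; constructor <;> linarith
  have := hM t (by linarith)
  linarith

/-- existence of a sequence of local maxima going to `-∞` with unbounded
maximal values. -/
theorem exists_sequence_of_maxima (a : ℝ) (Φ W Ψ θ : ℝ → ℝ)
    (hsol : SolD a Φ W Ψ θ)
    (hΦpos : ∀ τ : ℝ, 0 < Φ τ)
    (hθ : ∀ τ : ℝ, θ τ ∈ Set.Ioo (-(Real.pi / 2)) (Real.pi / 2))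
    (hliminf : Filter.liminf (fun τ : ℝ => ((Φ τ : ℝ) : EReal)) atBot < ⊤)
    (hlimsup : Filter.limsup (fun τ : ℝ => ((Φ τ + |W τ| + |Ψ τ| : ℝ) : EReal)) atBot = ⊤) :
    ∃ τs : ℕ → ℝ, StrictAnti τs ∧ Tendsto τs atTop atBot ∧
      (∃ ε : ℕ → ℝ, (∀ n, 0 < ε n) ∧
        ∀ n, IsMaxOn Φ (Set.Icc (τs n - ε n) (τs n + ε n)) (τs n)) ∧
      Filter.limsup (fun n : ℕ => ((Φ (τs n) : ℝ) : EReal)) atTop = ⊤ := by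
  have hcont : Continuous Φ :=
    continuous_iff_continuousAt.2 fun t => (hsol t).1.continuousAt
  obtain ⟨m, hm1, hm2⟩ := EReal.lt_iff_exists_real_btwn.1 hliminf
  have hfr := frequently_lt_of_liminf_lt (by isBoundedDefault) hm1
  refine seq_lem Φ hcont m ?_ ?_
  · intro T
    obtain ⟨t, ht, h⟩ := (frequently_atBot.1 hfr) T
    exact ⟨t, ht, EReal.coe_lt_coe_iff.1 h⟩
  · intro M T
    by_contra hcon
    push Not at hcon
    obtain ⟨L, hL⟩ := not_bdd a Φ W Ψ θ hsol hΦpos hθ M T hcon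
    have : Filter.limsup (fun τ : ℝ => ((Φ τ + |W τ| + |Ψ τ| : ℝ) : EReal)) atBot ≤ (L : EReal) := by
      refine limsup_le_of_le (by isBoundedDefault) ?_
      filter_upwards [eventually_le_atBot (T - 2)] with t ht
      exact EReal.coe_le_coe_iff.2 (hL t ht)
    rw [hlimsup] at this
    exact absurd this (not_le.2 (EReal.coe_lt_top L))
end

section
/- Fix a ∈ ℝ and let (Φ, W, Ψ, θ) be a solution of system (D) defined for all τ ∈ ℝ with Φ(τ) > 0 and θ(τ) ∈ (−π/2, π/2) for all τ. Suppose liminf_{τ→−∞} Φ(τ) < ∞ and limsup_{τ→−∞} ( Φ(τ) + |W(τ)| + |Ψ(τ)| ) = ∞. Then there exists a strictly decreasing sequence (τₙ) with τₙ → −∞ such that limsup_{n→∞} Φ(τₙ) ≤ 1 and, for every n, W(τₙ) = 0 and Ψ(τₙ) ≥ 0. -/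
open Filter Set

lemma aux_top (x f p g : ℝ → ℝ) (hx : Tendsto x atBot atBot)
    (hxd : ∀ τ, HasDerivAt x (p τ) τ) (hp : ∀ τ, 0 < p τ)
    (hf : ∀ τ, HasDerivAt f (p τ * g τ) τ) (hg : ∀ᶠ τ in atBot, g τ ≤ -1) :
    Tendsto f atBot atTop := by
  obtain ⟨T, hT⟩ := eventually_atBot.1 hg
  have hanti : AntitoneOn (fun τ => f τ + x τ) (Set.Iic T) := by
    apply antitoneOn_of_deriv_nonpos (convex_Iic T)
    · exact fun τ _ => ((hf τ).fun_add (hxd τ)).continuousAt.continuousWithinAt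
    · exact fun τ _ => ((hf τ).fun_add (hxd τ)).differentiableAt.differentiableWithinAt
    · intro τ hτ
      rw [interior_Iic] at hτ
      have e : deriv (fun τ => f τ + x τ) τ = p τ * g τ + p τ := ((hf τ).fun_add (hxd τ)).deriv
      rw [e]
      nlinarith [hT τ (le_of_lt hτ), hp τ]
  have h1 : Tendsto (fun τ => (f T + x T) + -x τ) atBot atTop :=
    tendsto_atTop_add_const_left _ _ (tendsto_neg_atBot_atTop.comp hx)
  refine tendsto_atTop_mono' _ ?_ h1
  filter_upwards [eventually_le_atBot T] with τ hτ
  have := hanti (Set.mem_Iic.2 hτ) (Set.mem_Iic.2 le_rfl) hτ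
  simp only at this
  linarith

lemma aux_bot (x f p g : ℝ → ℝ) (hx : Tendsto x atBot atBot)
    (hxd : ∀ τ, HasDerivAt x (p τ) τ) (hp : ∀ τ, 0 < p τ)
    (hf : ∀ τ, HasDerivAt f (p τ * g τ) τ) (hg : ∀ᶠ τ in atBot, 1 ≤ g τ) :
    Tendsto f atBot atBot := by
  have := aux_top x (fun τ => - f τ) p (fun τ => - g τ) hx hxd hp
    (fun τ => by simpa using (hf τ).fun_neg) (by filter_upwards [hg] with τ h; linarith)
  have h2 := tendsto_neg_atTop_atBot.comp this
  simpa [Function.comp_def] using h2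

/-- Change of variables `x = tan θ`, `H = (cos θ)^(2/3) Φ`. -/
lemma change_vars (a : ℝ) (Φ W Ψ θ : ℝ → ℝ)
    (hsol : SolD a Φ W Ψ θ)
    (hΦpos : ∀ τ : ℝ, 0 < Φ τ)
    (hθ : ∀ τ : ℝ, θ τ ∈ Set.Ioo (-(Real.pi / 2)) (Real.pi / 2)) :
    ∃ x p H H1 H2 : ℝ → ℝ, Tendsto x atBot atBot ∧ (∀ τ, HasDerivAt x (p τ) τ) ∧
      (∀ τ, 0 < p τ) ∧ (∀ τ, 0 < H τ) ∧ (∀ τ, H τ ≤ Φ τ) ∧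
      (∀ τ, HasDerivAt H (p τ * H1 τ) τ) ∧ (∀ τ, HasDerivAt H1 (p τ * H2 τ) τ) ∧
      (∀ τ, HasDerivAt H2 (p τ * ((1 + x τ ^ 2) * (1 / Φ τ ^ 3 - 1) - (a - 1))) τ) ∧
      (∀ τ, Real.cos (θ τ) ^ 2 * (1 + x τ ^ 2) = 1) := by
  have hc : ∀ τ, 0 < Real.cos (θ τ) := fun τ => Real.cos_pos_of_mem_Ioo (hθ τ)
  obtain ⟨q, hq⟩ : ∃ q : ℝ → ℝ, q = fun τ => Real.cos (θ τ) ^ ((1 : ℝ) / 9) := ⟨_, rfl⟩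
  have hqpos : ∀ τ, 0 < q τ := fun τ => by rw [hq]; exact Real.rpow_pos_of_pos (hc τ) _
  have hqn : ∀ (n : ℕ) τ, Real.cos (θ τ) ^ ((n : ℝ) / 9) = q τ ^ n := fun n τ => by
    rw [hq]; simp only
    rw [← Real.rpow_natCast, ← Real.rpow_mul (hc τ).le]; congr 1; ring
  have hq9 : ∀ τ, Real.cos (θ τ) = q τ ^ 9 := fun τ => by
    rw [← hqn]; norm_num
  obtain ⟨s, hs⟩ : ∃ s : ℝ → ℝ, s = fun τ => Real.sin (θ τ) := ⟨_, rfl⟩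
  have hsq : ∀ τ, s τ ^ 2 = 1 - q τ ^ 18 := fun τ => by
    have := Real.sin_sq_add_cos_sq (θ τ)
    rw [hq9] at this; rw [hs]; simp only; linear_combination this
  have hθd : ∀ τ, HasDerivAt θ (q τ ^ 26) τ := fun τ => by
    have := (hsol τ).2.2.2
    rw [← hqn]; exact_mod_cast this
  have hsd : ∀ τ, HasDerivAt s (q τ ^ 35) τ := fun τ => by
    have := (hθd τ).sin
    rw [hq9] at this; rw [hs]; convert this using 1; ring
  have hqd : ∀ τ, HasDerivAt q (-(1/9) * s τ * q τ ^ 18) τ := fun τ => by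
    have := ((hθd τ).cos).rpow_const (p := (1:ℝ)/9) (Or.inl (hc τ).ne')
    have e : Real.cos (θ τ) ^ ((1:ℝ)/9 - 1) = (q τ ^ 8)⁻¹ := by
      rw [← hqn, ← Real.rpow_neg (hc τ).le]; congr 1; norm_num
    rw [e, ← hq] at this
    convert this using 1
    have := (hqpos τ).ne'
    rw [hs]; field_simp
  have hΨd : ∀ τ, HasDerivAt Ψ (1 / Φ τ ^ 3 - 1 - (a - 1) * q τ ^ 18 -
      (((16 / 3) * s τ - (224 / 27) * s τ ^ 3) * q τ ^ 51 * Φ τ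
      + ((208 / 81) * s τ ^ 2 - 10 / 9) * q τ ^ 34 * W τ
      + (2 / 3) * s τ * q τ ^ 17 * Ψ τ)) τ := fun τ => by
    have := (hsol τ).2.2.1
    convert this using 1
    unfold dPsi
    rw [show (17:ℝ)/3 = ((51:ℕ):ℝ)/9 by norm_num, show (34:ℝ)/9 = ((34:ℕ):ℝ)/9 by norm_num,
      show (17:ℝ)/9 = ((17:ℕ):ℝ)/9 by norm_num, hqn, hqn, hqn, hq9, hs]
    ring
  have hxd : ∀ τ, HasDerivAt (fun τ => s τ / q τ ^ 9) (q τ ^ 8) τ := fun τ => by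
    have h0 := (hqpos τ).ne'
    refine ((hsd τ).fun_div ((hqd τ).fun_pow 9) (pow_ne_zero 9 h0)).congr_deriv ?_
    symm
    beta_reduce
    have := hsq τ
    rw [eq_div_iff (by positivity)]
    push_cast
    linear_combination (-1) * q τ ^ 26 * this
  have hx1 : ∀ τ, q τ ^ 18 * (1 + (s τ / q τ ^ 9) ^ 2) = 1 := fun τ => by
    have h0 := (hqpos τ).ne'
    have := hsq τ
    field_simp
    linear_combination this
  have hq1 : ∀ τ, q τ ≤ 1 := fun τ => by
    rw [hq]; exact Real.rpow_le_one (hc τ).le (Real.cos_le_one _) (by norm_num)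
  refine ⟨fun τ => s τ / q τ ^ 9, fun τ => q τ ^ 8, fun τ => q τ ^ 6 * Φ τ,
    fun τ => W τ / q τ ^ 2 - 2/3 * s τ * q τ ^ 15 * Φ τ,
    fun τ => Ψ τ / q τ ^ 10 - 4/9 * s τ * q τ ^ 7 * W τ - 2/3 * q τ ^ 42 * Φ τ
      + 10/9 * s τ ^ 2 * q τ ^ 24 * Φ τ, ?_, hxd, ?_, ?_, ?_, ?_, ?_, ?_, ?_⟩
  · have hmono : Monotone (fun τ => (s τ / q τ ^ 9) + (s τ / q τ ^ 9) ^ 3 / 3 - τ) := by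
      have hd : ∀ τ, HasDerivAt (fun τ => (s τ / q τ ^ 9) + (s τ / q τ ^ 9) ^ 3 / 3 - τ)
          (q τ ^ 8 * (1 + (s τ / q τ ^ 9) ^ 2) - 1) τ := fun τ => by
        refine (((hxd τ).fun_add (((hxd τ).fun_pow 3).div_const 3)).fun_sub (hasDerivAt_id' τ)).congr_deriv ?_
        symm
        beta_reduce
        push_cast; ring
      apply monotone_of_hasDerivAt_nonneg hd
      intro τ
      have h1 := hx1 τ
      have h2 : q τ ^ 18 ≤ q τ ^ 8 := pow_le_pow_of_le_one (hqpos τ).le (hq1 τ) (by norm_num)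
      have h3 : 0 ≤ 1 + (s τ / q τ ^ 9) ^ 2 := by positivity
      simp only [Pi.zero_apply]
      linarith [mul_le_mul_of_nonneg_right h2 h3]
    rw [tendsto_atBot]
    intro K
    have := (tendsto_atBot_add_const_right atBot
      ((s 0 / q 0 ^ 9) + (s 0 / q 0 ^ 9) ^ 3 / 3) tendsto_id).eventually_lt_atBot (K + K^3/3)
    filter_upwards [this, eventually_le_atBot 0] with τ h1 h2
    have h3 := hmono h2
    simp only [id] at h1 h3
    by_contra! hcon
    have : K ^ 3 ≤ (s τ / q τ ^ 9) ^ 3 := (Odd.strictMono_pow (by decide : Odd 3)).monotone hcon.le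
    linarith
  · exact fun τ => pow_pos (hqpos τ) 8
  · exact fun τ => mul_pos (pow_pos (hqpos τ) 6) (hΦpos τ)
  · exact fun τ => mul_le_of_le_one_left (hΦpos τ).le (pow_le_one₀ (hqpos τ).le (hq1 τ))
  · intro τ
    have h0 := (hqpos τ).ne'
    refine (((hqd τ).fun_pow 6).fun_mul (hsol τ).1).congr_deriv ?_
    symm
    beta_reduce
    field_simp; push_cast; ring
  · intro τ
    have h0 := (hqpos τ).ne'
    refine (((hsol τ).2.1.fun_div ((hqd τ).fun_pow 2) (pow_ne_zero 2 h0)).fun_sub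
      ((((hsd τ).const_mul (2/3)).fun_mul ((hqd τ).fun_pow 15)).fun_mul (hsol τ).1)).congr_deriv ?_
    symm
    beta_reduce
    field_simp; push_cast; ring
  · intro τ
    have h0 := (hqpos τ).ne'
    have hP := (hΦpos τ).ne'
    have hx2 : 1 + (s τ / q τ ^ 9) ^ 2 = 1 / q τ ^ 18 := by
      rw [eq_div_iff (pow_ne_zero _ h0)]; linarith [hx1 τ]
    have h3 := hsq τ
    refine ((((((hΨd τ).fun_div ((hqd τ).fun_pow 10) (pow_ne_zero 10 h0)).fun_sub
      ((((hsd τ).const_mul (4/9)).fun_mul ((hqd τ).fun_pow 7)).fun_mul (hsol τ).2.1)).fun_sub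
      ((((hqd τ).fun_pow 42).const_mul (2/3)).fun_mul (hsol τ).1)).fun_add
      (((((hsd τ).fun_pow 2).const_mul (10/9)).fun_mul ((hqd τ).fun_pow 24)).fun_mul (hsol τ).1))).congr_deriv ?_
    symm
    beta_reduce
    rw [hx2]
    generalize 1 / Φ τ ^ 3 = F
    have h4 : s τ ^ 3 = s τ * (1 - q τ ^ 18) := by rw [← h3]; ring
    field_simp
    push_cast
    ring_nf
    simp only [h3, h4]
    ring
  · intro τ
    have := hx1 τ
    simp only
    rw [hq9]; linear_combination this

/-- interpolation bound on a unit interval -/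
lemma interp_s12 (Φ W Ψ D : ℝ → ℝ) (h1 : ∀ τ, HasDerivAt Φ (W τ) τ)
    (h2 : ∀ τ, HasDerivAt W (Ψ τ) τ) (h3 : ∀ τ, HasDerivAt Ψ (D τ) τ) (B t : ℝ)
    (hΦ0 : ∀ τ ∈ Set.Icc t (t+1), 0 < Φ τ) (hΦ2 : ∀ τ ∈ Set.Icc t (t+1), Φ τ ≤ 2)
    (hD : ∀ τ ∈ Set.Icc t (t+1), |D τ| ≤ B + (|W τ| + |Ψ τ|) / 4) :
    |W t| + |Ψ t| ≤ 2 * (100 + 2 * B) := by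
  have cW : Continuous W := continuous_iff_continuousAt.2 fun τ => (h2 τ).continuousAt
  have cΨ : Continuous Ψ := continuous_iff_continuousAt.2 fun τ => (h3 τ).continuousAt
  have mvt : ∀ (f f' : ℝ → ℝ), (∀ τ, HasDerivAt f (f' τ) τ) → ∀ u v, u < v →
      ∃ ξ ∈ Set.Ioo u v, f' ξ * (v - u) = f v - f u := fun f f' hf u v huv => by
    obtain ⟨ξ, hξ, e⟩ := exists_hasDerivAt_eq_slope f f' huv
      (fun τ _ => (hf τ).continuousAt.continuousWithinAt) (fun τ _ => hf τ)
    refine ⟨ξ, hξ, ?_⟩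
    rw [e, div_mul_cancel₀ _ (sub_ne_zero.2 huv.ne')]
  have lip : ∀ (f f' : ℝ → ℝ) (C : ℝ), (∀ τ, HasDerivAt f (f' τ) τ) →
      (∀ τ ∈ Set.Icc t (t+1), |f' τ| ≤ C) → ∀ u ∈ Set.Icc t (t+1), ∀ v ∈ Set.Icc t (t+1),
      |f v| ≤ |f u| + C := fun f f' C hf hC u hu v hv => by
    have := (convex_Icc t (t+1)).norm_image_sub_le_of_norm_hasDerivWithin_le
      (fun τ _ => (hf τ).hasDerivWithinAt) hC hu hv
    simp only [Real.norm_eq_abs] at this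
    have hC0 : 0 ≤ C := (abs_nonneg _).trans (hC u hu)
    have h4 : |v - u| ≤ 1 := by
      rw [abs_le]; constructor <;> linarith [hu.1, hu.2, hv.1, hv.2]
    have h5 := abs_sub_abs_le_abs_sub (f v) (f u)
    nlinarith
  obtain ⟨m, hm, hmax⟩ := isCompact_Icc.exists_isMaxOn (Set.nonempty_Icc.2 (by linarith : t ≤ t+1))
    (cW.abs.add cΨ.abs).continuousOn
  have hmax' : ∀ τ ∈ Set.Icc t (t+1), |W τ| + |Ψ τ| ≤ |W m| + |Ψ m| := fun τ hτ => hmax hτ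
  obtain ⟨N, hN⟩ : ∃ N, N = |W m| + |Ψ m| := ⟨_, rfl⟩
  rw [← hN] at hmax'
  obtain ⟨u, hu, eu⟩ := mvt Φ W h1 t (t+1/3) (by linarith)
  obtain ⟨v, hv, ev⟩ := mvt Φ W h1 (t+2/3) (t+1) (by linarith)
  obtain ⟨w, hw, ew⟩ := mvt W Ψ h2 u v (by linarith [hu.2, hv.1])
  have b : ∀ τ, t ≤ τ → τ ≤ t + 1 → 0 < Φ τ ∧ Φ τ ≤ 2 := fun τ h h' =>
    ⟨hΦ0 τ ⟨h, h'⟩, hΦ2 τ ⟨h, h'⟩⟩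
  have b0 := b t (by linarith) (by linarith)
  have b1 := b (t+1/3) (by linarith) (by linarith)
  have b2 := b (t+2/3) (by linarith) (by linarith)
  have b3 := b (t+1) (by linarith) (by linarith)
  have hWu : |W u| ≤ 6 := by rw [abs_le]; constructor <;> linarith
  have hWv : |W v| ≤ 6 := by rw [abs_le]; constructor <;> linarith
  have hΨw : |Ψ w| ≤ 36 := by
    have e : |Ψ w| * (v - u) = |W v - W u| := by
      rw [← ew, abs_mul, abs_of_pos (show 0 < v - u by linarith [hu.2, hv.1])]
    have h6 : |W v - W u| ≤ 12 := by
      rw [abs_le] at *; constructor <;> linarith [hWu.1, hWu.2, hWv.1, hWv.2]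
    have h4 : 1/3 ≤ v - u := by linarith [hu.2, hv.1]
    nlinarith [abs_nonneg (Ψ w)]
  have huI : u ∈ Set.Icc t (t+1) := ⟨hu.1.le, by linarith [hu.2]⟩
  have hwI : w ∈ Set.Icc t (t+1) := ⟨by linarith [hw.1, hu.1], by linarith [hw.2, hv.2]⟩
  have hΨb : ∀ τ ∈ Set.Icc t (t+1), |Ψ τ| ≤ 36 + (B + N / 4) := fun τ hτ => by
    have := lip Ψ D (B + N/4) h3 (fun τ hτ => by linarith [hD τ hτ, hmax' τ hτ]) w hwI τ hτ
    linarith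
  have hWb := lip W Ψ _ h2 hΨb u huI m hm
  have hΨm := hΨb m hm
  have := hmax' t ⟨le_rfl, by linarith⟩
  linarith

lemma second_test (Φ W Ψ : ℝ → ℝ) (h1 : ∀ τ, HasDerivAt Φ (W τ) τ)
    (h2 : ∀ τ, HasDerivAt W (Ψ τ) τ) (t : ℝ) (hmin : IsLocalMin Φ t) : W t = 0 ∧ 0 ≤ Ψ t := by
  have hW : W t = 0 := hmin.hasDerivAt_eq_zero (h1 t)
  refine ⟨hW, ?_⟩
  by_contra! hneg
  have hd : deriv Φ = W := funext fun τ => (h1 τ).deriv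
  have hmax : IsLocalMax Φ t := isLocalMax_of_deriv_deriv_neg (by rw [hd, (h2 t).deriv]; exact hneg)
    (by rw [hd]; exact hW) (h1 t).continuousAt
  have hc : Φ =ᶠ[nhds t] fun _ => Φ t := by
    filter_upwards [hmin, hmax] with y h h'
    exact le_antisymm h' h
  have hW0 : W =ᶠ[nhds t] fun _ => 0 := by
    have := hc.deriv
    rw [hd] at this
    simpa using this
  have := hW0.deriv_eq
  rw [(h2 t).deriv] at this
  simp at this
  linarith

/-- Two zeros of `W` enclose a zero with `Ψ ≥ 0`. -/
lemma min_between (Φ W Ψ : ℝ → ℝ) (h1 : ∀ τ, HasDerivAt Φ (W τ) τ)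
    (h2 : ∀ τ, HasDerivAt W (Ψ τ) τ) (u v : ℝ) (huv : u < v) (hu : W u = 0) (hv : W v = 0) :
    ∃ τ ∈ Set.Icc u v, W τ = 0 ∧ 0 ≤ Ψ τ := by
  by_contra! hcon
  have cΦ : Continuous Φ := continuous_iff_continuousAt.2 fun τ => (h1 τ).continuousAt
  obtain ⟨m, hm, hmin⟩ := isCompact_Icc.exists_isMinOn (Set.nonempty_Icc.2 huv.le) cΦ.continuousOn
  have hmin' : ∀ τ ∈ Set.Icc u v, Φ m ≤ Φ τ := fun τ hτ => hmin hτ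
  have key : W m = 0 → False := fun hWm => by
    have hneg := hcon m hm hWm
    have hs := (hasDerivAt_iff_tendsto_slope.1 (h2 m)).eventually (gt_mem_nhds hneg)
    rw [eventually_nhdsWithin_iff, Metric.eventually_nhds_iff] at hs
    obtain ⟨r, hr, hs⟩ := hs
    have mv : ∀ s t, s < t → ∃ ξ ∈ Set.Ioo s t, W ξ = (Φ t - Φ s) / (t - s) := fun s t hst =>
      exists_hasDerivAt_eq_slope Φ W hst cΦ.continuousOn (fun τ _ => h1 τ)
    rcases lt_or_ge m v with hmv | hmv
    · obtain ⟨ξ, hξ, e⟩ := mv m (min v (m + r)) (lt_min hmv (by linarith))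
      have hξ2 := lt_min_iff.1 hξ.2
      have h5 := hs (show dist ξ m < r by
        rw [Real.dist_eq, abs_of_pos (by linarith [hξ.1])]; linarith [hξ2.2]) hξ.1.ne'
      rw [slope_def_field, hWm, sub_zero, div_lt_iff₀ (by linarith [hξ.1]), zero_mul] at h5
      have h6 := hmin' (min v (m+r)) ⟨hm.1.trans (hξ.1.trans hξ.2).le, min_le_left _ _⟩
      have : 0 ≤ W ξ := by
        rw [e]; exact div_nonneg (by linarith) (by linarith [hξ.1, hξ.2])
      linarith
    · have hmu : u < m := by linarith
      obtain ⟨ξ, hξ, e⟩ := mv (max u (m - r)) m (max_lt hmu (by linarith))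
      have hξ2 := max_lt_iff.1 hξ.1
      have h5 := hs (show dist ξ m < r by
        rw [Real.dist_eq, abs_of_neg (by linarith [hξ.2])]; linarith [hξ2.2]) hξ.2.ne
      rw [slope_def_field, hWm, sub_zero, div_lt_iff_of_neg (by linarith [hξ.2]), zero_mul] at h5
      have h6 := hmin' (max u (m-r)) ⟨le_max_left _ _, (hξ.1.trans hξ.2).le.trans hm.2⟩
      have : W ξ ≤ 0 := by
        rw [e]; exact div_nonpos_of_nonpos_of_nonneg (by linarith) (by linarith [hξ.1, hξ.2])
      linarith
  rcases eq_or_lt_of_le hm.1 with e | hum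
  · exact key (e ▸ hu)
  rcases eq_or_lt_of_le hm.2 with e | hmv
  · exact key (e ▸ hv)
  exact key ((second_test Φ W Ψ h1 h2 m (hmin.isLocalMin (Icc_mem_nhds hum hmv))).1)

lemma key_step (a : ℝ) (Φ W Ψ θ : ℝ → ℝ)
    (hsol : SolD a Φ W Ψ θ)
    (hΦpos : ∀ τ : ℝ, 0 < Φ τ)
    (hθ : ∀ τ : ℝ, θ τ ∈ Set.Ioo (-(Real.pi / 2)) (Real.pi / 2))
    (hliminf : Filter.liminf (fun τ : ℝ => ((Φ τ : ℝ) : EReal)) atBot < ⊤)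
    (hlimsup : Filter.limsup (fun τ : ℝ => ((Φ τ + |W τ| + |Ψ τ| : ℝ) : EReal)) atBot = ⊤)
    (ε : ℝ) (hε : 0 < ε) (T : ℝ) : ∃ τ < T, Φ τ ≤ 1 + ε ∧ W τ = 0 ∧ 0 ≤ Ψ τ := by
  obtain ⟨x, p, H, H1, H2, hx, hxd, hp, hH, hHΦ, hHd, hH1d, hH2d, hcx⟩ :=
    change_vars a Φ W Ψ θ hsol hΦpos hθ
  have h1 := fun τ => (hsol τ).1
  have h2 := fun τ => (hsol τ).2.1
  have h3 := fun τ => (hsol τ).2.2.1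
  have cΦ : Continuous Φ := continuous_iff_continuousAt.2 fun τ => (h1 τ).continuousAt
  have cW : Continuous W := continuous_iff_continuousAt.2 fun τ => (h2 τ).continuousAt
  have hx2 : Tendsto (fun τ => x τ ^ 2) atBot atTop := by
    have := hx.atBot_mul_atBot₀ hx
    simpa [sq] using this
  have lemA : ∀ e > 0, ¬ ∀ᶠ τ in atBot, 1 + e ≤ Φ τ := by
    intro e he hev
    obtain ⟨d, hd⟩ : ∃ d, d = 1 - 1 / (1+e)^3 := ⟨_, rfl⟩
    have hd0 : 0 < d := by
      rw [hd, sub_pos, div_lt_one (by positivity)]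
      exact one_lt_pow₀ (by linarith) (by norm_num)
    have hg : ∀ᶠ τ in atBot, (1 + x τ ^ 2) * (1 / Φ τ ^ 3 - 1) - (a - 1) ≤ -1 := by
      filter_upwards [hev, hx2.eventually_ge_atTop ((|a| + 2) / d)] with τ h h'
      rw [div_le_iff₀ hd0] at h'
      have : 1 / Φ τ ^ 3 ≤ 1 / (1+e)^3 := by gcongr
      have h5 : (1 + x τ ^ 2) * (1 / Φ τ ^ 3 - 1) ≤ (1 + x τ ^ 2) * (-d) :=
        mul_le_mul_of_nonneg_left (by linarith) (by positivity)
      linarith [neg_abs_le a]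
    have t2 := aux_top x H2 p _ hx hxd hp hH2d hg
    have t1 := aux_bot x H1 p _ hx hxd hp hH1d (t2.eventually_ge_atTop 1)
    have t0 := aux_top x H p _ hx hxd hp hHd (t1.eventually_le_atBot (-1))
    have tΦ := tendsto_atTop_mono hHΦ t0
    have : Tendsto (fun τ : ℝ => ((Φ τ : ℝ) : EReal)) atBot (nhds ⊤) :=
      EReal.tendsto_coe_nhds_top_iff.2 tΦ
    rw [this.liminf_eq] at hliminf
    exact lt_irrefl _ hliminf
  have lemB : ¬ ∀ᶠ τ in atBot, Φ τ ≤ 1/2 := by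
    intro hev
    have hg : ∀ᶠ τ in atBot, 1 ≤ (1 + x τ ^ 2) * (1 / Φ τ ^ 3 - 1) - (a - 1) := by
      filter_upwards [hev, hx2.eventually_ge_atTop (|a| + 2)] with τ h h'
      have hP := hΦpos τ
      have : 1 / (1/2:ℝ)^3 ≤ 1 / Φ τ ^ 3 := by gcongr
      have h5 : (1 + x τ ^ 2) * 1 ≤ (1 + x τ ^ 2) * (1 / Φ τ ^ 3 - 1) :=
        mul_le_mul_of_nonneg_left (by norm_num at this ⊢; linarith) (by positivity)
      linarith [le_abs_self a]
    have t2 := aux_bot x H2 p _ hx hxd hp hH2d hg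
    have t1 := aux_top x H1 p _ hx hxd hp hH1d (t2.eventually_le_atBot (-1))
    have t0 := aux_bot x H p _ hx hxd hp hHd (t1.eventually_ge_atTop 1)
    obtain ⟨τ, hτ⟩ := (t0.eventually_le_atBot 0).exists
    linarith [hH τ]
  by_contra! hcon
  have hcon' : ∀ τ < T, W τ = 0 → 0 ≤ Ψ τ → 1 + ε < Φ τ := fun τ hτ hw hψ => by
    by_contra! h
    linarith [hcon τ hτ h hw]
  by_cases hcase : ∀ T', ∃ τ < T', W τ = 0 ∧ 0 ≤ Ψ τ
  · obtain ⟨t0, ht0, hw0, hψ0⟩ := hcase T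
    refine lemA ε hε ?_
    filter_upwards [eventually_lt_atBot t0] with τ hτ
    obtain ⟨t1, ht1, hw1, hψ1⟩ := hcase τ
    obtain ⟨m, hm, hmin⟩ := isCompact_Icc.exists_isMinOn
      (Set.nonempty_Icc.2 (ht1.trans hτ).le) cΦ.continuousOn
    have hmτ : Φ m ≤ Φ τ := hmin ⟨ht1.le, hτ.le⟩
    refine le_trans (le_of_lt ?_) hmτ
    rcases eq_or_lt_of_le hm.1 with e | hum
    · exact hcon' m (by linarith [hm.2]) (e ▸ hw1) (e ▸ hψ1)
    rcases eq_or_lt_of_le hm.2 with e | hmv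
    · exact hcon' m (by linarith [hm.2]) (e ▸ hw0) (e ▸ hψ0)
    obtain ⟨hw, hψ⟩ := second_test Φ W Ψ h1 h2 m (hmin.isLocalMin (Icc_mem_nhds hum hmv))
    exact hcon' m (by linarith) hw hψ
  push Not at hcase
  obtain ⟨T1, hT1⟩ := hcase
  obtain ⟨T2, hT2⟩ : ∃ T2, ∀ τ ≤ T2, W τ ≠ 0 := by
    by_contra! hh
    obtain ⟨v, hv, hwv⟩ := hh (T1 - 1)
    obtain ⟨u, hu, hwu⟩ := hh (v - 1)
    obtain ⟨τ, hτ, hw, hψ⟩ := min_between Φ W Ψ h1 h2 u v (by linarith) hwu hwv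
    linarith [hT1 τ (by linarith [hτ.2]) hw]
  have hfA : ∀ T' : ℝ, ∃ τ, Φ τ < 2 ∧ τ ≤ T' := fun T' => by
    have := lemA 1 one_pos
    rw [not_eventually] at this
    obtain ⟨τ, h, h'⟩ := (this.and_eventually (eventually_le_atBot T')).exists
    exact ⟨τ, by linarith, h'⟩
  have hfB : ∀ T' : ℝ, ∃ τ, 1/2 < Φ τ ∧ τ ≤ T' := fun T' => by
    have := lemB
    rw [not_eventually] at this
    obtain ⟨τ, h, h'⟩ := (this.and_eventually (eventually_le_atBot T')).exists
    exact ⟨τ, by linarith, h'⟩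
  have hbd : ∀ᶠ τ in atBot, 1/2 ≤ Φ τ ∧ Φ τ ≤ 2 := by
    have hsign : (∀ τ ≤ T2, 0 ≤ W τ) ∨ (∀ τ ≤ T2, W τ ≤ 0) := by
      by_contra! hh
      obtain ⟨⟨u, hu, hwu⟩, ⟨v, hv, hwv⟩⟩ := hh
      have := (convex_Iic T2).isPreconnected.image W cW.continuousOn
      obtain ⟨τ, hτ, e⟩ := this.Icc_subset ⟨u, hu, rfl⟩ ⟨v, hv, rfl⟩
        (⟨hwu.le, hwv.le⟩ : (0:ℝ) ∈ Set.Icc _ _)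
      exact hT2 τ hτ e
    rcases hsign with hs | hs
    · have hmono : MonotoneOn Φ (Set.Iic T2) := by
        apply monotoneOn_of_deriv_nonneg (convex_Iic T2) cΦ.continuousOn
        · exact fun τ _ => (h1 τ).differentiableAt.differentiableWithinAt
        · intro τ hτ
          rw [interior_Iic] at hτ
          rw [(h1 τ).deriv]; exact hs τ (le_of_lt hτ)
      obtain ⟨u, hu, hu'⟩ := hfA T2
      filter_upwards [eventually_le_atBot u] with τ hτ
      obtain ⟨v, hv, hv'⟩ := hfB τ
      have m1 := hmono (show v ≤ T2 by linarith) (show τ ≤ T2 by linarith) hv'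
      have m2 := hmono (show τ ≤ T2 by linarith) (show u ≤ T2 by linarith) hτ
      constructor <;> linarith
    · have hmono : AntitoneOn Φ (Set.Iic T2) := by
        apply antitoneOn_of_deriv_nonpos (convex_Iic T2) cΦ.continuousOn
        · exact fun τ _ => (h1 τ).differentiableAt.differentiableWithinAt
        · intro τ hτ
          rw [interior_Iic] at hτ
          rw [(h1 τ).deriv]; exact hs τ (le_of_lt hτ)
      obtain ⟨u, hu, hu'⟩ := hfB T2
      filter_upwards [eventually_le_atBot u] with τ hτ
      obtain ⟨v, hv, hv'⟩ := hfA τ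
      have m1 := hmono (show v ≤ T2 by linarith) (show τ ≤ T2 by linarith) hv'
      have m2 := hmono (show τ ≤ T2 by linarith) (show u ≤ T2 by linarith) hτ
      constructor <;> linarith
  have hcos : ∀ᶠ τ in atBot, Real.cos (θ τ) ≤ 1/8 := by
    filter_upwards [hx2.eventually_ge_atTop 64] with τ h
    have h5 := hcx τ
    by_contra! hh
    have h6 : 1/64 < Real.cos (θ τ) ^ 2 := by nlinarith
    nlinarith
  obtain ⟨T3, hT3⟩ := eventually_atBot.1 (hbd.and hcos)
  obtain ⟨B, hB⟩ : ∃ B, B = 8 + 1 + (|a| + 1) + 40 := ⟨_, rfl⟩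
  have hDb : ∀ τ ≤ T3, |dPsi a (Φ τ) (W τ) (Ψ τ) (θ τ)| ≤ B + (|W τ| + |Ψ τ|) / 4 := by
    intro τ hτ
    obtain ⟨⟨hl, hu⟩, hc8⟩ := hT3 τ hτ
    have hc0 : 0 < Real.cos (θ τ) := Real.cos_pos_of_mem_Ioo (hθ τ)
    have hc1 : Real.cos (θ τ) ≤ 1 := by linarith
    have r : ∀ e : ℝ, 1 ≤ e → |Real.cos (θ τ) ^ e| ≤ 1/8 := fun e he => by
      rw [abs_of_pos (Real.rpow_pos_of_pos hc0 e)]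
      calc _ ≤ Real.cos (θ τ) ^ (1:ℝ) := Real.rpow_le_rpow_of_exponent_ge hc0 hc1 he
        _ ≤ _ := by simpa using hc8
    have r1 := r (17/3) (by norm_num)
    have r2 := r (34/9) (by norm_num)
    have r3 := r (17/9) (by norm_num)
    have hs1 := Real.abs_sin_le_one (θ τ)
    have hs2 : Real.sin (θ τ) ^ 2 ≤ 1 := Real.sin_sq_le_one _
    have hs3 : |Real.sin (θ τ) ^ 3| ≤ 1 := by rw [abs_pow]; exact pow_le_one₀ (abs_nonneg _) hs1
    have hs20 := sq_nonneg (Real.sin (θ τ))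
    have k1 : |(16 / 3) * Real.sin (θ τ) - (224 / 27) * Real.sin (θ τ) ^ 3| ≤ 14 := by
      rw [abs_le] at hs1 hs3 ⊢; constructor <;> linarith [hs1.1, hs1.2, hs3.1, hs3.2]
    have k2 : |(208 / 81) * Real.sin (θ τ) ^ 2 - 10 / 9| ≤ 2 := by
      rw [abs_le]; constructor <;> linarith
    have k3 : |(2 / 3) * Real.sin (θ τ)| ≤ 1 := by
      rw [abs_le] at hs1 ⊢; constructor <;> linarith [hs1.1, hs1.2]
    have kΦ : |Φ τ| ≤ 2 := by rw [abs_of_pos (hΦpos τ)]; exact hu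
    have pΦ : 1 / Φ τ ^ 3 ≤ 8 := by
      have : 1 / Φ τ ^ 3 ≤ 1 / (1/2:ℝ)^3 := by gcongr
      norm_num at this ⊢; linarith
    have pΦ0 : 0 ≤ 1 / Φ τ ^ 3 := by have := hΦpos τ; positivity
    have q1 : |((16 / 3) * Real.sin (θ τ) - (224 / 27) * Real.sin (θ τ) ^ 3) *
        Real.cos (θ τ) ^ ((17 : ℝ) / 3) * Φ τ| ≤ 14 * (1/8) * 2 := by
      rw [abs_mul, abs_mul]; gcongr
    have q2 : |((208 / 81) * Real.sin (θ τ) ^ 2 - 10 / 9) * Real.cos (θ τ) ^ ((34 : ℝ) / 9) * W τ|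
        ≤ 2 * (1/8) * |W τ| := by
      rw [abs_mul, abs_mul]; gcongr
    have q3 : |(2 / 3) * Real.sin (θ τ) * Real.cos (θ τ) ^ ((17 : ℝ) / 9) * Ψ τ|
        ≤ 1 * (1/8) * |Ψ τ| := by
      rw [abs_mul, abs_mul]; gcongr
    have q4 : |(a - 1) * Real.cos (θ τ) ^ 2| ≤ (|a| + 1) * 1 := by
      rw [abs_mul]
      have e1 : |a - 1| ≤ |a| + 1 := by
        rw [abs_le]; constructor <;> linarith [neg_abs_le a, le_abs_self a]
      have e2 : |Real.cos (θ τ) ^ 2| ≤ 1 := by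
        rw [abs_of_nonneg (sq_nonneg _)]; exact pow_le_one₀ hc0.le hc1
      gcongr
    have p1 := abs_nonneg (Ψ τ)
    unfold dPsi
    rw [abs_le] at q1 q2 q3 q4 ⊢
    constructor <;> linarith [q1.1, q1.2, q2.1, q2.2, q3.1, q3.2, q4.1, q4.2]
  have hfin : ∀ᶠ τ in atBot, ((Φ τ + |W τ| + |Ψ τ| : ℝ) : EReal) ≤
      ((2 + 2 * (100 + 2 * B) : ℝ) : EReal) := by
    filter_upwards [eventually_le_atBot (T3 - 1)] with τ hτ
    have hI : ∀ t ∈ Set.Icc τ (τ+1), t ≤ T3 := fun t ht => by linarith [ht.2]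
    have := interp_s12 Φ W Ψ _ h1 h2 h3 B τ (fun t _ => hΦpos t)
      (fun t ht => (hT3 t (hI t ht)).1.2) (fun t ht => hDb t (hI t ht))
    have h6 := (hT3 τ (by linarith)).1.2
    exact EReal.coe_le_coe_iff.2 (by linarith)
  have := limsup_le_of_le (by isBoundedDefault) hfin
  rw [hlimsup] at this
  exact EReal.coe_ne_top _ (top_le_iff.1 this)

/-- existence of a sequence of critical points going to `-∞` with
`limsup Φ(τₙ) ≤ 1`, `W(τₙ) = 0` and `Ψ(τₙ) ≥ 0`. -/
theorem exists_sequence_of_minima (a : ℝ) (Φ W Ψ θ : ℝ → ℝ)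
    (hsol : SolD a Φ W Ψ θ)
    (hΦpos : ∀ τ : ℝ, 0 < Φ τ)
    (hθ : ∀ τ : ℝ, θ τ ∈ Set.Ioo (-(Real.pi / 2)) (Real.pi / 2))
    (hliminf : Filter.liminf (fun τ : ℝ => ((Φ τ : ℝ) : EReal)) atBot < ⊤)
    (hlimsup : Filter.limsup (fun τ : ℝ => ((Φ τ + |W τ| + |Ψ τ| : ℝ) : EReal)) atBot = ⊤) :
    ∃ τs : ℕ → ℝ, StrictAnti τs ∧ Tendsto τs atTop atBot ∧
      Filter.limsup (fun n : ℕ => ((Φ (τs n) : ℝ) : EReal)) atTop ≤ (1 : EReal) ∧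
      (∀ n : ℕ, W (τs n) = 0 ∧ 0 ≤ Ψ (τs n)) := by
  have hk := fun n : ℕ => key_step a Φ W Ψ θ hsol hΦpos hθ hliminf hlimsup (1 / ((n:ℝ) + 1))
    (by positivity)
  choose F hF1 hF2 hF3 hF4 using hk
  obtain ⟨τs, h0, hS⟩ : ∃ τs : ℕ → ℝ, τs 0 = F 0 0 ∧
      ∀ n : ℕ, τs (n+1) = F (n+1) (min (τs n) (-((n:ℝ)+1))) :=
    ⟨fun n => Nat.rec (F 0 0) (fun n t => F (n+1) (min t (-((n:ℝ)+1)))) n, rfl, fun n => rfl⟩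
  have hex : ∀ n : ℕ, ∃ t, τs n = F n t := fun n => by
    cases n with
    | zero => exact ⟨_, h0⟩
    | succ n => exact ⟨_, hS n⟩
  refine ⟨τs, strictAnti_nat_of_succ_lt fun n => ?_, ?_, ?_, fun n => ?_⟩
  · rw [hS]; exact (hF1 _ _).trans_le (min_le_left _ _)
  · have hle : ∀ n : ℕ, τs n ≤ -(n:ℝ) := fun n => by
      cases n with
      | zero => rw [h0]; simpa using (hF1 0 0).le
      | succ n => rw [hS]; push_cast; exact (hF1 _ _).le.trans (min_le_right _ _)
    exact tendsto_atBot_mono hle (tendsto_neg_atTop_atBot.comp tendsto_natCast_atTop_atTop)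
  · have hle : ∀ n : ℕ, ((Φ (τs n) : ℝ) : EReal) ≤ ((1 + 1 / ((n:ℝ)+1) : ℝ) : EReal) := fun n => by
      obtain ⟨t, ht⟩ := hex n
      rw [ht]; exact EReal.coe_le_coe_iff.2 (hF2 n t)
    have hlim : Tendsto (fun n : ℕ => ((1 + 1 / ((n:ℝ)+1) : ℝ) : EReal)) atTop
        (nhds ((1:ℝ):EReal)) := by
      refine (continuous_coe_real_ereal.tendsto 1).comp ?_
      simpa using (tendsto_one_div_add_atTop_nhds_zero_nat (𝕜 := ℝ)).const_add 1
    have := limsup_le_limsup (f := atTop) (Eventually.of_forall hle)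
    rw [hlim.limsup_eq] at this
    exact_mod_cast this
  · obtain ⟨t, ht⟩ := hex n
    rw [ht]; exact ⟨hF3 n t, hF4 n t⟩
end

section
/- Fix a ∈ ℝ and let (Φ, W, Ψ, θ) be a solution of system (D) defined for all τ ∈ ℝ with Φ(τ) > 0 and θ(τ) ∈ (−π/2, π/2) for all τ. Suppose liminf_{τ→−∞} Φ(τ) < ∞ and limsup_{τ→−∞} ( Φ(τ) + |W(τ)| + |Ψ(τ)| ) = ∞. Then at least one of the following holds: liminf_{τ→−∞} Φ(τ) = 0, or limsup_{τ→−∞} Φ(τ) = ∞. -/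
open Filter Set

lemma aux_mvt (f f' : ℝ → ℝ) (hf : ∀ t, HasDerivAt f (f' t) t) (C x y : ℝ) (hxy : x < y)
    (hx : |f x| ≤ C) (hy : |f y| ≤ C) : ∃ ξ ∈ Ioo x y, |f' ξ| ≤ 2 * C / (y - x) := by
  obtain ⟨ξ, hξ, h⟩ := exists_hasDerivAt_eq_slope f f' hxy
    (fun t _ => (hf t).continuousAt.continuousWithinAt) (fun t _ => hf t)
  refine ⟨ξ, hξ, ?_⟩
  have h0 : 0 < y - x := by linarith
  rw [h, abs_div, abs_of_pos h0]
  apply div_le_div_of_nonneg_right _ h0.le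
  rw [abs_le] at *
  constructor <;> linarith [hx.1, hx.2, hy.1, hy.2]

lemma aux_lip (f f' : ℝ → ℝ) (hf : ∀ t, HasDerivAt f (f' t) t) (M s h x y : ℝ)
    (hM : ∀ t ∈ Icc s (s + h), |f' t| ≤ M) (hM0 : 0 ≤ M)
    (hx : x ∈ Icc s (s + h)) (hy : y ∈ Icc s (s + h)) : |f y| ≤ |f x| + M * h := by
  have h1 := (convex_Icc s (s + h)).norm_image_sub_le_of_norm_hasDerivWithin_le
    (fun t _ => (hf t).hasDerivWithinAt) (fun t ht => by simpa using hM t ht) hx hy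
  simp only [Real.norm_eq_abs] at h1
  have h2 : |y - x| ≤ h := by
    rw [abs_le]; constructor <;> linarith [hx.1, hx.2, hy.1, hy.2]
  have h3 := mul_le_mul_of_nonneg_left h2 hM0
  have h4 := abs_sub_abs_le_abs_sub (f y) (f x)
  linarith

lemma aux_local (Φ W Ψ D : ℝ → ℝ) (h1 : ∀ t, HasDerivAt Φ (W t) t)
    (h2 : ∀ t, HasDerivAt W (Ψ t) t) (h3 : ∀ t, HasDerivAt Ψ (D t) t)
    (C K h : ℝ) (hK : 0 ≤ K) (hh : h = 1 / (2 * (K + 1))) (s : ℝ)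
    (hC : ∀ t ∈ Icc s (s + h), |Φ t| ≤ C)
    (hD : ∀ t ∈ Icc s (s + h), |D t| ≤ K * (1 + |W t| + |Ψ t|)) :
    |W (s + h)| + |Ψ (s + h)| ≤
      2 * (2 * (2 * C / (h / 3)) / (h / 3) + 2 * C / (h / 3) + 1) := by
  have hpos : 0 < h := by rw [hh]; positivity
  have hKh : K * h + h = 1 / 2 := by rw [hh]; field_simp
  have hcW : Continuous W := continuous_iff_continuousAt.2 fun t => (h2 t).continuousAt
  have hcP : Continuous Ψ := continuous_iff_continuousAt.2 fun t => (h3 t).continuousAt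
  obtain ⟨m, hm, hmax⟩ := (isCompact_Icc (a := s) (b := s + h)).exists_isMaxOn
    ⟨s, by constructor <;> linarith⟩ (f := fun t => |W t| + |Ψ t|) (by fun_prop)
  have hmax' : ∀ t ∈ Icc s (s + h), |W t| + |Ψ t| ≤ |W m| + |Ψ m| := fun t ht => hmax ht
  set N := |W m| + |Ψ m| with hN
  have hN0 : 0 ≤ N := by positivity
  have hC0 : 0 ≤ C := (abs_nonneg _).trans (hC s (by constructor <;> linarith))
  obtain ⟨ξ, hξ, hξb⟩ := aux_mvt Φ W h1 C s (s + h / 3) (by linarith)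
    (hC _ (by constructor <;> linarith)) (hC _ (by constructor <;> linarith))
  obtain ⟨ξ', hξ', hξb'⟩ := aux_mvt Φ W h1 C (s + 2 * h / 3) (s + h) (by linarith)
    (hC _ (by constructor <;> linarith)) (hC _ (by constructor <;> linarith))
  rw [show s + h / 3 - s = h / 3 by ring] at hξb
  rw [show s + h - (s + 2 * h / 3) = h / 3 by ring] at hξb'
  have hgap : h / 3 ≤ ξ' - ξ := by linarith [hξ.2, hξ'.1]
  obtain ⟨η, hη, hηb⟩ := aux_mvt W Ψ h2 _ ξ ξ' (by linarith) hξb hξb'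
  have hηb' : |Ψ η| ≤ 2 * (2 * C / (h / 3)) / (h / 3) := hηb.trans (by gcongr)
  have hηm : η ∈ Icc s (s + h) := ⟨by linarith [hξ.1, hη.1], by linarith [hξ'.2, hη.2]⟩
  have hξm : ξ ∈ Icc s (s + h) := ⟨by linarith [hξ.1], by linarith [hξ.2]⟩
  have e1 := aux_lip Ψ D h3 (K * (1 + N)) s h η m (fun t ht => (hD t ht).trans (by
    have := hmax' t ht
    apply mul_le_mul_of_nonneg_left _ hK
    linarith)) (by positivity) hηm hm
  have e2 := aux_lip W Ψ h2 N s h ξ m (fun t ht => by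
    have := hmax' t ht
    linarith [abs_nonneg (W t)]) hN0 hξm hm
  have e3 := hmax' (s + h) ⟨by linarith, le_rfl⟩
  have e4 : K * (1 + N) * h + N * h = N / 2 + K * h := by
    linear_combination N * hKh
  linarith

lemma aux_bound (a c C Φ W Ψ θ : ℝ) (hc : 0 < c) (h1 : c ≤ Φ) (h2 : Φ ≤ C)
    (hcos : 0 ≤ Real.cos θ) :
    |dPsi a Φ W Ψ θ| ≤ (1 / c ^ 3 + 1 + |a - 1| + 14 * C + 4) * (1 + |W| + |Ψ|) := by
  have hs := Real.abs_sin_le_one θ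
  have hcle := Real.cos_le_one θ
  have hp : ∀ p : ℝ, 0 ≤ p → |Real.cos θ ^ p| ≤ 1 := fun p hp => by
    rw [abs_of_nonneg (Real.rpow_nonneg hcos p)]
    exact Real.rpow_le_one hcos hcle hp
  have hΦ : 0 < Φ := by linarith
  have hb1 : |1 / Φ ^ 3| ≤ 1 / c ^ 3 := by
    rw [abs_of_pos (by positivity)]
    gcongr
  have hb2 : |(a - 1) * Real.cos θ ^ 2| ≤ |a - 1| := by
    rw [abs_mul]
    apply mul_le_of_le_one_right (abs_nonneg _)
    rw [abs_pow, abs_of_nonneg hcos]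
    exact pow_le_one₀ hcos hcle
  have hs' := abs_le.1 hs
  have hs2 : Real.sin θ ^ 2 ≤ 1 := by nlinarith
  have hs2' := sq_nonneg (Real.sin θ)
  have hs3 : |Real.sin θ ^ 3| ≤ 1 := by
    rw [abs_pow]; exact pow_le_one₀ (abs_nonneg _) hs
  have hs3' := abs_le.1 hs3
  have key : ∀ A B X k : ℝ, |A| ≤ k → |B| ≤ 1 → |A * B * X| ≤ k * |X| := by
    intro A B X k hA hB
    rw [abs_mul, abs_mul]
    apply mul_le_mul_of_nonneg_right _ (abs_nonneg X)
    nlinarith [abs_nonneg A, abs_nonneg B]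
  have hb3 := key ((16 / 3) * Real.sin θ - (224 / 27) * Real.sin θ ^ 3)
    (Real.cos θ ^ ((17 : ℝ) / 3)) Φ 14 (by rw [abs_le]; constructor <;> linarith)
    (hp _ (by norm_num))
  have hb4 := key ((208 / 81) * Real.sin θ ^ 2 - 10 / 9)
    (Real.cos θ ^ ((34 : ℝ) / 9)) W 4 (by rw [abs_le]; constructor <;> linarith)
    (hp _ (by norm_num))
  have hb5 := key ((2 / 3) * Real.sin θ)
    (Real.cos θ ^ ((17 : ℝ) / 9)) Ψ 4 (by rw [abs_le]; constructor <;> linarith)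
    (hp _ (by norm_num))
  rw [abs_of_pos hΦ] at hb3
  have hA : |dPsi a Φ W Ψ θ| ≤ 1 / c ^ 3 + 1 + |a - 1| + 14 * Φ + 4 * |W| + 4 * |Ψ| := by
    unfold dPsi
    rw [abs_le] at hb1 hb2 hb3 hb4 hb5
    rw [abs_le]
    constructor <;> linarith [hb1.1, hb1.2, hb2.1, hb2.2, hb3.1, hb3.2, hb4.1, hb4.2, hb5.1, hb5.2]
  have hP : 0 ≤ (1 / c ^ 3 + 1 + |a - 1| + 14 * C) * (|W| + |Ψ|) := by
    have : 0 ≤ C := by linarith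
    positivity
  nlinarith

/-- either `liminf_{τ→-∞} Φ = 0` or `limsup_{τ→-∞} Φ = ∞`. -/
theorem liminf_zero_or_limsup_top (a : ℝ) (Φ W Ψ θ : ℝ → ℝ)
    (hsol : SolD a Φ W Ψ θ)
    (hΦpos : ∀ τ : ℝ, 0 < Φ τ)
    (hθ : ∀ τ : ℝ, θ τ ∈ Set.Ioo (-(Real.pi / 2)) (Real.pi / 2))
    (hliminf : Filter.liminf (fun τ : ℝ => ((Φ τ : ℝ) : EReal)) atBot < ⊤)
    (hlimsup : Filter.limsup (fun τ : ℝ => ((Φ τ + |W τ| + |Ψ τ| : ℝ) : EReal)) atBot = ⊤) :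
    Filter.liminf (fun τ : ℝ => ((Φ τ : ℝ) : EReal)) atBot = 0 ∨
    Filter.limsup (fun τ : ℝ => ((Φ τ : ℝ) : EReal)) atBot = ⊤ := by
  by_contra hcon
  rw [not_or] at hcon
  obtain ⟨hn1, hn2⟩ := hcon
  have h0 : (0 : EReal) ≤ Filter.liminf (fun τ : ℝ => ((Φ τ : ℝ) : EReal)) atBot :=
    le_liminf_of_le (by isBoundedDefault)
      (Eventually.of_forall fun τ => EReal.coe_nonneg.2 (hΦpos τ).le)
  obtain ⟨c, hc0, hc⟩ := EReal.lt_iff_exists_real_btwn.1 (lt_of_le_of_ne h0 (Ne.symm hn1))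
  obtain ⟨C, hC, -⟩ := EReal.lt_iff_exists_real_btwn.1 (lt_top_iff_ne_top.2 hn2)
  have hc0' : 0 < c := by exact_mod_cast hc0
  have ev1 := eventually_lt_of_lt_liminf hc
  have ev2 := eventually_lt_of_limsup_lt hC
  obtain ⟨T, hT⟩ := eventually_atBot.1 (ev1.and ev2)
  have hT1 : ∀ t ≤ T, c ≤ Φ t := fun t ht => by
    have := (hT t ht).1
    exact (EReal.coe_lt_coe_iff.1 this).le
  have hT2 : ∀ t ≤ T, Φ t ≤ C := fun t ht => by
    have := (hT t ht).2
    exact (EReal.coe_lt_coe_iff.1 this).le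
  have hCpos : 0 < C := lt_of_lt_of_le (hΦpos T) (hT2 T le_rfl)
  set K := 1 / c ^ 3 + 1 + |a - 1| + 14 * C + 4 with hKdef
  have hK : 0 ≤ K := by positivity
  obtain ⟨h, hh⟩ : ∃ h, h = 1 / (2 * (K + 1)) := ⟨_, rfl⟩
  obtain ⟨B, hB⟩ : ∃ B, B = 2 * (2 * (2 * C / (h / 3)) / (h / 3) + 2 * C / (h / 3) + 1) :=
    ⟨_, rfl⟩
  have hbd : ∀ τ ≤ T, Φ τ + |W τ| + |Ψ τ| ≤ C + B := by
    intro τ hτ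
    have := aux_local Φ W Ψ (fun t => dPsi a (Φ t) (W t) (Ψ t) (θ t))
      (fun t => (hsol t).1) (fun t => (hsol t).2.1) (fun t => (hsol t).2.2.1) C K h hK hh (τ - h)
      (fun t ht => by
        have : t ≤ T := by linarith [ht.2]
        rw [abs_of_pos (hΦpos t)]; exact hT2 t this)
      (fun t ht => by
        have : t ≤ T := by linarith [ht.2]
        exact aux_bound a c C _ _ _ _ hc0' (hT1 t this) (hT2 t this)
          (Real.cos_nonneg_of_mem_Icc ⟨by linarith [(hθ t).1], (hθ t).2.le⟩))
    rw [sub_add_cancel, ← hB] at this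
    linarith [hT2 τ hτ]
  have hle : Filter.limsup (fun τ : ℝ => ((Φ τ + |W τ| + |Ψ τ| : ℝ) : EReal)) atBot
      ≤ ((C + B : ℝ) : EReal) :=
    limsup_le_of_le (by isBoundedDefault)
      (eventually_atBot.2 ⟨T, fun τ hτ => EReal.coe_le_coe_iff.2 (hbd τ hτ)⟩)
  rw [hlimsup] at hle
  exact absurd (top_le_iff.1 hle) (EReal.coe_ne_top _)
end
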